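/- Let K be an algebraic closure of the rational function field 𝔽₂(t) and let R = K[x,y,z,u,v,w]/(z⁴ + xyz² + x³z + y³z + tx²y², x³y³ − ux⁴ − vy⁴ − wz⁴). Then the images of x and y form a Q-sequence in R, but the superheight of (x,y)R is 1: for every Noetherian commutative R-algebra S in which (x,y)S is a proper ideal, the height of (x,y)S is at most 1. -/

import Mathlib

/-!
Both halves compare the powers `z ^ 2 ^ n` with the orbit of `0` under `c ↦ c² + t`. Reduced modulo
the quartic and multiplied by `x³ + y³`, `z ^ 2 ^ n` becomes a form `φₙ ∈ K[x, y]` modulo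
`(x ^ 2 ^ n, y ^ 2 ^ n)`. The multipliers of `φₙ` into this ideal are generated by two symmetric
forms, computed recursively along Frobenius for as long as the orbit has not come back to `0`; for
transcendental `t` it never does.

*Q-sequence.* The two multipliers show that `x * (x³y³)^q` lies in `(x^{4q}, y^{4q}, z^{4q})` in
`B = K[x, y, z]/(quartic)` for every power `q` of two. Hence `x ↦ x^q`, `y ↦ y^q`, `z ↦ z^q`
extends to homomorphisms `R → B[1/x]` whose denominators are bounded independently of `q`. They
carry a filtration of length `h` of `R/(xⁿ, yⁿ)` to one of `B/(x^{nq}, y^{nq})`, up to bounded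
denominators, so counting dimensions gives `n² q² ≤ h q² + O(q)`, and `n² ≤ h` as `q → ∞`.

*Superheight.* If `(x, y)S` had height at least two, localising and completing at a minimal prime
would give a solution `u, v, w` of the equations in a finite extension of `κ⟦x, y⟧`, where the
coefficient field `κ` contains `K` because `K` is perfect. By the same multipliers,
`d * b^q ∈ (x, y)^{2q}` for `b = u, v, w`, all `q` and a fixed `d ≠ 0`, so `b` satisfies an
equation `b ^ 2 ^ e = ∑ j < e, s_j * b ^ 2 ^ j` with `s_j ∈ (x, y) ^ (2 * (2 ^ e - 2 ^ j))`.
Passing to initial forms and specialising coefficients gives homogeneous such equations over a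
finite field `k`, over which `c ↦ c² + t` is a permutation, so that the orbit of `0` does return to
`0`. Let `q` belong to its first return, which comes late since the specialisation keeps the early
orbit away from `0`. There the cofactor of one multiplier acquires a factor `x³ + y³`, and the
forcing equation yields a linear relation between `u^{2q}` and `w^{2q}` that exhibits
`(x³ + y³) * x` as the square of an element separable over `k(x, y)`. It is not a square in
`k(x, y)`, a contradiction.
-/

open scoped BigOperators
open MvPolynomial

universe u

/-- A filtration of `M` of length `h` whose factors are cyclic modules killed by `J`. -/
def HasQLFiltration (S : Type u) [CommRing S] (J : Ideal S)
    (M : Type u) [AddCommGroup M] [Module S M] (h : ℕ) : Prop :=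
  ∃ c : Fin (h + 1) → Submodule S M,
    Monotone c ∧ c 0 = ⊥ ∧ c (Fin.last h) = ⊤ ∧
    ∀ i : Fin h,
      (∃ m : M, c i.succ = c i.castSucc ⊔ Submodule.span S {m}) ∧
      ∀ a ∈ J, ∀ x ∈ c i.succ, a • x ∈ c i.castSucc

/-- The `J`-quasilength of `M`. -/
noncomputable def quasilength (S : Type u) [CommRing S] (J : Ideal S)
    (M : Type u) [AddCommGroup M] [Module S M] : ℕ∞ :=
  sInf {n : ℕ∞ | ∃ h : ℕ, n = (h : ℕ∞) ∧ HasQLFiltration S J M h}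

/-- `x₁, …, x_d` is a Q-sequence in `S`. -/
def IsQSequence {d : ℕ} {S : Type u} [CommRing S] (x : Fin d → S) : Prop :=
  Ideal.span (Set.range x) ≠ ⊤ ∧
  ∀ t : ℕ, 0 < t →
    ((t : ℕ∞) ^ d) ≤ quasilength S (Ideal.span (Set.range x))
      (S ⧸ Ideal.span (Set.range fun i => x i ^ t))

/-- The height of an ideal: the infimum of the heights of the primes containing it. -/
noncomputable def idealHeight (S : Type u) [CommRing S] (J : Ideal S) : ℕ∞ :=
  ⨅ (P : PrimeSpectrum S) (_ : J ≤ P.asIdeal), Order.height P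

namespace BrennerMonsky

/-- Polynomials in two variables: the coordinates `x = X 0` and `y = X 1` of the argument. -/
abbrev BinaryPoly (k : Type*) [CommSemiring k] := MvPolynomial (Fin 2) k

section Forms

variable {k : Type*} [CommRing k]

/-- `p` is a binary form of degree `d`. Degrees are integers, so that quotients of forms need no
truncated subtraction; in negative degree only `0` is a form. -/
def IsForm (p : BinaryPoly k) (d : ℤ) : Prop :=
  IsWeightedHomogeneous (fun _ : Fin 2 => (1 : ℤ)) p d

/-- `p` is a binary form of degree `d` in which all monomials `xⁱyʲ` have the same value `e` of
`i - j` modulo `3`. The cubic `x³ + y³` is bihomogeneous of bidegree `(3, 0)`. -/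
def IsBiform (p : BinaryPoly k) (d : ℤ) (e : ZMod 3) : Prop :=
  IsWeightedHomogeneous (![(1, 1), (1, -1)] : Fin 2 → ℤ × ZMod 3) p (d, e)

/-- The involution exchanging the two variables. -/
noncomputable def swap : BinaryPoly k →ₐ[k] BinaryPoly k := aeval ![X 1, X 0]

/-- Evaluation at the point `(1, 1)`, a zero of `x³ + y³` in characteristic two. -/
noncomputable def evalOne : BinaryPoly k →ₐ[k] k := aeval ![1, 1]

/-- The cubic form `x³ + y³`. -/
noncomputable def cubeSum : BinaryPoly k := X 0 ^ 3 + X 1 ^ 3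

@[simp] lemma swap_X_zero : swap (X 0 : BinaryPoly k) = X 1 := by simp [swap]

@[simp] lemma swap_X_one : swap (X 1 : BinaryPoly k) = X 0 := by simp [swap]

@[simp] lemma swap_C (c : k) : swap (C c) = C c := by simp [swap]

@[simp] lemma evalOne_X_zero : evalOne (X 0 : BinaryPoly k) = 1 := by simp [evalOne]

@[simp] lemma evalOne_X_one : evalOne (X 1 : BinaryPoly k) = 1 := by simp [evalOne]

@[simp] lemma swap_swap (p : BinaryPoly k) : swap (swap p) = p := by
  have h : (swap.comp swap : BinaryPoly k →ₐ[k] BinaryPoly k) = AlgHom.id k _ := by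
    ext i; fin_cases i <;> simp
  exact DFunLike.congr_fun h p

@[simp] lemma evalOne_swap (p : BinaryPoly k) : evalOne (swap p) = evalOne p := by
  have h : (evalOne.comp swap : BinaryPoly k →ₐ[k] k) = evalOne := by
    ext i; fin_cases i <;> simp
  exact DFunLike.congr_fun h p

@[simp] lemma swap_cubeSum : swap (cubeSum : BinaryPoly k) = cubeSum := by
  simp [cubeSum, add_comm]

lemma cubeSum_ne_zero [Nontrivial k] : (cubeSum : BinaryPoly k) ≠ 0 := fun h => by
  simpa [cubeSum] using congrArg (aeval ![(1 : k), 0]) h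

lemma evalOne_cubeSum [CharP k 2] : evalOne (cubeSum : BinaryPoly k) = 0 := by
  simp [cubeSum, CharTwo.add_self_eq_zero]

lemma pderiv_zero_swap (p : BinaryPoly k) : pderiv 0 (swap p) = swap (pderiv 1 p) := by
  induction p using MvPolynomial.induction_on with
  | C a => simp
  | add p q hp hq => simp [hp, hq]
  | mul_X p i hp => fin_cases i <;> simp [hp, pderiv_X]

lemma eq_sum_coeff_mul_X_pow (p : BinaryPoly k) :
    p = ∑ m ∈ p.support, C (coeff m p) * X 0 ^ m 0 * X 1 ^ m 1 := by
  conv_lhs => rw [p.as_sum]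
  refine Finset.sum_congr rfl fun m _ => ?_
  rw [monomial_eq, Finsupp.prod_fintype _ _ (by simp)]
  simp [mul_assoc]

lemma isForm_iff {p : BinaryPoly k} {d : ℤ} :
    IsForm p d ↔ ∀ m, coeff m p ≠ 0 → (m 0 : ℤ) + m 1 = d := by
  simp [IsForm, IsWeightedHomogeneous, Finsupp.weight_apply, Finsupp.sum_fintype]

lemma isBiform_iff {p : BinaryPoly k} {d : ℤ} {e : ZMod 3} :
    IsBiform p d e ↔
      ∀ m, coeff m p ≠ 0 → (m 0 : ℤ) + m 1 = d ∧ (m 0 : ZMod 3) - m 1 = e := by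
  simp [IsBiform, IsWeightedHomogeneous, Finsupp.weight_apply, Finsupp.sum_fintype,
    Prod.ext_iff, sub_eq_add_neg]

namespace IsForm

variable {p q : BinaryPoly k} {d d' D : ℤ}

lemma mul (h : IsForm p d) (h' : IsForm q d') (hD : d + d' = D) : IsForm (p * q) D := by
  subst hD
  exact IsWeightedHomogeneous.mul h h'

lemma add (h : IsForm p d) (h' : IsForm q d) : IsForm (p + q) d :=
  IsWeightedHomogeneous.add h h'

lemma pow (h : IsForm p d) (n : ℕ) (hD : n * d = D) : IsForm (p ^ n) D := by
  subst hD
  simpa only [IsForm, nsmul_eq_mul] using IsWeightedHomogeneous.pow h n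

lemma C_mul (c : k) (h : IsForm p d) : IsForm (C c * p) d :=
  IsWeightedHomogeneous.C_mul h c

lemma cast (h : IsForm p d) (hD : d = D) : IsForm p D := hD ▸ h

protected lemma zero (d : ℤ) : IsForm (0 : BinaryPoly k) d := isWeightedHomogeneous_zero _ _ d

protected lemma X (i : Fin 2) : IsForm (X i : BinaryPoly k) 1 := isWeightedHomogeneous_X _ _ i

lemma X_pow (i : Fin 2) (n : ℕ) : IsForm (X i ^ n : BinaryPoly k) n :=
  (IsForm.X i).pow n (mul_one _)

lemma swap (h : IsForm p d) : IsForm (swap p) d := by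
  rw [eq_sum_coeff_mul_X_pow p, map_sum]
  refine IsWeightedHomogeneous.sum _ _ _ fun m hm => ?_
  have hdeg := isForm_iff.1 h m (mem_support_iff.1 hm)
  simp only [map_mul, map_pow, swap_X_zero, swap_X_one, swap_C]
  exact ((X_pow 1 _).C_mul _).mul (X_pow 0 _) hdeg

lemma exists_eq_mul_X_pow_add (h : IsForm p d) (a b : ℕ) (hab : (a : ℤ) + b ≤ d + 1) :
    ∃ p₁ p₂ : BinaryPoly k, IsForm p₁ (d - a) ∧ IsForm p₂ (d - b) ∧
      p = p₁ * X 0 ^ a + p₂ * X 1 ^ b := by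
  classical
  refine ⟨∑ m ∈ p.support with a ≤ m 0, C (coeff m p) * X 0 ^ (m 0 - a) * X 1 ^ m 1,
    ∑ m ∈ p.support with ¬ a ≤ m 0, C (coeff m p) * X 0 ^ m 0 * X 1 ^ (m 1 - b),
    IsWeightedHomogeneous.sum _ _ _ fun m hm => ?_,
    IsWeightedHomogeneous.sum _ _ _ fun m hm => ?_, ?_⟩
  · have hm := Finset.mem_filter.1 hm
    have hdeg := isForm_iff.1 h m (mem_support_iff.1 hm.1)
    exact ((X_pow 0 _).C_mul _).mul (X_pow 1 _) (by omega)
  · have hm := Finset.mem_filter.1 hm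
    have hdeg := isForm_iff.1 h m (mem_support_iff.1 hm.1)
    exact ((X_pow 0 _).C_mul _).mul (X_pow 1 _) (by omega)
  · conv_lhs => rw [eq_sum_coeff_mul_X_pow p]
    rw [← Finset.sum_filter_add_sum_filter_not _ (fun m : Fin 2 →₀ ℕ => a ≤ m 0),
      Finset.sum_mul, Finset.sum_mul]
    congr 1 <;> refine Finset.sum_congr rfl fun m hm => ?_
    · have hm := Finset.mem_filter.1 hm
      rw [← Nat.sub_add_cancel hm.2, pow_add, Nat.add_sub_cancel]
      ring
    · have hm := Finset.mem_filter.1 hm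
      have hdeg := isForm_iff.1 h m (mem_support_iff.1 hm.1)
      rw [← Nat.sub_add_cancel (show b ≤ m 1 by omega), pow_add, Nat.add_sub_cancel]
      ring

-- Euler's identity, read off at the point `(1, 1)`.
lemma evalOne_pderiv_add (h : IsForm p d) :
    evalOne (pderiv 0 p) + evalOne (pderiv 1 p) = (d : k) * evalOne p := by
  rw [eq_sum_coeff_mul_X_pow p]
  simp only [map_sum, Finset.mul_sum, ← Finset.sum_add_distrib]
  refine Finset.sum_congr rfl fun m hm => ?_
  simp [← isForm_iff.1 h m (mem_support_iff.1 hm), pderiv_X]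
  ring

end IsForm

namespace IsBiform

variable {p q : BinaryPoly k} {d d' D : ℤ} {e e' E : ZMod 3}

lemma isForm (h : IsBiform p d e) : IsForm p d :=
  isForm_iff.2 fun m hm => (isBiform_iff.1 h m hm).1

lemma mul (h : IsBiform p d e) (h' : IsBiform q d' e') (hD : d + d' = D) (hE : e + e' = E) :
    IsBiform (p * q) D E := by
  subst hD hE
  exact IsWeightedHomogeneous.mul h h'

lemma add (h : IsBiform p d e) (h' : IsBiform q d e) : IsBiform (p + q) d e :=
  IsWeightedHomogeneous.add h h'

lemma pow (h : IsBiform p d e) (n : ℕ) (hD : n * d = D) (hE : n * e = E) :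
    IsBiform (p ^ n) D E := by
  subst hD hE
  simpa [IsBiform] using IsWeightedHomogeneous.pow h n

lemma C_mul (c : k) (h : IsBiform p d e) : IsBiform (C c * p) d e :=
  IsWeightedHomogeneous.C_mul h c

lemma cast (h : IsBiform p d e) (hD : d = D) (hE : e = E) : IsBiform p D E := hD ▸ hE ▸ h

protected lemma zero (d : ℤ) (e : ZMod 3) : IsBiform (0 : BinaryPoly k) d e :=
  isWeightedHomogeneous_zero _ _ _

protected lemma one : IsBiform (1 : BinaryPoly k) 0 0 := isWeightedHomogeneous_one _ _

protected lemma X_zero : IsBiform (X 0 : BinaryPoly k) 1 1 := isWeightedHomogeneous_X _ _ 0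

protected lemma X_one : IsBiform (X 1 : BinaryPoly k) 1 (-1) := isWeightedHomogeneous_X _ _ 1

protected lemma cubeSum : IsBiform (cubeSum : BinaryPoly k) 3 0 :=
  (IsBiform.X_zero.pow 3 (by norm_num) (by decide)).add
    (IsBiform.X_one.pow 3 (by norm_num) (by decide))

lemma swap (h : IsBiform p d e) : IsBiform (swap p) d (-e) := by
  rw [eq_sum_coeff_mul_X_pow p, map_sum]
  refine IsWeightedHomogeneous.sum _ _ _ fun m hm => ?_
  obtain ⟨hd, he⟩ := isBiform_iff.1 h m (mem_support_iff.1 hm)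
  simp only [map_mul, map_pow, swap_X_zero, swap_X_one, swap_C]
  exact ((IsBiform.X_one.pow (m 0) rfl rfl).C_mul _).mul (IsBiform.X_zero.pow (m 1) rfl rfl)
    (by rw [← hd]; ring) (by rw [← he]; ring)

end IsBiform

lemma exists_eq_mul_isWeightedHomogeneous {σ M : Type*} [AddCommGroup M] (w : σ → M)
    {p f : MvPolynomial σ k} {d d' : M} (hp : IsWeightedHomogeneous w p d)
    (hf : IsWeightedHomogeneous w f d') (hdvd : f ∣ p) :
    ∃ q, p = f * q ∧ IsWeightedHomogeneous w q (d - d') := by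
  classical
  obtain ⟨r, rfl⟩ := hdvd
  let := weightedGradedAlgebra k w
  refine ⟨DirectSum.decompose (weightedHomogeneousSubmodule k w) r (d - d'), ?_,
    (mem_weightedHomogeneousSubmodule k w _ _).1 (SetLike.coe_mem _)⟩
  have key := DirectSum.coe_decompose_mul_add_of_left_mem (weightedHomogeneousSubmodule k w)
    (b := r) (j := d - d') ((mem_weightedHomogeneousSubmodule k w d' f).2 hf)
  rwa [add_sub_cancel, DirectSum.decompose_of_mem_same _
    ((mem_weightedHomogeneousSubmodule k w d _).2 hp)] at key

lemma cubeSum_dvd_monomial_sub [CharP k 2] {i j i' j' : ℕ} (hd : i + j = i' + j')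
    (he : (i : ZMod 3) - j = i' - j') :
    (cubeSum : BinaryPoly k) ∣ X 0 ^ i * X 1 ^ j - X 0 ^ i' * X 1 ^ j' := by
  wlog hle : i' ≤ i generalizing i j i' j'
  · rw [← dvd_neg, neg_sub]
    exact this hd.symm he.symm (by omega)
  have hdvd : (3 : ℤ) ∣ ((i : ℤ) - j) - (i' - j') := by
    refine (ZMod.intCast_zmod_eq_zero_iff_dvd _ 3).1 ?_
    push_cast
    rw [he, sub_self]
  obtain ⟨n, rfl⟩ : ∃ n, i = i' + 3 * n := ⟨(i - i') / 3, by omega⟩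
  obtain rfl : j' = j + 3 * n := by omega
  have hfactor : (X 0 ^ (i' + 3 * n) * X 1 ^ j - X 0 ^ i' * X 1 ^ (j + 3 * n) : BinaryPoly k)
      = X 0 ^ i' * X 1 ^ j * ((X 0 ^ 3) ^ n - (X 1 ^ 3) ^ n) := by ring
  rw [hfactor, cubeSum, ← CharTwo.sub_eq_add]
  exact (sub_dvd_pow_sub_pow _ _ n).mul_left _

lemma IsBiform.exists_eq_cubeSum_mul [CharP k 2] {p : BinaryPoly k} {d : ℤ} {e : ZMod 3}
    (h : IsBiform p d e) (h0 : evalOne p = 0) :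
    ∃ q, p = cubeSum * q ∧ IsBiform q (d - 3) e := by
  suffices hdvd : (cubeSum : BinaryPoly k) ∣ p by
    simpa [IsBiform] using exists_eq_mul_isWeightedHomogeneous _ h IsBiform.cubeSum hdvd
  rcases eq_or_ne p 0 with rfl | hp
  · exact dvd_zero _
  obtain ⟨m₀, hm₀⟩ := Finset.nonempty_iff_ne_empty.2 (mt support_eq_empty.1 hp)
  have hbi₀ := isBiform_iff.1 h m₀ (mem_support_iff.1 hm₀)
  have hcoeff : ∑ m ∈ p.support, coeff m p = 0 := by
    rw [← h0]
    conv_rhs => rw [eq_sum_coeff_mul_X_pow p]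
    simp
  have hsum : p = ∑ m ∈ p.support, C (coeff m p) * (X 0 ^ m 0 * X 1 ^ m 1
      - X 0 ^ m₀ 0 * X 1 ^ m₀ 1) := by
    simp_rw [mul_sub, Finset.sum_sub_distrib, ← Finset.sum_mul, ← map_sum, hcoeff, ← mul_assoc,
      map_zero, zero_mul, sub_zero]
    exact eq_sum_coeff_mul_X_pow p
  rw [hsum]
  refine Finset.dvd_sum fun m hm => Dvd.dvd.mul_left ?_ _
  have hbi := isBiform_iff.1 h m (mem_support_iff.1 hm)
  exact cubeSum_dvd_monomial_sub (by omega) (by rw [hbi.2, hbi₀.2])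

lemma exists_of_X_pow_mul_eq [IsDomain k] {m n : ℕ} {a b : BinaryPoly k}
    (h : X 0 ^ m * a = X 1 ^ n * b) : ∃ c, a = X 1 ^ n * c ∧ b = X 0 ^ m * c := by
  have hnd : ¬ (X 1 : BinaryPoly k) ∣ X 0 ^ m := fun hd => by
    simpa using map_dvd (aeval ![(1 : k), 0]) hd
  obtain ⟨c, rfl⟩ := X_prime.pow_dvd_of_dvd_mul_left n hnd ⟨b, h⟩
  refine ⟨c, rfl, mul_left_cancel₀ (pow_ne_zero n (X_ne_zero (1 : Fin 2))) ?_⟩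
  rw [← h]
  ring

end Forms

/-- `z` is a root of the quartic `Z⁴ + xyZ² + (x³ + y³)Z + tx²y²`. -/
def IsQuarticRoot {A : Type*} [CommSemiring A] (t x y z : A) : Prop :=
  z ^ 4 + x * y * z ^ 2 + x ^ 3 * z + y ^ 3 * z + t * x ^ 2 * y ^ 2 = 0

lemma IsQuarticRoot.map {A B : Type*} [CommSemiring A] [CommSemiring B] {t x y z : A}
    (h : IsQuarticRoot t x y z) (F : A →+* B) : IsQuarticRoot (F t) (F x) (F y) (F z) := by
  simpa [IsQuarticRoot] using congrArg F h

section FrobeniusRecursion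

variable {k : Type*} [CommRing k]

mutual

/-- The coefficient of `z²` when `z ^ 2 ^ n` is reduced modulo the quartic of `IsQuarticRoot`,
in characteristic two. -/
noncomputable def quadCoeff : ℕ → BinaryPoly k
  | 0 => 0
  | n + 1 => X 0 * X 1 * quadCoeff n ^ 2 + linCoeff n ^ 2

/-- The coefficient of `z` when `z ^ 2 ^ n` is reduced modulo the quartic of `IsQuarticRoot`,
in characteristic two. -/
noncomputable def linCoeff : ℕ → BinaryPoly k
  | 0 => 1
  | n + 1 => cubeSum * quadCoeff n ^ 2

end

/-- The constant coefficient when `z ^ 2 ^ n` is reduced modulo the quartic of `IsQuarticRoot`,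
in characteristic two. -/
noncomputable def constCoeff (t : k) : ℕ → BinaryPoly k
  | 0 => 0
  | n + 1 => constCoeff t n ^ 2 + C t * X 0 ^ 2 * X 1 ^ 2 * quadCoeff n ^ 2

/-- The linear form that multiplies `x ^ 2 ^ n` in `cubeSum * quadCoeff n`: it is `y` for even `n`
and `x` for odd `n`. -/
noncomputable def lin : ℕ → BinaryPoly k
  | 0 => X 1
  | n + 1 => swap (lin n)

/-- The form `φₙ`, which is the part of `(x³ + y³) * z ^ 2 ^ n` free of `z`. -/
noncomputable def phi (t : k) (n : ℕ) : BinaryPoly k := cubeSum * constCoeff t n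

/-- The coefficient of `x ^ 2 ^ n` in `(x³ + y³) * z ^ 2 ^ n`; that of `y ^ 2 ^ n` is
`frobCoeff F z (n + 1)`, because `lin` has period two. -/
noncomputable def frobCoeff {B : Type*} [CommRing B] (F : BinaryPoly k →+* B) (z : B) (n : ℕ) : B :=
  F (lin n) * z ^ 2 + F (lin (n + 1)) ^ 2 * z

/-- The orbit of the critical point `0` under `c ↦ c² + t`. -/
def critOrbit (t : k) (n : ℕ) : k := (fun c => c ^ 2 + t)^[n] 0

lemma critOrbit_zero (t : k) : critOrbit t 0 = 0 := rfl

lemma critOrbit_succ (t : k) (n : ℕ) : critOrbit t (n + 1) = critOrbit t n ^ 2 + t :=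
  Function.iterate_succ_apply' _ _ _

lemma swap_lin (n : ℕ) : swap (lin n : BinaryPoly k) = lin (n + 1) := rfl

@[simp] lemma lin_add_two (n : ℕ) : (lin (n + 2) : BinaryPoly k) = lin n := swap_swap _

@[simp] lemma evalOne_lin (n : ℕ) : evalOne (lin n : BinaryPoly k) = 1 := by
  induction n with
  | zero => exact evalOne_X_one
  | succ n ih => rw [← swap_lin, evalOne_swap, ih]

lemma lin_mul_lin_succ (n : ℕ) : (lin n * lin (n + 1) : BinaryPoly k) = X 0 * X 1 := by
  induction n with
  | zero => simp [lin, mul_comm]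
  | succ n ih => rw [lin_add_two, mul_comm, ih]

lemma lin_pow_three_add (n : ℕ) : (lin n ^ 3 + lin (n + 1) ^ 3 : BinaryPoly k) = cubeSum := by
  induction n with
  | zero => simp [lin, cubeSum, add_comm]
  | succ n ih => rw [lin_add_two, add_comm, ih]

lemma IsBiform.lin (n : ℕ) : IsBiform (lin n : BinaryPoly k) 1 (-(2 : ZMod 3) ^ n) := by
  induction n with
  | zero => exact IsBiform.X_one.cast rfl (by simp)
  | succ n ih =>
    refine ih.swap.cast rfl ?_
    rw [pow_succ, show (2 : ZMod 3) = -1 by decide]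
    ring

lemma IsForm.lin (n : ℕ) : IsForm (lin n : BinaryPoly k) 1 := (IsBiform.lin n).isForm

lemma IsQuarticRoot.pow_two_pow {B : Type*} [CommRing B] [CharP B 2] {t : k}
    {F : BinaryPoly k →+* B} {z : B} (hz : IsQuarticRoot (F (C t)) (F (X 0)) (F (X 1)) z) (n : ℕ) :
    z ^ 2 ^ n = F (quadCoeff n) * z ^ 2 + F (linCoeff n) * z + F (constCoeff t n) := by
  induction n with
  | zero => simp [quadCoeff, linCoeff, constCoeff]
  | succ n ih =>
    have hz4 : z ^ 4 = F (X 0) * F (X 1) * z ^ 2 + F (X 0) ^ 3 * z + F (X 1) ^ 3 * z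
        + F (C t) * F (X 0) ^ 2 * F (X 1) ^ 2 :=
      CharTwo.add_eq_zero.1 (by rw [← hz]; ring)
    rw [pow_succ, pow_mul, ih]
    simp only [CharTwo.add_sq, quadCoeff, linCoeff, constCoeff, map_add, map_mul, map_pow, cubeSum]
    linear_combination F (quadCoeff n) ^ 2 * hz4

variable [CharP k 2]

lemma evalOne_quadCoeff_and_linCoeff (n : ℕ) :
    evalOne (quadCoeff (n + 1) : BinaryPoly k) = 1 ∧
      evalOne (linCoeff (n + 1) : BinaryPoly k) = 0 := by
  induction n with
  | zero => simp [quadCoeff, linCoeff]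
  | succ n ih =>
    constructor
    · rw [quadCoeff]
      simp [ih]
    · rw [linCoeff]
      simp [evalOne_cubeSum]

lemma evalOne_constCoeff (t : k) (n : ℕ) : evalOne (constCoeff t (n + 1)) = critOrbit t n := by
  induction n with
  | zero => simp [constCoeff, quadCoeff, critOrbit_zero]
  | succ n ih =>
    rw [constCoeff]
    simp [ih, (evalOne_quadCoeff_and_linCoeff n).1, critOrbit_succ]

lemma evalOne_pderiv_phi (t : k) (n : ℕ) :
    evalOne (pderiv 0 (phi t (n + 1))) = critOrbit t n := by
  simp only [phi, Derivation.leibniz, smul_eq_mul, map_add, map_mul, evalOne_cubeSum,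
    evalOne_constCoeff]
  have h3 : (3 : BinaryPoly k) = 1 := by
    linear_combination (CharTwo.two_eq_zero : (2 : BinaryPoly k) = 0)
  simp [cubeSum, h3]

variable [IsDomain k]

lemma cubeSum_mul_quadCoeff_and_linCoeff (n : ℕ) :
    (cubeSum * quadCoeff n : BinaryPoly k)
        = X 0 ^ 2 ^ n * lin n + X 1 ^ 2 ^ n * lin (n + 1) ∧
      (cubeSum * linCoeff n : BinaryPoly k)
        = X 0 ^ 2 ^ n * lin (n + 1) ^ 2 + X 1 ^ 2 ^ n * lin n ^ 2 := by
  induction n with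
  | zero =>
    simp only [quadCoeff, linCoeff, lin, swap_X_one, cubeSum]
    constructor
    · linear_combination (-X 0 * X 1) * (CharTwo.two_eq_zero : (2 : BinaryPoly k) = 0)
    · ring
  | succ n ih =>
    obtain ⟨hquad, hlin⟩ := ih
    have hprod : (lin n * lin (n + 1) : BinaryPoly k) = X 0 * X 1 := lin_mul_lin_succ n
    rw [quadCoeff, linCoeff, lin_add_two, pow_succ 2 n, pow_mul, pow_mul]
    constructor
    · apply mul_left_cancel₀ (cubeSum_ne_zero (k := k))
      calc cubeSum * (cubeSum * (X 0 * X 1 * quadCoeff n ^ 2 + linCoeff n ^ 2))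
          = X 0 * X 1 * (cubeSum * quadCoeff n) ^ 2 + (cubeSum * linCoeff n) ^ 2 := by ring
        _ = cubeSum * ((X 0 ^ 2 ^ n) ^ 2 * lin (n + 1) + (X 1 ^ 2 ^ n) ^ 2 * lin n) := by
          rw [hquad, hlin, CharTwo.add_sq, CharTwo.add_sq, ← lin_pow_three_add n, ← hprod]
          ring
    · rw [show cubeSum * (cubeSum * quadCoeff n ^ 2) = (cubeSum * quadCoeff n : BinaryPoly k) ^ 2
        by ring, hquad, CharTwo.add_sq]
      ring

lemma cubeSum_mul_phi_succ (t : k) (n : ℕ) :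
    cubeSum * phi t (n + 1) = phi t n ^ 2 +
      C t * X 0 ^ 2 * X 1 ^ 2 * (X 0 ^ 2 ^ n * lin n + X 1 ^ 2 ^ n * lin (n + 1)) ^ 2 := by
  rw [← (cubeSum_mul_quadCoeff_and_linCoeff n).1, phi, phi, constCoeff]
  ring

lemma IsQuarticRoot.cubeSum_mul_pow_two_pow {B : Type*} [CommRing B] [CharP B 2] {t : k}
    {F : BinaryPoly k →+* B} {z : B} (hz : IsQuarticRoot (F (C t)) (F (X 0)) (F (X 1)) z) (n : ℕ) :
    F cubeSum * z ^ 2 ^ n = F (phi t n) + F (X 0) ^ 2 ^ n * frobCoeff F z n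
      + F (X 1) ^ 2 ^ n * frobCoeff F z (n + 1) := by
  have hquad := congrArg F (cubeSum_mul_quadCoeff_and_linCoeff n).1
  have hlin := congrArg F (cubeSum_mul_quadCoeff_and_linCoeff n).2
  simp only [map_add, map_mul, map_pow] at hquad hlin
  rw [hz.pow_two_pow n, phi, map_mul, frobCoeff, frobCoeff, lin_add_two]
  linear_combination z ^ 2 * hquad + z * hlin

end FrobeniusRecursion

section Syzygies

/-- The cofactor of `x ^ (2 * 2 ^ n)` in `r² * (cubeSum * φₙ₊₁)` when `a` is the cofactor of
`x ^ 2 ^ n` in `r * φₙ`. -/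
noncomputable def cofactorStep {k : Type*} [CommRing k] (t : k) (n : ℕ) (a r : BinaryPoly k) :
    BinaryPoly k :=
  a ^ 2 + C t * X 0 ^ 2 * X 1 ^ 2 * (lin n * r) ^ 2

/-- Two symmetric forms `r₁`, `r₂` that multiply `φ = phi t (j + 2)` into the ideal `(xᵠ, yᵠ)`,
where `Q = 2 ^ (j + 2)`, with symmetric cofactors. The determinant condition makes them a basis of
all such multipliers when `κ ≠ 0`, and `decomp` says that `r₁` is `(xy) ^ (2 ^ j - 1)` modulo
`(x ^ 2 ^ j, y ^ 2 ^ j)`. -/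
structure SyzygyPair {k : Type*} [CommRing k] (t : k) (j : ℕ) (κ : k) where
  (r₁ a₁ r₂ a₂ u v : BinaryPoly k)
  biform_r₁ : IsBiform r₁ (2 * 2 ^ j - 2) 0
  biform_a₁ : IsBiform a₁ (2 * 2 ^ j + 1) (-(2 : ZMod 3) ^ (j + 2))
  biform_r₂ : IsBiform r₂ (2 * 2 ^ j - 1) 0
  biform_a₂ : IsBiform a₂ (2 * 2 ^ j + 2) (-(2 : ZMod 3) ^ (j + 2))
  swap_r₁ : swap r₁ = r₁
  swap_r₂ : swap r₂ = r₂
  rel₁ : r₁ * phi t (j + 2) = a₁ * X 0 ^ 2 ^ (j + 2) + swap a₁ * X 1 ^ 2 ^ (j + 2)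
  rel₂ : r₂ * phi t (j + 2) = a₂ * X 0 ^ 2 ^ (j + 2) + swap a₂ * X 1 ^ 2 ^ (j + 2)
  det : a₁ * r₂ + a₂ * r₁ = C κ * X 1 ^ 2 ^ (j + 2)
  evalOne_r₁ : evalOne r₁ = 1
  evalOne_r₂ : evalOne r₂ = 0
  form_u : IsForm u (2 ^ j - 2)
  form_v : IsForm v (2 ^ j - 2)
  decomp : r₁ = X 0 ^ 2 ^ j * u + X 1 ^ 2 ^ j * v + (X 0 * X 1) ^ (2 ^ j - 1)

section CommRing

variable {k : Type*} [CommRing k] {t : k}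

lemma isBiform_cofactorStep {j : ℕ} {r a : BinaryPoly k} {d : ℤ} (hr : IsBiform r d 0)
    (ha : IsBiform a (d + 3) (-(2 : ZMod 3) ^ (j + 2))) :
    IsBiform (cofactorStep t (j + 2) a r) (2 * (d + 3)) (-(2 : ZMod 3) ^ (j + 3)) := by
  refine (ha.pow 2 rfl (by push_cast; ring)).add ?_
  have hxy := ((IsBiform.X_zero.pow 2 rfl rfl).C_mul t).mul (IsBiform.X_one.pow 2 rfl rfl) rfl rfl
  exact hxy.mul (((IsBiform.lin (j + 2)).mul hr rfl rfl).pow 2 rfl rfl) (by push_cast; ring)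
    (by push_cast; ring)

lemma sq_mul_cubeSum_mul_phi_succ [CharP k 2] [IsDomain k] {n : ℕ} {a r : BinaryPoly k}
    (hr : swap r = r)
    (h : r * phi t n = a * X 0 ^ 2 ^ n + swap a * X 1 ^ 2 ^ n) :
    r ^ 2 * (cubeSum * phi t (n + 1)) = cofactorStep t n a r * X 0 ^ 2 ^ (n + 1)
      + swap (cofactorStep t n a r) * X 1 ^ 2 ^ (n + 1) := by
  calc r ^ 2 * (cubeSum * phi t (n + 1))
      = (r * phi t n) ^ 2 + C t * X 0 ^ 2 * X 1 ^ 2 * r ^ 2 *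
          (X 0 ^ 2 ^ n * lin n + X 1 ^ 2 ^ n * lin (n + 1)) ^ 2 := by
        rw [cubeSum_mul_phi_succ]
        ring
    _ = _ := by
        rw [h]
        simp only [CharTwo.add_sq, cofactorStep, map_add, map_mul, map_pow, swap_X_zero,
          swap_X_one, swap_C, hr, swap_lin, pow_succ 2 n, pow_mul]
        ring

namespace SyzygyPair

lemma evalOne_a₁ [CharP k 2] {j : ℕ} {κ : k} (S : SyzygyPair t j κ) :
    evalOne S.a₁ = critOrbit t (j + 1) := by
  have hdiff := congrArg (fun p => evalOne (pderiv 0 p)) S.rel₁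
  have heuler := S.biform_a₁.isForm.evalOne_pderiv_add
  have hdeg : ((2 * 2 ^ j + 1 : ℤ) : k) = 1 := by
    push_cast
    simp [CharTwo.two_eq_zero]
  have hphi : evalOne (phi t (j + 2)) = 0 := by simp [phi, evalOne_cubeSum]
  simp only [Derivation.leibniz, smul_eq_mul, map_add, map_mul, pderiv_zero_swap,
    evalOne_pderiv_phi, hphi, S.evalOne_r₁, evalOne_swap] at hdiff
  simp only [map_pow, evalOne_X_zero, evalOne_X_one, one_pow, Derivation.leibniz_pow,
    Nat.cast_pow, Nat.cast_ofNat, CharTwo.two_eq_zero, ne_eq, Nat.add_eq_zero_iff, zero_pow,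
    nsmul_eq_mul, zero_mul, map_zero, mul_zero, one_mul, zero_add, add_zero,
    OfNat.ofNat_ne_zero, and_false, not_false_eq_true] at hdiff
  rw [hdeg] at heuler
  linear_combination -heuler - hdiff

lemma evalOne_a₂ {j : ℕ} {κ : k} (S : SyzygyPair t j κ) : evalOne S.a₂ = κ := by
  simpa [S.evalOne_r₁, S.evalOne_r₂] using congrArg evalOne S.det

/-- The pair `r₁ = 1`, `r₂ = 0` at level zero. -/
protected noncomputable def zero [CharP k 2] (t : k) : SyzygyPair t 0 1 where
  r₁ := 1
  a₁ := C t * (X 0 * X 1 ^ 2)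
  r₂ := 0
  a₂ := X 1 ^ 4
  u := 0
  v := 0
  biform_r₁ := by simpa using IsBiform.one
  biform_a₁ := ((IsBiform.X_zero.mul (IsBiform.X_one.pow 2 rfl rfl) rfl rfl).C_mul t).cast
    (by norm_num) (by decide)
  biform_r₂ := IsBiform.zero _ _
  biform_a₂ := (IsBiform.X_one.pow 4 rfl rfl).cast (by norm_num) (by decide)
  swap_r₁ := by simp
  swap_r₂ := by simp
  rel₁ := by
    simp [phi, constCoeff, quadCoeff, linCoeff, cubeSum]
    ring
  rel₂ := by
    simp
    linear_combination (-X 0 ^ 4 * X 1 ^ 4) * (CharTwo.two_eq_zero : (2 : BinaryPoly k) = 0)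
  det := by simp
  evalOne_r₁ := by simp
  evalOne_r₂ := by simp
  form_u := IsForm.zero _
  form_v := IsForm.zero _
  decomp := by simp

end SyzygyPair

end CommRing

namespace SyzygyPair

variable {k : Type*} [Field k] {t κ : k} {j : ℕ}

/-- The symmetrised cofactor whose quotient by `cubeSum` is the cofactor `a₁` of the next level. -/
noncomputable def nextNumerator (S : SyzygyPair t j κ) : BinaryPoly k :=
  C (critOrbit t (j + 2) / κ ^ 2) * cofactorStep t (j + 2) S.a₂ S.r₂
    + X 0 * X 1 * cofactorStep t (j + 2) S.a₁ S.r₁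

lemma isBiform_cofactorStep₁ (S : SyzygyPair t j κ) :
    IsBiform (cofactorStep t (j + 2) S.a₁ S.r₁) (2 * 2 ^ (j + 1) + 2) (-(2 : ZMod 3) ^ (j + 3)) :=
  (isBiform_cofactorStep S.biform_r₁ (S.biform_a₁.cast (by ring) rfl)).cast (by ring) rfl

variable [CharP k 2]

lemma exists_nextNumerator_eq (S : SyzygyPair t j κ) (hκ : κ ≠ 0) :
    ∃ a, S.nextNumerator = cubeSum * a ∧
      IsBiform a (2 * 2 ^ (j + 1) + 1) (-(2 : ZMod 3) ^ (j + 3)) := by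
  have hstep₂ : IsBiform (cofactorStep t (j + 2) S.a₂ S.r₂) (2 * 2 ^ (j + 1) + 4)
      (-(2 : ZMod 3) ^ (j + 3)) :=
    (isBiform_cofactorStep S.biform_r₂ (S.biform_a₂.cast (by ring) rfl)).cast (by ring) rfl
  have heval₁ : evalOne (cofactorStep t (j + 2) S.a₁ S.r₁) = critOrbit t (j + 2) := by
    simp [cofactorStep, S.evalOne_a₁, S.evalOne_r₁, critOrbit_succ t (j + 1)]
  have heval₂ : evalOne (cofactorStep t (j + 2) S.a₂ S.r₂) = κ ^ 2 := by
    simp [cofactorStep, S.evalOne_a₂, S.evalOne_r₂]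
  obtain ⟨a, ha, hbi⟩ := IsBiform.exists_eq_cubeSum_mul (p := S.nextNumerator)
    ((hstep₂.C_mul _).add ((IsBiform.X_zero.mul IsBiform.X_one rfl rfl).mul
      S.isBiform_cofactorStep₁ (by ring) (by ring)))
    (by simp [nextNumerator, heval₁, heval₂, hκ, CharTwo.add_self_eq_zero])
  exact ⟨a, ha, hbi.cast (by ring) rfl⟩

lemma cubeSum_mul_det_next (S : SyzygyPair t j κ) (hκ : κ ≠ 0) :
    S.nextNumerator * S.r₁ ^ 2 + cofactorStep t (j + 2) S.a₁ S.r₁ *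
        (C (critOrbit t (j + 2) / κ ^ 2) * S.r₂ ^ 2 + X 0 * X 1 * S.r₁ ^ 2)
      = C (critOrbit t (j + 2)) * X 1 ^ 2 ^ (j + 1 + 2) := by
  have h2 : (2 : BinaryPoly k) = 0 := CharTwo.two_eq_zero
  have hdet := congrArg (· ^ 2) S.det
  simp only [CharTwo.add_sq, mul_pow, ← pow_mul, ← pow_succ, ← map_pow] at hdet
  have hc : C (critOrbit t (j + 2)) = C (critOrbit t (j + 2) / κ ^ 2) * C (κ ^ 2)
      (σ := Fin 2) := by
    rw [← map_mul, div_mul_cancel₀ _ (pow_ne_zero 2 hκ)]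
  rw [hc, nextNumerator, show j + 1 + 2 = j + 2 + 1 by ring]
  linear_combination (norm := (simp only [cofactorStep]; ring))
    C (critOrbit t (j + 2) / κ ^ 2) * hdet
    + (C (critOrbit t (j + 2) / κ ^ 2) * C t * X 0 ^ 2 * X 1 ^ 2 * lin (j + 2) ^ 2
      * S.r₁ ^ 2 * S.r₂ ^ 2 + X 0 * X 1 * S.r₁ ^ 2 * cofactorStep t (j + 2) S.a₁ S.r₁) * h2

lemma decomp_next (S : SyzygyPair t j κ) {c : k} {p q : BinaryPoly k}
    (hpq : S.r₂ = p * X 0 ^ 2 ^ j + q * X 1 ^ 2 ^ j) :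
    C c * S.r₂ ^ 2 + X 0 * X 1 * S.r₁ ^ 2 =
      X 0 ^ 2 ^ (j + 1) * (C c * p ^ 2 + X 0 * X 1 * S.u ^ 2) +
        X 1 ^ 2 ^ (j + 1) * (C c * q ^ 2 + X 0 * X 1 * S.v ^ 2) +
        (X 0 * X 1) ^ (2 ^ (j + 1) - 1) := by
  have hexp : 2 ^ (j + 1) - 1 = 2 * (2 ^ j - 1) + 1 := by
    have := Nat.one_le_two_pow (n := j)
    omega
  rw [hexp, hpq]
  conv_lhs => rw [S.decomp]
  simp only [CharTwo.add_sq]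
  ring

lemma nonempty_succ (S : SyzygyPair t j κ) (hκ : κ ≠ 0) :
    Nonempty (SyzygyPair t (j + 1) (critOrbit t (j + 2))) := by
  have hrel₁ := sq_mul_cubeSum_mul_phi_succ S.swap_r₁ S.rel₁
  have hrel₂ := sq_mul_cubeSum_mul_phi_succ S.swap_r₂ S.rel₂
  obtain ⟨a, ha, hbi⟩ := S.exists_nextNumerator_eq hκ
  obtain ⟨p, q, hp, hq, hpq⟩ := S.biform_r₂.isForm.exists_eq_mul_X_pow_add (2 ^ j) (2 ^ j)
    (by push_cast; linarith)
  have hswap := congrArg swap ha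
  have hdet := S.cubeSum_mul_det_next hκ
  rw [nextNumerator] at ha hswap
  simp only [map_add, map_mul, swap_X_zero, swap_X_one, swap_C, swap_cubeSum] at hswap
  have hbixy : IsBiform (X 0 * X 1 : BinaryPoly k) 2 0 :=
    IsBiform.X_zero.mul IsBiform.X_one (by norm_num) (by ring)
  set c := critOrbit t (j + 2) / κ ^ 2
  exact ⟨{
    r₁ := C c * S.r₂ ^ 2 + X 0 * X 1 * S.r₁ ^ 2
    a₁ := a
    r₂ := cubeSum * S.r₁ ^ 2
    a₂ := cofactorStep t (j + 2) S.a₁ S.r₁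
    u := C c * p ^ 2 + X 0 * X 1 * S.u ^ 2
    v := C c * q ^ 2 + X 0 * X 1 * S.v ^ 2
    biform_r₁ := ((S.biform_r₂.pow 2 (by push_cast; ring) (by simp)).C_mul c).add
      (hbixy.mul (S.biform_r₁.pow 2 rfl rfl) (by push_cast; ring) (by ring))
    biform_a₁ := hbi
    biform_r₂ := IsBiform.cubeSum.mul (S.biform_r₁.pow 2 rfl rfl) (by push_cast; ring) (by simp)
    biform_a₂ := S.isBiform_cofactorStep₁
    swap_r₁ := by simp [S.swap_r₁, S.swap_r₂, mul_comm]
    swap_r₂ := by simp [S.swap_r₁]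
    rel₁ := mul_left_cancel₀ (cubeSum_ne_zero (k := k)) (by
      linear_combination C c * hrel₂ + X 0 * X 1 * hrel₁ + X 0 ^ 2 ^ (j + 2 + 1) * ha
        + X 1 ^ 2 ^ (j + 2 + 1) * hswap)
    rel₂ := by linear_combination hrel₁
    det := by rw [← hdet, nextNumerator]; linear_combination (-S.r₁ ^ 2) * ha
    evalOne_r₁ := by simp [S.evalOne_r₁, S.evalOne_r₂]
    evalOne_r₂ := by simp [evalOne_cubeSum]
    form_u := ((hp.pow 2 (by push_cast; ring)).C_mul c).add
      (hbixy.isForm.mul (S.form_u.pow 2 rfl) (by push_cast; ring))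
    form_v := ((hq.pow 2 (by push_cast; ring)).C_mul c).add
      (hbixy.isForm.mul (S.form_v.pow 2 rfl) (by push_cast; ring))
    decomp := S.decomp_next hpq }⟩

end SyzygyPair

lemma nonempty_syzygyPair {k : Type*} [Field k] [CharP k 2] {t : k} (j : ℕ)
    (h : ∀ i, 2 ≤ i → i < j + 1 → critOrbit t i ≠ 0) :
    Nonempty (SyzygyPair t j (if j = 0 then 1 else critOrbit t (j + 1))) := by
  induction j with
  | zero => exact ⟨by simpa using SyzygyPair.zero t⟩
  | succ j ih =>
    obtain ⟨S⟩ := ih fun i h₁ h₂ => h i h₁ (by omega)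
    simpa using S.nonempty_succ (by
      split_ifs with hj
      · exact one_ne_zero
      · exact h _ (by omega) (by omega))

end Syzygies

lemma smul_mul_mem_of_dvd {A B : Type*} [CommRing A] [CommRing B] [Algebra A B] {I : Ideal B}
    {p p' : A} {β : B} (h : p ∣ p') (hβ : p • β ∈ I) (γ : B) : p' • (γ * β) ∈ I := by
  obtain ⟨r, rfl⟩ := h
  rw [mul_comm p, ← smul_mul_smul_comm]
  exact I.mul_mem_left _ hβ

section BoxCounting

variable {k B ι : Type*} [Field k] [CommRing B] [Algebra k B] [Algebra (BinaryPoly k) B]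
  [IsScalarTower k (BinaryPoly k) B]

lemma mem_of_monomial_smul_basis_mem (b : Module.Basis ι (BinaryPoly k) B)
    (W : Submodule k B) (h : ∀ i j c, (X 0 ^ i * X 1 ^ j : BinaryPoly k) • b c ∈ W) (β : B) :
    β ∈ W := by
  rw [← b.linearCombination_repr β, Finsupp.linearCombination_apply]
  refine Submodule.sum_mem _ fun c _ => ?_
  beta_reduce
  rw [eq_sum_coeff_mul_X_pow (b.repr β c), Finset.sum_smul]
  refine Submodule.sum_mem _ fun m _ => ?_
  rw [mul_assoc, ← smul_eq_C_mul, smul_assoc]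
  exact W.smul_mem _ (h _ _ _)

/-- The coordinates, in a basis over `k[x, y]`, of the monomials `xⁱyʲ` with `i, j < m`: they
identify `B/(xᵐ, yᵐ)B` with a finite-dimensional vector space. -/
noncomputable def boxCoeff (b : Module.Basis ι (BinaryPoly k) B) (m : ℕ) :
    B →ₗ[k] (ι × Fin m × Fin m → k) :=
  LinearMap.pi fun c =>
    (lcoeff k (Finsupp.single 0 (c.2.1 : ℕ) + Finsupp.single 1 (c.2.2 : ℕ))).comp
      ((b.coord c.1).restrictScalars k)

lemma boxCoeff_apply (b : Module.Basis ι (BinaryPoly k) B) (m : ℕ) (β : B)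
    (c : ι × Fin m × Fin m) :
    boxCoeff b m β c
      = coeff (Finsupp.single 0 (c.2.1 : ℕ) + Finsupp.single 1 (c.2.2 : ℕ)) (b.repr β c.1) :=
  rfl

lemma boxCoeff_X_pow_smul (b : Module.Basis ι (BinaryPoly k) B) (m : ℕ) (i : Fin 2) (β : B) :
    boxCoeff b m ((X i ^ m : BinaryPoly k) • β) = 0 := by
  ext c
  rw [boxCoeff_apply, map_smul, Finsupp.smul_apply, smul_eq_mul, X_pow_eq_monomial,
    coeff_monomial_mul', if_neg, Pi.zero_apply]
  intro hle
  have := hle i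
  fin_cases i <;> simp at this <;> omega

lemma boxCoeff_surjective (b : Module.Basis ι (BinaryPoly k) B) [Finite ι] (m : ℕ) :
    Function.Surjective (boxCoeff b m) := by
  classical
  rw [← LinearMap.range_eq_top, eq_top_iff, ← (Pi.basisFun k (ι × Fin m × Fin m)).span_eq,
    Submodule.span_le]
  rintro _ ⟨⟨c, i, j⟩, rfl⟩
  refine ⟨(X 0 ^ (i : ℕ) * X 1 ^ (j : ℕ) : BinaryPoly k) • b c, ?_⟩
  ext ⟨c', i', j'⟩
  have hexp : (Finsupp.single 0 (i : ℕ) + Finsupp.single 1 (j : ℕ) : Fin 2 →₀ ℕ)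
      = Finsupp.single 0 (i' : ℕ) + Finsupp.single 1 (j' : ℕ) ↔ i = i' ∧ j = j' := by
    rw [Finsupp.ext_iff, Fin.forall_fin_two, Fin.ext_iff, Fin.ext_iff]
    simp
  rw [boxCoeff_apply, map_smul, Finsupp.smul_apply, b.repr_self, Pi.basisFun_apply,
    Pi.single_apply, smul_eq_mul, X_pow_eq_monomial, X_pow_eq_monomial, monomial_mul,
    Finsupp.single_apply]
  by_cases hc : c = c'
  · simp [hc, coeff_monomial, hexp, eq_comm]
  · simp [hc, Ne.symm hc]

lemma finrank_sup_range_le {E : Type*} [AddCommGroup E] [Module k E] [FiniteDimensional k E]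
    [Fintype ι] (b : Module.Basis ι (BinaryPoly k) B) (T : B →ₗ[k] E) (V : Submodule k E)
    (s : Finset (ℕ × ℕ))
    (h : ∀ i j c, (i, j) ∉ s → T ((X 0 ^ i * X 1 ^ j : BinaryPoly k) • b c) ∈ V) :
    Module.finrank k ↥(V ⊔ LinearMap.range T) ≤ Module.finrank k V + s.card * Fintype.card ι := by
  let f : ↥s × ι → E := fun p => T ((X 0 ^ p.1.1.1 * X 1 ^ p.1.1.2 : BinaryPoly k) • b p.2)
  have hrange : LinearMap.range T ≤ V ⊔ Submodule.span k (Set.range f) := by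
    rintro _ ⟨β, rfl⟩
    refine mem_of_monomial_smul_basis_mem b ((V ⊔ Submodule.span k (Set.range f)).comap T)
      (fun i j c => ?_) β
    by_cases hs : (i, j) ∈ s
    · exact Submodule.mem_sup_right (Submodule.subset_span ⟨(⟨(i, j), hs⟩, c), rfl⟩)
    · exact Submodule.mem_sup_left (h i j c hs)
  have hcard : Module.finrank k (Submodule.span k (Set.range f)) ≤ s.card * Fintype.card ι := by
    simpa [Set.finrank] using finrank_range_le_card (R := k) f
  calc Module.finrank k ↥(V ⊔ LinearMap.range T)
      ≤ Module.finrank k ↥(V ⊔ Submodule.span k (Set.range f)) :=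
        Submodule.finrank_mono (sup_le le_sup_left hrange)
    _ ≤ Module.finrank k V + Module.finrank k (Submodule.span k (Set.range f)) :=
        Submodule.finrank_add_le_finrank_add_finrank _ _
    _ ≤ Module.finrank k V + s.card * Fintype.card ι := by gcongr

/-- The image of an ideal under `boxCoeff`, whose dimension measures the ideal modulo
`(xᵐ, yᵐ)`. -/
noncomputable def boxImage (b : Module.Basis ι (BinaryPoly k) B) (m : ℕ) (I : Ideal B) :
    Submodule k (ι × Fin m × Fin m → k) :=
  (I.restrictScalars k).map (boxCoeff b m)

variable (b : Module.Basis ι (BinaryPoly k) B) (m : ℕ)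

lemma boxImage_span_pair_eq_bot {I : Ideal B}
    (hI : I ≤ Ideal.span {algebraMap (BinaryPoly k) B (X 0) ^ m,
      algebraMap (BinaryPoly k) B (X 1) ^ m}) : boxImage b m I = ⊥ := by
  rw [eq_bot_iff]
  rintro _ ⟨β, hβ, rfl⟩
  obtain ⟨p, q, rfl⟩ := Ideal.mem_span_pair.1 (hI hβ)
  rw [mul_comm p, mul_comm q, ← map_pow, ← map_pow, ← Algebra.smul_def, ← Algebra.smul_def,
    map_add, boxCoeff_X_pow_smul, boxCoeff_X_pow_smul, add_zero]
  exact zero_mem _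

lemma boxCoeff_monomial_smul_mem {I : Ideal B} {i j : ℕ} {β : B}
    (h : m ≤ j ∨ (X 0 ^ i * X 1 ^ j : BinaryPoly k) • β ∈ I) :
    boxCoeff b m ((X 0 ^ i * X 1 ^ j : BinaryPoly k) • β) ∈ boxImage b m I := by
  rcases h with h | h
  · obtain ⟨l, rfl⟩ := Nat.exists_eq_add_of_le h
    rw [pow_add, mul_left_comm, mul_smul, boxCoeff_X_pow_smul]
    exact zero_mem _
  · exact ⟨_, h, rfl⟩

lemma finrank_boxImage_succ_le [Fintype ι] {I I' : Ideal B} {ν : B} {N q : ℕ}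
    (hI : I' ≤ I ⊔ Ideal.span {ν})
    (hx : (X 0 ^ (N + q) : BinaryPoly k) • ν ∈ I)
    (hxy : (X 0 ^ N * X 1 ^ q : BinaryPoly k) • ν ∈ I) :
    Module.finrank k (boxImage b m I')
      ≤ Module.finrank k (boxImage b m I) + (N * m + q * q) * Fintype.card ι := by
  classical
  let T : B →ₗ[k] (ι × Fin m × Fin m → k) := (boxCoeff b m).comp (LinearMap.mulRight k ν)
  let s : Finset (ℕ × ℕ) :=
    Finset.range N ×ˢ Finset.range m ∪ Finset.Ico N (N + q) ×ˢ Finset.range q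
  have hle : boxImage b m I' ≤ boxImage b m I ⊔ LinearMap.range T := by
    rintro _ ⟨β, hβ, rfl⟩
    obtain ⟨γ, hγ, δ, hδ, rfl⟩ := Submodule.mem_sup.1 (hI hβ)
    obtain ⟨a, rfl⟩ := Ideal.mem_span_singleton'.1 hδ
    rw [map_add]
    exact add_mem (Submodule.mem_sup_left ⟨γ, hγ, rfl⟩) (Submodule.mem_sup_right ⟨a, rfl⟩)
  have hs : s.card ≤ N * m + q * q :=
    (Finset.card_union_le _ _).trans (by simp)
  have hT : ∀ i j c, (i, j) ∉ s →
      T ((X 0 ^ i * X 1 ^ j : BinaryPoly k) • b c) ∈ boxImage b m I := fun i j c hij => by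
    simp only [T, LinearMap.comp_apply, LinearMap.mulRight_apply, smul_mul_assoc]
    refine boxCoeff_monomial_smul_mem b m (or_iff_not_imp_left.2 fun hj => ?_)
    have hcases : N + q ≤ i ∨ N ≤ i ∧ q ≤ j := by simp [s] at hij; omega
    rcases hcases with hi | ⟨hi, hj⟩
    · exact smul_mul_mem_of_dvd ((pow_dvd_pow _ hi).mul_right _) hx _
    · exact smul_mul_mem_of_dvd (mul_dvd_mul (pow_dvd_pow _ hi) (pow_dvd_pow _ hj)) hxy _
  calc Module.finrank k (boxImage b m I')
      ≤ Module.finrank k ↥(boxImage b m I ⊔ LinearMap.range T) := Submodule.finrank_mono hle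
    _ ≤ Module.finrank k (boxImage b m I) + s.card * Fintype.card ι :=
        finrank_sup_range_le b T _ s hT
    _ ≤ _ := by gcongr

lemma mul_self_le_of_chain [Finite ι] [Nonempty ι] (b : Module.Basis ι (BinaryPoly k) B)
    {m N q h : ℕ} {I : ℕ → Ideal B}
    (hI₀ : I 0 ≤ Ideal.span {algebraMap (BinaryPoly k) B (X 0) ^ m,
      algebraMap (BinaryPoly k) B (X 1) ^ m})
    (hI : ∀ i < h, ∃ ν, I (i + 1) ≤ I i ⊔ Ideal.span {ν} ∧
      (X 0 ^ (N + q) : BinaryPoly k) • ν ∈ I i ∧ (X 0 ^ N * X 1 ^ q : BinaryPoly k) • ν ∈ I i)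
    (hone : (X 0 ^ (2 * N) : BinaryPoly k) • (1 : B) ∈ I h) :
    m * m ≤ h * (N * m + q * q) + 2 * N * m := by
  have := Fintype.ofFinite ι
  have hchain : ∀ i ≤ h, Module.finrank k (boxImage b m (I i))
      ≤ i * (N * m + q * q) * Fintype.card ι := by
    intro i
    induction i with
    | zero => simp [boxImage_span_pair_eq_bot b m hI₀]
    | succ i ih =>
      intro hi
      obtain ⟨ν, hle, hx, hxy⟩ := hI i hi
      linarith [ih (by omega), finrank_boxImage_succ_le b m hle hx hxy]
  have hlast := finrank_sup_range_le b (boxCoeff b m) (boxImage b m (I h))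
    (Finset.range (2 * N) ×ˢ Finset.range m) fun i j c hij => by
      refine boxCoeff_monomial_smul_mem b m (or_iff_not_imp_left.2 fun hj => ?_)
      have hi : 2 * N ≤ i := by simp at hij; omega
      simpa only [mul_one] using smul_mul_mem_of_dvd ((pow_dvd_pow _ hi).mul_right _) hone (b c)
  rw [LinearMap.range_eq_top.2 (boxCoeff_surjective b m), sup_top_eq, finrank_top,
    Module.finrank_fintype_fun_eq_card] at hlast
  simp only [Fintype.card_prod, Fintype.card_fin, Finset.card_product, Finset.card_range] at hlast
  refine Nat.le_of_mul_le_mul_right ?_ (Fintype.card_pos (α := ι))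
  linarith [hchain h le_rfl]

end BoxCounting

section ForcingEquations

/-- A solution `(x, y, z, u, v, w)` in the ring `A` of the two equations that define the
Brenner–Monsky ring. -/
structure IsForcingSolution {A : Type*} [CommRing A] (t x y z u v w : A) : Prop where
  root : IsQuarticRoot t x y z
  forcing : x ^ 3 * y ^ 3 = u * x ^ 4 + v * y ^ 4 + w * z ^ 4

lemma IsForcingSolution.map {A B : Type*} [CommRing A] [CommRing B] {t x y z u v w : A}
    (h : IsForcingSolution t x y z u v w) (F : A →+* B) :
    IsForcingSolution (F t) (F x) (F y) (F z) (F u) (F v) (F w) :=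
  ⟨h.root.map F, by simpa using congrArg F h.forcing⟩

protected lemma IsForcingSolution.swap {A : Type*} [CommRing A] {t x y z u v w : A}
    (h : IsForcingSolution t x y z u v w) : IsForcingSolution t y x z v u w :=
  ⟨by
    have hroot := h.root
    unfold IsQuarticRoot at hroot ⊢
    linear_combination hroot, by linear_combination h.forcing⟩

variable {k : Type*} [Field k] [CharP k 2] {t κ : k}

/-- Since `a₁ r₂ + a₂ r₁` and `b₁ r₂ + b₂ r₁` are `κ yᵠ` and `κ xᵠ`, the vectors `(r₁, a₁, b₁)` and
`(r₂, a₂, b₂)` span the syzygies of `(φ, xᵠ, yᵠ)`; so `H` lies in `(φ, xᵠ, yᵠ)` as soon as it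
multiplies `r₁` and `r₂` into `(xᵠ, yᵠ)`. -/
lemma exists_eq_of_syzygies {Q : ℕ} {φ H r₁ a₁ b₁ r₂ a₂ b₂ α₁ β₁ α₂ β₂ : BinaryPoly k}
    (hκ : κ ≠ 0)
    (hrel₁ : r₁ * φ = a₁ * X 0 ^ Q + b₁ * X 1 ^ Q) (hrel₂ : r₂ * φ = a₂ * X 0 ^ Q + b₂ * X 1 ^ Q)
    (ha : a₁ * r₂ + a₂ * r₁ = C κ * X 1 ^ Q) (hb : b₁ * r₂ + b₂ * r₁ = C κ * X 0 ^ Q)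
    (hH₁ : H * r₁ = α₁ * X 0 ^ Q + β₁ * X 1 ^ Q) (hH₂ : H * r₂ = α₂ * X 0 ^ Q + β₂ * X 1 ^ Q) :
    ∃ p μ ν : BinaryPoly k, H = p * φ + μ * X 0 ^ Q + ν * X 1 ^ Q := by
  have h2 : (2 : BinaryPoly k) = 0 := CharTwo.two_eq_zero
  have hκ' : (C κ⁻¹ * C κ : BinaryPoly k) = 1 := by rw [← C_mul, inv_mul_cancel₀ hκ, C_1]
  obtain ⟨p, -, hp⟩ := exists_of_X_pow_mul_eq (m := Q) (n := Q) (a := α₁ * r₂ + α₂ * r₁)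
    (b := β₂ * r₁ + β₁ * r₂) (by
      linear_combination r₁ * hH₂ + r₂ * hH₁
        + (X 0 ^ Q * (α₁ * r₂ + α₂ * r₁) - H * r₁ * r₂) * h2)
  obtain ⟨μ, -, hμ⟩ := exists_of_X_pow_mul_eq (m := Q) (n := Q) (a := a₁ * α₂ + a₂ * α₁)
    (b := C κ * H + a₁ * β₂ + a₂ * β₁) (by
      linear_combination a₁ * hH₂ + a₂ * hH₁ + H * ha
        + (X 0 ^ Q * (a₁ * α₂ + a₂ * α₁) - H * (a₁ * r₂ + a₂ * r₁)) * h2)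
  set P := a₁ * β₂ + a₂ * β₁ + p * φ with hP
  obtain ⟨ν, hν, -⟩ := exists_of_X_pow_mul_eq (m := Q) (n := Q) (a := C κ * P)
    (b := b₁ * (C κ * β₂ + p * b₂) + b₂ * (C κ * β₁ + p * b₁)) (by
      linear_combination P * hb + b₁ * (β₂ * ha + a₂ * hp + p * hrel₂)
        + b₂ * (β₁ * ha + a₁ * hp + p * hrel₁)
        + (C κ * X 0 ^ Q * P - P * (b₁ * r₂ + b₂ * r₁) - b₁ * (β₂ * a₂ * r₁ - a₂ * X 0 ^ Q * p)
          - b₂ * (β₁ * a₁ * r₂ - a₁ * X 0 ^ Q * p)) * h2)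
  refine ⟨C κ⁻¹ * p, C κ⁻¹ * μ, C κ⁻¹ ^ 2 * ν, ?_⟩
  linear_combination C κ⁻¹ * hμ - C κ⁻¹ ^ 2 * hν + (C κ⁻¹ * P - H) * hκ'
    - C κ⁻¹ * hP - C κ⁻¹ ^ 2 * X 1 ^ Q * ν * h2

lemma SyzygyPair.exists_monomial_eq {j : ℕ} (S : SyzygyPair t j κ) (hκ : κ ≠ 0) :
    ∃ p μ ν : BinaryPoly k, X 0 * (X 0 ^ 3 * X 1 ^ 3) ^ 2 ^ j =
      p * phi t (j + 2) + μ * X 0 ^ 2 ^ (j + 2) + ν * X 1 ^ 2 ^ (j + 2) := by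
  have hform : IsForm (X 0 * (X 0 ^ 3 * X 1 ^ 3) ^ 2 ^ j : BinaryPoly k) (6 * 2 ^ j + 1) :=
    (IsForm.X 0).mul (((IsForm.X_pow 0 3).mul (IsForm.X_pow 1 3) rfl).pow (2 ^ j) rfl)
      (by push_cast; ring)
  have hQ : (2 : ℕ) ^ (j + 2) = 4 * 2 ^ j := by ring
  obtain ⟨α₁, β₁, -, -, hH₁⟩ := (hform.mul S.biform_r₁.isForm rfl).exists_eq_mul_X_pow_add
    (2 ^ (j + 2)) (2 ^ (j + 2)) (by push_cast [hQ]; linarith)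
  obtain ⟨α₂, β₂, -, -, hH₂⟩ := (hform.mul S.biform_r₂.isForm rfl).exists_eq_mul_X_pow_add
    (2 ^ (j + 2)) (2 ^ (j + 2)) (by push_cast [hQ]; linarith)
  have hdet_swap := congrArg swap S.det
  simp only [map_add, map_mul, map_pow, swap_X_one, swap_C, S.swap_r₁, S.swap_r₂] at hdet_swap
  exact exists_eq_of_syzygies hκ S.rel₁ S.rel₂ S.det hdet_swap hH₁ hH₂

lemma IsQuarticRoot.exists_forcing_cofactors {B : Type*} [CommRing B] [CharP B 2]
    (ht : ∀ n, 2 ≤ n → critOrbit t n ≠ 0) {F : BinaryPoly k →+* B} {z : B}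
    (hz : IsQuarticRoot (F (C t)) (F (X 0)) (F (X 1)) z) (j : ℕ) :
    ∃ u v w : B, F (X 0) * (F (X 0) ^ 3 * F (X 1) ^ 3) ^ 2 ^ j =
      u * F (X 0) ^ 2 ^ (j + 2) + v * F (X 1) ^ 2 ^ (j + 2) + w * z ^ 2 ^ (j + 2) := by
  obtain ⟨S⟩ := nonempty_syzygyPair (t := t) j fun n hn _ => ht n hn
  obtain ⟨p, μ, ν, h⟩ := S.exists_monomial_eq (by
    split_ifs
    · exact one_ne_zero
    · exact ht _ (by omega))
  have hF := congrArg F h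
  simp only [map_add, map_mul, map_pow] at hF
  exact ⟨F μ - F p * frobCoeff F z (j + 2), F ν - F p * frobCoeff F z (j + 3), F p * F cubeSum, by
    linear_combination hF - F p * hz.cubeSum_mul_pow_two_pow (j + 2)⟩

end ForcingEquations

section BoundedDenominators

variable {κ A B T : Type*} [CommRing A] [CommRing B] [CommRing T] [Algebra A T] [Algebra B T]
  {x : A}

/-- Some power of `x` moves every member of the family `ξ` into the corresponding submodule. For
`F = 1` this says that the `ξ j` lie in `B` up to a denominator `x ^ N` independent of `j`. -/
def EventuallyMem (x : A) (F : κ → Submodule B T) (ξ : κ → T) : Prop :=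
  ∀ᶠ N in Filter.atTop, ∀ j, (x ^ N : A) • ξ j ∈ F j

namespace EventuallyMem

variable {F : κ → Submodule B T} {ξ η : κ → T}

lemma mono {G : κ → Submodule B T} (h : EventuallyMem x F ξ) (hFG : ∀ j, F j ≤ G j) :
    EventuallyMem x G ξ :=
  Filter.Eventually.mono h fun _ hN j => hFG j (hN j)

lemma add (hξ : EventuallyMem x F ξ) (hη : EventuallyMem x F η) :
    EventuallyMem x F fun j => ξ j + η j := by
  filter_upwards [hξ, hη] with N hN hN' j
  rw [smul_add]
  exact add_mem (hN j) (hN' j)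

variable [Algebra A B] [IsScalarTower A B T]

lemma of_pow_smul_mem (N : ℕ) (h : ∀ j, (x ^ N : A) • ξ j ∈ F j) : EventuallyMem x F ξ := by
  refine Filter.eventually_atTop.2 ⟨N, fun M hM j => ?_⟩
  obtain ⟨l, rfl⟩ := Nat.exists_eq_add_of_le hM
  rw [add_comm, pow_add, mul_smul]
  exact Submodule.smul_of_tower_mem _ _ (h j)

lemma of_mem (h : ∀ j, ξ j ∈ F j) : EventuallyMem x F ξ :=
  of_pow_smul_mem 0 (by simpa using h)

lemma mul (hξ : EventuallyMem x (fun _ => (1 : Submodule B T)) ξ) (hη : EventuallyMem x F η) :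
    EventuallyMem x F fun j => ξ j * η j := by
  obtain ⟨N, hN⟩ := hξ.exists
  obtain ⟨M, hM⟩ := hη.exists
  refine of_pow_smul_mem (N + M) fun j => ?_
  obtain ⟨b, hb⟩ := Submodule.mem_one.1 (hN j)
  rw [pow_add, ← smul_mul_smul_comm, ← hb, ← Algebra.smul_def]
  exact (F j).smul_mem b (hM j)

end EventuallyMem

variable [Algebra A B] [IsScalarTower A B T]

lemma eventuallyMem_one_mvPolynomial {σ k : Type*} [CommSemiring k] {χ : κ → MvPolynomial σ k →+* T}
    (hC : ∀ c, EventuallyMem x (fun _ => (1 : Submodule B T)) fun j => χ j (C c))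
    (hX : ∀ i, EventuallyMem x (fun _ => (1 : Submodule B T)) fun j => χ j (X i))
    (p : MvPolynomial σ k) :
    EventuallyMem x (fun _ => (1 : Submodule B T)) fun j => χ j p := by
  induction p using MvPolynomial.induction_on with
  | C c => exact hC c
  | add p q hp hq => simpa only [map_add] using hp.add hq
  | mul_X p i hp => simpa only [map_mul] using hp.mul (hX i)

lemma eventuallyMem_of_mem_chain {R : Type*} [CommRing R] {χ : κ → R →+* T} {I : ℕ → Ideal R}
    {μ : ℕ → R} {E : ℕ → κ → Submodule B T} {s : Set R} {h : ℕ}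
    (hχ : ∀ r, EventuallyMem x (fun _ => (1 : Submodule B T)) fun j => χ j r)
    (hI₀ : I 0 ≤ Ideal.span s) (hI : ∀ i < h, I (i + 1) ≤ I i ⊔ Ideal.span {μ i})
    (hE₀ : ∀ r ∈ s, ∀ j, χ j r ∈ E 0 j) (hE : ∀ i j, E i j ≤ E (i + 1) j)
    (hμ : ∀ i j, χ j (μ i) ∈ E (i + 1) j) {i : ℕ} (hi : i ≤ h) {r : R} (hr : r ∈ I i) :
    EventuallyMem x (E i) fun j => χ j r := by
  induction i generalizing r with
  | zero =>
    replace hr := hI₀ hr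
    induction hr using Submodule.span_induction with
    | mem r hrs => exact .of_mem (hE₀ r hrs)
    | zero => exact .of_mem fun j => by simp
    | add r r' _ _ h h' => simpa only [map_add] using h.add h'
    | smul a r _ h => simpa only [smul_eq_mul, map_mul] using (hχ a).mul h
  | succ i ih =>
    obtain ⟨a, ha, b, hb, rfl⟩ := Submodule.mem_sup.1 (hI i hi hr)
    obtain ⟨c, rfl⟩ := Ideal.mem_span_singleton'.1 hb
    simpa only [map_add, map_mul] using
      ((ih (by omega) ha).mono (hE i)).add ((hχ c).mul (.of_mem (hμ i)))

end BoundedDenominators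

section QuasilengthBound

variable {k B T ι : Type*} [Field k] [CommRing B] [CommRing T] [Algebra k B]
  [Algebra (BinaryPoly k) B] [IsScalarTower k (BinaryPoly k) B] [Algebra (BinaryPoly k) T]
  [Algebra B T] [IsScalarTower (BinaryPoly k) B T] [Finite ι] [Nonempty ι]

lemma mul_self_le_of_submodule_chain (b : Module.Basis ι (BinaryPoly k) B)
    (hinj : Function.Injective (algebraMap B T)) {m N q h : ℕ} {E : ℕ → Submodule B T} {ξ : ℕ → T}
    (hE₀ : E 0 ≤ Submodule.span B {algebraMap (BinaryPoly k) T (X 0) ^ m,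
      algebraMap (BinaryPoly k) T (X 1) ^ m})
    (hE : ∀ i < h, E (i + 1) ≤ E i ⊔ Submodule.span B {ξ i})
    (hξ : ∀ i < h, (X 0 ^ N : BinaryPoly k) • ξ i ∈ (1 : Submodule B T))
    (hx : ∀ i < h, (X 0 ^ N : BinaryPoly k) • (X 0 ^ q : BinaryPoly k) • ξ i ∈ E i)
    (hy : ∀ i < h, (X 0 ^ N : BinaryPoly k) • (X 1 ^ q : BinaryPoly k) • ξ i ∈ E i)
    (hone : (X 0 ^ N : BinaryPoly k) • (1 : T) ∈ E h) :
    m * m ≤ h * (N * m + q * q) + 2 * N * m := by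
  let I : ℕ → Ideal B := fun i =>
    ((E i).map (DistribSMul.toLinearMap B T (X 0 ^ N : BinaryPoly k))).comap (Algebra.linearMap B T)
  have mem_I : ∀ {i β τ}, τ ∈ E i → (X 0 ^ N : BinaryPoly k) • τ = algebraMap B T β → β ∈ I i :=
    fun hτ h => ⟨_, hτ, h⟩
  refine mul_self_le_of_chain b (I := I) (q := q) ?_ (fun i hi => ?_) ?_
  · rintro β ⟨τ, hτ, hβ⟩
    obtain ⟨c, d, rfl⟩ := Submodule.mem_span_pair.1 (hE₀ hτ)
    refine Ideal.mem_span_pair.2 ⟨(X 0 ^ N : BinaryPoly k) • c, (X 0 ^ N : BinaryPoly k) • d,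
      hinj (Eq.trans ?_ hβ)⟩
    simp only [map_add, map_mul, map_pow, Algebra.smul_def, ← IsScalarTower.algebraMap_apply,
      mul_assoc, DistribSMul.toLinearMap_apply]
  · obtain ⟨ν, hν⟩ := Submodule.mem_one.1 (hξ i hi)
    have hsmul : ∀ p : BinaryPoly k, algebraMap B T (p • ν) = p • (X 0 ^ N : BinaryPoly k) • ξ i :=
      fun p => hν ▸ map_smul (IsScalarTower.toAlgHom (BinaryPoly k) B T) p ν
    refine ⟨ν, ?_, mem_I (hx i hi) ?_, mem_I (hy i hi) ?_⟩
    · rintro β ⟨τ, hτ, hβ⟩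
      obtain ⟨τ', hτ', δ, hδ, rfl⟩ := Submodule.mem_sup.1 (hE i hi hτ)
      obtain ⟨c, rfl⟩ := Submodule.mem_span_singleton.1 hδ
      have hβ' : (X 0 ^ N : BinaryPoly k) • (τ' + c • ξ i) = algebraMap B T β := hβ
      refine Submodule.mem_sup.2 ⟨β - c * ν, mem_I hτ' ?_, c * ν,
        Ideal.mul_mem_left _ _ (Ideal.mem_span_singleton_self ν), sub_add_cancel _ _⟩
      rw [map_sub, map_mul, ← hβ', smul_add, smul_comm _ c, ← hν, Algebra.smul_def c,
        add_sub_cancel_right]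
    · rw [hsmul, pow_add, mul_smul, smul_comm (X 0 ^ q)]
    · rw [hsmul, mul_smul, smul_comm (X 1 ^ q)]
  · refine mem_I hone ?_
    rw [Algebra.smul_def, Algebra.smul_def, Algebra.smul_def, mul_one, mul_one,
      ← IsScalarTower.algebraMap_apply, ← map_mul, ← pow_add, two_mul]

/-- Realisations `χ j` of `R` in `T` that send the two given elements to high powers of `x` and `y`
turn a filtration of `R/(aⁿ, bⁿ)` of length `h` into one of `B/(xⁿᵠ, yⁿᵠ)` whose factors have
dimension about `q²`, so that `n² q² ≤ h q² + O(q)`. -/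
lemma sq_le_of_chain {R κ : Type*} [CommRing R] (b : Module.Basis ι (BinaryPoly k) B)
    (hinj : Function.Injective (algebraMap B T)) {q : κ → ℕ} (hq : ∀ c, ∃ j, c < q j)
    {χ : κ → R →+* T} {f g : R} (hf : ∀ j, χ j f = algebraMap (BinaryPoly k) T (X 0) ^ q j)
    (hg : ∀ j, χ j g = algebraMap (BinaryPoly k) T (X 1) ^ q j)
    (hχ : ∀ r, EventuallyMem (X 0 : BinaryPoly k) (fun _ => (1 : Submodule B T)) fun j => χ j r)
    {n h : ℕ} {I : ℕ → Ideal R} (hI₀ : I 0 ≤ Ideal.span {f ^ n, g ^ n})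
    (hI : ∀ i < h, ∃ μ, I (i + 1) ≤ I i ⊔ Ideal.span {μ} ∧ f * μ ∈ I i ∧ g * μ ∈ I i)
    (hone : 1 ∈ I h) : n ^ 2 ≤ h := by
  choose! μ hI hfμ hgμ using hI
  let E : ℕ → κ → Submodule B T := fun i j =>
    i.rec (Submodule.span B (χ j '' {f ^ n, g ^ n})) fun i F => F ⊔ Submodule.span B {χ j (μ i)}
  have hmem : ∀ i ≤ h, ∀ r ∈ I i, EventuallyMem (X 0 : BinaryPoly k) (E i) fun j => χ j r :=
    fun i hi r hr => eventuallyMem_of_mem_chain hχ hI₀ hI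
      (fun r hr j => Submodule.subset_span (Set.mem_image_of_mem _ hr)) (fun _ _ => le_sup_left)
      (fun i j => Submodule.mem_sup_right (Submodule.mem_span_singleton_self _)) hi hr
  have hbounds : ∀ᶠ N in Filter.atTop, (∀ i < h, ∀ j,
      (X 0 ^ N : BinaryPoly k) • χ j (μ i) ∈ (1 : Submodule B T) ∧
      (X 0 ^ N : BinaryPoly k) • χ j (f * μ i) ∈ E i j ∧
      (X 0 ^ N : BinaryPoly k) • χ j (g * μ i) ∈ E i j) := by
    refine (Filter.eventually_all_finite (Set.finite_lt_nat h)).2 fun i hi => ?_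
    filter_upwards [hχ (μ i), hmem i hi.le _ (hfμ i hi), hmem i hi.le _ (hgμ i hi)] with N h₁ h₂ h₃
    exact fun j => ⟨h₁ j, h₂ j, h₃ j⟩
  obtain ⟨N, hN, hN₁⟩ := (hbounds.and (hmem h le_rfl 1 hone)).exists
  have hcount : ∀ j, n * q j * (n * q j) ≤ h * (N * (n * q j) + q j * q j) + 2 * N * (n * q j) :=
    fun j => by
      refine mul_self_le_of_submodule_chain b hinj (E := fun i => E i j) (ξ := fun i => χ j (μ i))
        ?_ (fun _ _ => le_rfl) (fun i hi => (hN i hi j).1) (fun i hi => ?_) (fun i hi => ?_) ?_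
      · change Submodule.span B _ ≤ _
        simp only [Set.image_pair, map_pow, hf, hg, ← pow_mul, mul_comm n, le_refl]
      · simpa only [map_mul, hf, Algebra.smul_def _ (χ j (μ i)), map_pow] using (hN i hi j).2.1
      · simpa only [map_mul, hg, Algebra.smul_def _ (χ j (μ i)), map_pow] using (hN i hi j).2.2
      · simpa only [map_one] using hN₁ j
  by_contra! hlt
  obtain ⟨j, hj⟩ := hq (h * N * n + 2 * N * n)
  nlinarith [hcount j, Nat.mul_le_mul_right (q j * q j) (Nat.succ_le_of_lt hlt),
    Nat.mul_lt_mul_of_pos_right hj (by omega : 0 < q j)]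

end QuasilengthBound

lemma exists_ideal_chain_of_hasQLFiltration {R : Type u} [CommRing R] {J I : Ideal R} {h : ℕ}
    (H : HasQLFiltration R J (R ⧸ I) h) :
    ∃ c : ℕ → Ideal R, c 0 = I ∧ c h = ⊤ ∧
      ∀ i < h, ∃ μ, c (i + 1) = c i ⊔ Ideal.span {μ} ∧ ∀ a ∈ J, a * μ ∈ c i := by
  obtain ⟨c, -, hbot, htop, hc⟩ := H
  refine ⟨fun i => (c (Fin.clamp i h)).comap I.mkQ, ?_, ?_, fun i hi => ?_⟩
  · have : Fin.clamp 0 h = 0 := by ext; simp [Fin.clamp]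
    simp only [this, hbot, Submodule.comap_bot, Submodule.ker_mkQ]
  · have : Fin.clamp h h = Fin.last h := by ext; simp [Fin.clamp]
    simp only [this, htop, Submodule.comap_top]
  · have hcast : Fin.clamp i h = Fin.castSucc ⟨i, hi⟩ := by ext; simp [Fin.clamp, hi.le]
    have hsucc : Fin.clamp (i + 1) h = Fin.succ ⟨i, hi⟩ := by
      ext; simp [Fin.clamp, Nat.succ_le_of_lt hi]
    obtain ⟨⟨m, hm⟩, hJ⟩ := hc ⟨i, hi⟩
    obtain ⟨μ, rfl⟩ := I.mkQ_surjective m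
    simp only [hcast, hsucc]
    refine ⟨μ, ?_, fun a ha => ?_⟩
    · have hle : I ≤ (c (Fin.castSucc ⟨i, hi⟩)).comap I.mkQ :=
        I.ker_mkQ.ge.trans (LinearMap.ker_le_comap _)
      rw [hm, ← Set.image_singleton, ← Submodule.map_span]
      nth_rw 1 [← Submodule.map_comap_eq_of_surjective I.mkQ_surjective (c _)]
      rw [← Submodule.map_sup, Submodule.comap_map_mkQ, sup_eq_right]
      exact hle.trans le_sup_left
    · exact hJ a ha _ (hm ▸ Submodule.mem_sup_right (Submodule.mem_span_singleton_self _))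

section ForcingRing

/-- The ideal of the two equations of `IsForcingSolution`, with `x, y, z, u, v, w` the variables
of indices `0, …, 5`. -/
noncomputable def forcingIdeal {K : Type*} [CommRing K] (t : K) : Ideal (MvPolynomial (Fin 6) K) :=
  Ideal.span
    {X 2 ^ 4 + X 0 * X 1 * X 2 ^ 2 + X 0 ^ 3 * X 2 + X 1 ^ 3 * X 2 + C t * X 0 ^ 2 * X 1 ^ 2,
      X 0 ^ 3 * X 1 ^ 3 - X 3 * X 0 ^ 4 - X 4 * X 1 ^ 4 - X 5 * X 2 ^ 4}

/-- The Brenner–Monsky ring, which carries the universal solution of the two equations of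
`IsForcingSolution`. -/
abbrev ForcingRing {K : Type*} [CommRing K] (t : K) : Type _ :=
  MvPolynomial (Fin 6) K ⧸ forcingIdeal t

variable {K T : Type*} [CommRing K] [CommRing T] {t : K}

lemma isForcingSolution_mk (t : K) :
    IsForcingSolution (Ideal.Quotient.mk (forcingIdeal t) (C t))
      (Ideal.Quotient.mk (forcingIdeal t) (X 0)) (Ideal.Quotient.mk (forcingIdeal t) (X 1))
      (Ideal.Quotient.mk (forcingIdeal t) (X 2)) (Ideal.Quotient.mk (forcingIdeal t) (X 3))
      (Ideal.Quotient.mk (forcingIdeal t) (X 4)) (Ideal.Quotient.mk (forcingIdeal t) (X 5)) where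
  root := by
    simpa [IsQuarticRoot] using (Ideal.Quotient.eq_zero_iff_mem (I := forcingIdeal t)).2
      (Ideal.subset_span (Set.mem_insert _ _))
  forcing := by
    have h := (Ideal.Quotient.eq_zero_iff_mem (I := forcingIdeal t)).2
      (Ideal.subset_span (Set.mem_insert_of_mem _ rfl))
    simp only [map_sub, map_mul, map_pow] at h
    linear_combination h

/-- The homomorphism out of the Brenner–Monsky ring given by a solution of its two equations. -/
noncomputable def forcingHom (f : K →+* T) {x y z u v w : T}
    (h : IsForcingSolution (f t) x y z u v w) : ForcingRing t →+* T :=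
  Ideal.Quotient.lift (forcingIdeal t) (eval₂Hom f ![x, y, z, u, v, w]) fun p hp => by
    suffices forcingIdeal t ≤ RingHom.ker (eval₂Hom f ![x, y, z, u, v, w]) from this hp
    have hroot : z ^ 4 + x * y * z ^ 2 + x ^ 3 * z + y ^ 3 * z + f t * x ^ 2 * y ^ 2 = 0 := h.root
    refine Ideal.span_le.2 ?_
    rintro _ (rfl | rfl)
    · simpa [RingHom.mem_ker] using hroot
    · simp [RingHom.mem_ker, h.forcing, sub_sub]

lemma forcingHom_mk (f : K →+* T) {x y z u v w : T} (h : IsForcingSolution (f t) x y z u v w)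
    (p : MvPolynomial (Fin 6) K) :
    forcingHom f h (Ideal.Quotient.mk _ p) = eval₂Hom f ![x, y, z, u, v, w] p :=
  rfl

lemma span_forcingRing_ne_top [Nontrivial K] (t : K) :
    Ideal.span (Set.range ![Ideal.Quotient.mk (forcingIdeal t) (X 0),
      Ideal.Quotient.mk (forcingIdeal t) (X 1)]) ≠ ⊤ := by
  let χ := forcingHom (RingHom.id K)
    (show IsForcingSolution t 0 0 0 0 0 0 from ⟨by simp [IsQuarticRoot], by simp⟩)
  refine ne_top_of_le_ne_top (RingHom.ker_ne_top χ) (Ideal.span_le.2 ?_)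
  rintro _ ⟨i, rfl⟩
  fin_cases i <;> simp [χ, RingHom.mem_ker, forcingHom_mk]

end ForcingRing

section QuarticPoly

variable {K : Type*} [CommRing K] (t : K)

/-- The quartic of `IsQuarticRoot` over `K[x, y]`, as a polynomial in `z`. -/
noncomputable def quarticPoly : Polynomial (BinaryPoly K) :=
  Polynomial.X ^ 4 + (Polynomial.C (X 0 * X 1) * Polynomial.X ^ 2 + Polynomial.C cubeSum *
    Polynomial.X + Polynomial.C (C t * X 0 ^ 2 * X 1 ^ 2))

lemma degree_quarticPoly_tail_lt :
    (Polynomial.C (X 0 * X 1) * Polynomial.X ^ 2 + Polynomial.C cubeSum * Polynomial.X +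
      Polynomial.C (C t * X 0 ^ 2 * X 1 ^ 2) : Polynomial (BinaryPoly K)).degree < 4 :=
  Polynomial.degree_quadratic_le.trans_lt (by norm_num)

lemma quarticPoly_monic : (quarticPoly t).Monic :=
  Polynomial.monic_X_pow_add (degree_quarticPoly_tail_lt t)

lemma natDegree_quarticPoly [Nontrivial K] : (quarticPoly t).natDegree = 4 := by
  rw [quarticPoly, Polynomial.natDegree_add_eq_left_of_degree_lt, Polynomial.natDegree_X_pow]
  exact (degree_quarticPoly_tail_lt t).trans_eq (Polynomial.degree_X_pow 4).symm

lemma eval₂_quarticPoly {A : Type*} [CommRing A] (F : BinaryPoly K →+* A) (z : A) :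
    (quarticPoly t).eval₂ F z = z ^ 4 + F (X 0) * F (X 1) * z ^ 2 + F (X 0) ^ 3 * z +
      F (X 1) ^ 3 * z + F (C t) * F (X 0) ^ 2 * F (X 1) ^ 2 := by
  simp only [quarticPoly, cubeSum, Polynomial.eval₂_add, Polynomial.eval₂_mul,
    Polynomial.eval₂_pow, Polynomial.eval₂_X, Polynomial.eval₂_C, map_mul, map_pow, map_add]
  ring

end QuarticPoly

section QuarticRing

variable {K : Type*} [Field K] (t : K)

/-- `K[x, y, z]` modulo the quartic of `IsQuarticRoot`. -/
abbrev QuarticRing : Type _ := AdjoinRoot (quarticPoly t)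

instance : Module.Free (BinaryPoly K) (QuarticRing t) :=
  (quarticPoly_monic t).free_adjoinRoot

instance : Module.Finite (BinaryPoly K) (QuarticRing t) :=
  (quarticPoly_monic t).finite_adjoinRoot

instance : Nontrivial (QuarticRing t) :=
  AdjoinRoot.nontrivial _ (by
    simp [Polynomial.degree_eq_natDegree (quarticPoly_monic t).ne_zero, natDegree_quarticPoly])

instance [CharP K 2] : CharP (QuarticRing t) 2 :=
  charP_of_injective_algebraMap (algebraMap K (QuarticRing t)).injective 2

lemma isQuarticRoot_root : IsQuarticRoot (algebraMap (BinaryPoly K) (QuarticRing t) (C t))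
    (algebraMap (BinaryPoly K) (QuarticRing t) (X 0))
    (algebraMap (BinaryPoly K) (QuarticRing t) (X 1)) (AdjoinRoot.root (quarticPoly t)) := by
  rw [IsQuarticRoot, AdjoinRoot.algebraMap_eq, ← eval₂_quarticPoly, AdjoinRoot.eval₂_root]

lemma algebraMap_quarticRing_away_injective :
    Function.Injective (algebraMap (QuarticRing t)
      (Localization.Away (algebraMap (BinaryPoly K) (QuarticRing t) (X 0)))) := by
  refine IsLocalization.injective _ (M := Submonoid.powers (algebraMap (BinaryPoly K)
    (QuarticRing t) (X 0))) (Submonoid.powers_le.2 (mem_nonZeroDivisors_iff_right.2 fun b hb => ?_))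
  rw [mul_comm, ← Algebra.smul_def] at hb
  exact (smul_eq_zero.1 hb).resolve_left (X_ne_zero 0)

end QuarticRing

section QSequence

variable {K B T : Type*} [CommRing B] [CharP B 2] [CommRing T] [CharP T 2] [Algebra B T]

/-- The `2ʲ`-th Frobenius power of the equations has a solution with denominator `x` only. -/
lemma exists_frobenius_twisted_hom [Field K] [CharP K 2] [Algebra (BinaryPoly K) B]
    [Algebra (BinaryPoly K) T] [IsScalarTower (BinaryPoly K) B T] {t : K} {z : B}
    (ht : ∀ n, 2 ≤ n → critOrbit t n ≠ 0)
    (hz : IsQuarticRoot (algebraMap (BinaryPoly K) B (C t)) (algebraMap (BinaryPoly K) B (X 0))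
      (algebraMap (BinaryPoly K) B (X 1)) z)
    (hx : IsUnit (algebraMap (BinaryPoly K) T (X 0))) (j : ℕ) :
    ∃ χ : ForcingRing t →+* T,
      χ (Ideal.Quotient.mk _ (X 0)) = algebraMap (BinaryPoly K) T (X 0) ^ 2 ^ j ∧
      χ (Ideal.Quotient.mk _ (X 1)) = algebraMap (BinaryPoly K) T (X 1) ^ 2 ^ j ∧
      (∀ c, χ (Ideal.Quotient.mk _ (C c)) ∈ (1 : Submodule B T)) ∧
      ∀ i, (X 0 : BinaryPoly K) • χ (Ideal.Quotient.mk _ (X i)) ∈ (1 : Submodule B T) := by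
  obtain ⟨u, v, w, h⟩ := hz.exists_forcing_cofactors ht j
  obtain ⟨r, hr⟩ := hx.exists_right_inv
  have hroot := (hz.map (algebraMap B T)).map (iterateFrobenius T 2 j)
  have hforcing := congrArg (algebraMap B T) h
  simp only [iterateFrobenius_def, map_add, map_mul, map_pow, ← IsScalarTower.algebraMap_apply]
    at hroot hforcing
  let f := (iterateFrobenius T 2 j).comp ((algebraMap (BinaryPoly K) T).comp C)
  let χ := forcingHom f (show IsForcingSolution (f t) (algebraMap (BinaryPoly K) T (X 0) ^ 2 ^ j)
    (algebraMap (BinaryPoly K) T (X 1) ^ 2 ^ j) (algebraMap B T z ^ 2 ^ j)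
    (algebraMap B T u * r) (algebraMap B T v * r) (algebraMap B T w * r) from
    ⟨hroot, by
      simp only [mul_pow, pow_add 2 j 2, pow_mul] at hforcing
      linear_combination r * hforcing - (algebraMap (BinaryPoly K) T (X 0) ^ 2 ^ j) ^ 3 *
        (algebraMap (BinaryPoly K) T (X 1) ^ 2 ^ j) ^ 3 * hr⟩)
  refine ⟨χ, by simp [χ, forcingHom_mk], by simp [χ, forcingHom_mk], fun c => ?_, fun i => ?_⟩
  · exact Submodule.mem_one.2 ⟨algebraMap (BinaryPoly K) B (C c) ^ 2 ^ j, by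
      simp [χ, f, forcingHom_mk, iterateFrobenius_def, ← IsScalarTower.algebraMap_apply]⟩
  · have hcancel : ∀ b : B, algebraMap (BinaryPoly K) T (X 0) * (algebraMap B T b * r) =
        algebraMap B T b := fun b => by rw [mul_left_comm, hr, mul_one]
    have hmem (b : B) {τ : T} (h : algebraMap B T b = τ) : τ ∈ (1 : Submodule B T) :=
      Submodule.mem_one.2 ⟨b, h⟩
    rw [Algebra.smul_def]
    fin_cases i
    · exact hmem (algebraMap (BinaryPoly K) B (X 0) * algebraMap (BinaryPoly K) B (X 0) ^ 2 ^ j)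
        (by simp [χ, forcingHom_mk, ← IsScalarTower.algebraMap_apply])
    · exact hmem (algebraMap (BinaryPoly K) B (X 0) * algebraMap (BinaryPoly K) B (X 1) ^ 2 ^ j)
        (by simp [χ, forcingHom_mk, ← IsScalarTower.algebraMap_apply])
    · exact hmem (algebraMap (BinaryPoly K) B (X 0) * z ^ 2 ^ j)
        (by simp [χ, forcingHom_mk, ← IsScalarTower.algebraMap_apply])
    · exact hmem u (by simp [χ, forcingHom_mk, hcancel])
    · exact hmem v (by simp [χ, forcingHom_mk, hcancel])
    · exact hmem w (by simp [χ, forcingHom_mk, hcancel])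

end QSequence

theorem isQSequence_forcingRing {K : Type u} [Field K] [CharP K 2] {t : K}
    (ht : ∀ n, 2 ≤ n → critOrbit t n ≠ 0) :
    IsQSequence ![Ideal.Quotient.mk (forcingIdeal t) (X 0),
      Ideal.Quotient.mk (forcingIdeal t) (X 1)] := by
  let T := Localization.Away (algebraMap (BinaryPoly K) (QuarticRing t) (X 0))
  have hinj : Function.Injective (algebraMap (QuarticRing t) T) :=
    algebraMap_quarticRing_away_injective t
  have : CharP T 2 := charP_of_injective_algebraMap hinj 2
  have hx : IsUnit (algebraMap (BinaryPoly K) T (X 0)) := by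
    rw [IsScalarTower.algebraMap_apply (BinaryPoly K) (QuarticRing t) T]
    exact IsLocalization.Away.algebraMap_isUnit _
  choose χ hχx hχy hχC hχX using
    exists_frobenius_twisted_hom (T := T) ht (isQuarticRoot_root t) hx
  have hχ : ∀ r, EventuallyMem (X 0 : BinaryPoly K)
      (fun _ => (1 : Submodule (QuarticRing t) T)) fun j => χ j r := by
    intro r
    obtain ⟨p, rfl⟩ := Ideal.Quotient.mk_surjective r
    exact eventuallyMem_one_mvPolynomial (χ := fun j => (χ j).comp (Ideal.Quotient.mk _))
      (fun c => .of_mem fun j => hχC j c)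
      (fun i => .of_pow_smul_mem 1 fun j => by simpa using hχX j i) p
  refine ⟨span_forcingRing_ne_top t, fun n _ => le_sInf ?_⟩
  rintro _ ⟨h, rfl, H⟩
  obtain ⟨I, hI₀, hI₁, hI⟩ := exists_ideal_chain_of_hasQLFiltration H
  refine mod_cast sq_le_of_chain (Module.Free.chooseBasis (BinaryPoly K) (QuarticRing t)) hinj
    (q := fun j => 2 ^ j) (fun c => ⟨c, Nat.lt_two_pow_self⟩) hχx hχy hχ (n := n) (h := h) (I := I)
    ?_ ?_ ?_
  · rw [hI₀, Ideal.span_le]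
    rintro _ ⟨i, rfl⟩
    fin_cases i <;> exact Ideal.subset_span (by simp)
  · intro i hi
    obtain ⟨μ, hμ, hJ⟩ := hI i hi
    exact ⟨μ, hμ.le, hJ _ (Ideal.subset_span ⟨0, rfl⟩), hJ _ (Ideal.subset_span ⟨1, rfl⟩)⟩
  · rw [hI₁]; exact Submodule.mem_top

section FiniteExtensions

lemma exists_smul_mem_range_of_finite (A D : Type*) [CommRing A] [IsDomain A] [AddCommGroup D]
    [Module A D] [Module.Finite A D] :
    ∃ (c : A) (ι : Type) (f : (ι →₀ A) →ₗ[A] D),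
      c ≠ 0 ∧ Function.Injective f ∧ ∀ d, c • d ∈ LinearMap.range f := by
  obtain ⟨n, s, hs⟩ := Module.Finite.exists_fin (R := A) (M := D)
  obtain ⟨I, hI, hmax⟩ := exists_maximal_linearIndepOn A s
  have hmem : ∀ i, ∃ a : A, a ≠ 0 ∧ a • s i ∈ Submodule.span A (s '' I) := fun i => by
    by_cases hi : i ∈ I
    · exact ⟨1, one_ne_zero, by rw [one_smul]; exact Submodule.subset_span ⟨i, hi, rfl⟩⟩
    · exact hmax i hi
  choose a ha0 ha using hmem
  refine ⟨∏ i, a i, I, Finsupp.linearCombination A (fun i : I => s i),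
    Finset.prod_ne_zero_iff.2 fun i _ => ha0 i, hI, fun d => ?_⟩
  rw [Finsupp.range_linearCombination, ← Set.image_eq_range]
  have hd : d ∈ Submodule.span A (Set.range s) := hs ▸ Submodule.mem_top
  induction hd using Submodule.span_induction with
  | mem x hx =>
    obtain ⟨i, rfl⟩ := hx
    rw [← Finset.prod_erase_mul _ _ (Finset.mem_univ i), mul_smul]
    exact Submodule.smul_mem _ _ (ha i)
  | zero => simp
  | add x y _ _ hx hy => rw [smul_add]; exact Submodule.add_mem _ hx hy
  | smul r x _ hx => rw [smul_comm]; exact Submodule.smul_mem _ _ hx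

-- Coprimality in `A` passes to a finite `A`-module up to one denominator, uniformly in `x` and `y`.
lemma exists_smul_eq_smul_of_finite (A D : Type*) [CommRing A] [IsDomain A] [AddCommGroup D]
    [Module A D] [Module.Finite A D] :
    ∃ c : A, c ≠ 0 ∧ ∀ x y : A, (∀ a b : A, x * a = y * b → y ∣ a) →
      ∀ a b : D, x • a = y • b → ∃ e : D, c • a = y • e := by
  obtain ⟨c, ι, f, hc, hf, hcf⟩ := exists_smul_mem_range_of_finite A D
  refine ⟨c, hc, fun x y hxy a b hab => ?_⟩
  obtain ⟨v, hv⟩ := hcf a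
  obtain ⟨w, hw⟩ := hcf b
  have hvw : x • v = y • w := hf <| by rw [map_smul, map_smul, hv, hw, smul_comm, hab, smul_comm]
  have hdvd : ∀ i, ∃ e, v i = y * e ∧ (v i = 0 → e = 0) := fun i => by
    by_cases hi : v i = 0
    · exact ⟨0, by rw [hi, mul_zero], fun _ => rfl⟩
    · obtain ⟨e, he⟩ := hxy (v i) (w i) (by simpa using DFunLike.congr_fun hvw i)
      exact ⟨e, he, fun h => absurd h hi⟩
  choose e he he0 using hdvd
  refine ⟨f (Finsupp.onFinset v.support e fun i hi =>
    Finsupp.mem_support_iff.2 fun h => hi (he0 i h)), ?_⟩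
  rw [← hv, ← map_smul]
  congr 1
  ext i
  simpa using he i

lemma exists_pow_two_pow_eq_sum {R E : Type*} [CommRing R] [CommRing E] [IsDomain E] [Algebra R E]
    (N : Submodule R E) [IsNoetherian R N] {c b : E} (hc : c ≠ 0)
    (h : ∀ j : ℕ, c * b ^ 2 ^ j ∈ N) :
    ∃ (e : ℕ) (r : ℕ → R), b ^ 2 ^ e = ∑ j ∈ Finset.range e, r j • b ^ 2 ^ j := by
  let y : ℕ → N := fun j => ⟨_, h j⟩
  let spans : ℕ →o Submodule R N := ⟨fun e => Submodule.span R (y '' (Finset.range e : Set ℕ)),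
    fun a b hab => Submodule.span_mono (Set.image_mono (by simpa using Finset.range_mono hab))⟩
  obtain ⟨e, he⟩ := monotone_stabilizes_iff_noetherian.2 ‹IsNoetherian R N› spans
  have hmem : y e ∈ spans (e + 1) := Submodule.subset_span ⟨e, by simp, rfl⟩
  rw [← he (e + 1) (by omega)] at hmem
  obtain ⟨r, hr⟩ := (Submodule.mem_span_image_finset_iff_exists_fun' R).1 hmem
  refine ⟨e, r, mul_left_cancel₀ hc ?_⟩
  rw [Finset.mul_sum]
  simpa [y] using (congrArg Subtype.val hr).symm

lemma isIntegral_of_pow_two_pow_eq_sum {R E : Type*} [CommRing R] [CommRing E] [Algebra R E]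
    {b : E} {e : ℕ} {r : ℕ → R} (h : b ^ 2 ^ e = ∑ j ∈ Finset.range e, r j • b ^ 2 ^ j) :
    IsIntegral R b := by
  refine ⟨Polynomial.X ^ 2 ^ e
    - ∑ j ∈ Finset.range e, Polynomial.C (r j) * Polynomial.X ^ 2 ^ j, ?_, ?_⟩
  · refine Polynomial.monic_X_pow_sub ((Polynomial.degree_sum_le _ _).trans_lt ?_)
    refine (Finset.sup_lt_iff (WithBot.bot_lt_coe _)).2 fun j hj => ?_
    refine (Polynomial.degree_C_mul_X_pow_le _ _).trans_lt ?_
    exact_mod_cast Nat.pow_lt_pow_right one_lt_two (Finset.mem_range.1 hj)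
  · simp [Polynomial.eval₂_finsetSum, h, Algebra.smul_def]

lemma monomial_mem_span_C_image {A D : Type*} [CommRing A] [CommRing D] [Algebra A D]
    {𝔞 : Ideal A} [Algebra (reesAlgebra 𝔞) (Polynomial D)]
    (hsmul : ∀ (r : reesAlgebra 𝔞) (p : Polynomial D),
      r • p = (r : Polynomial A).map (algebraMap A D) * p)
    {s : Set D} (hs : Submodule.span A s = ⊤) {n : ℕ} {e : D}
    (he : e ∈ 𝔞.map (algebraMap A D) ^ n) :
    Polynomial.monomial n e ∈ Submodule.span (reesAlgebra 𝔞) (Polynomial.C '' s) := by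
  set N := Submodule.span (reesAlgebra 𝔞) (Polynomial.C '' s) with hN
  rw [← Ideal.map_pow, Ideal.map] at he
  suffices ∀ d, Polynomial.monomial n (d * e) ∈ N by simpa using this 1
  induction he using Submodule.span_induction with
  | mem e he =>
    obtain ⟨a, ha, rfl⟩ := he
    intro d
    let a' : reesAlgebra 𝔞 := ⟨Polynomial.monomial n a, reesAlgebra.monomial_mem.2 ha⟩
    have hC : ∀ d, Polynomial.C d ∈ N := fun d => by
      have hd : d ∈ Submodule.span A s := hs ▸ Submodule.mem_top
      induction hd using Submodule.span_induction with
      | mem d hd => exact Submodule.subset_span ⟨d, hd, rfl⟩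
      | zero => simp
      | add x y _ _ hx hy => rw [map_add]; exact Submodule.add_mem _ hx hy
      | smul r x _ hx =>
        have hr : Polynomial.C (r • x) = algebraMap A (reesAlgebra 𝔞) r • Polynomial.C x := by
          rw [hsmul, Algebra.smul_def]
          simp
        exact hr ▸ Submodule.smul_mem _ _ hx
    have hd : Polynomial.monomial n (d * algebraMap A D a) = a' • Polynomial.C d := by
      rw [hsmul]
      simp [a', mul_comm]
    exact hd ▸ Submodule.smul_mem _ _ (hC d)
  | zero => simp
  | add x y _ _ hx hy => intro d; rw [mul_add, map_add]; exact Submodule.add_mem _ (hx d) (hy d)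
  | smul r x _ hx => intro d; rw [smul_eq_mul, ← mul_assoc]; exact hx _

-- The elements `c * (b T²) ^ 2 ^ j` lie in the extended Rees algebra, a finite module over the Rees
-- algebra of `𝔞`; the relation obtained there by Noetherianity is read off in degree `2 * 2 ^ e`.
lemma exists_pow_two_pow_eq_sum_of_mem_pow {A D : Type*} [CommRing A] [IsNoetherianRing A]
    [CommRing D] [IsDomain D] [Algebra A D] [Module.Finite A D] (𝔞 : Ideal A) {c b : D}
    (hc : c ≠ 0) (h : ∀ j : ℕ, c * b ^ 2 ^ j ∈ 𝔞.map (algebraMap A D) ^ (2 * 2 ^ j)) :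
    ∃ (e : ℕ) (s : ℕ → A), (∀ j < e, s j ∈ 𝔞 ^ (2 * (2 ^ e - 2 ^ j))) ∧
      b ^ 2 ^ e = ∑ j ∈ Finset.range e, algebraMap A D (s j) * b ^ 2 ^ j := by
  let ψ : reesAlgebra 𝔞 →+* Polynomial D :=
    (Polynomial.mapRingHom (algebraMap A D)).comp (reesAlgebra 𝔞).val.toRingHom
  let : Algebra (reesAlgebra 𝔞) (Polynomial D) := ψ.toAlgebra
  have hsmul : ∀ (r : reesAlgebra 𝔞) (p : Polynomial D),
    r • p = (r : Polynomial A).map (algebraMap A D) * p := fun r p => rfl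
  obtain ⟨s, hs⟩ := (Module.finite_def (R := A) (M := D)).1 inferInstance
  let N := Submodule.span (reesAlgebra 𝔞) (Polynomial.C '' (s : Set D))
  have : IsNoetherian (reesAlgebra 𝔞) N :=
    isNoetherian_of_fg_of_noetherian N (Submodule.fg_span (s.finite_toSet.image _))
  obtain ⟨e, r, hr⟩ := exists_pow_two_pow_eq_sum N (c := Polynomial.C c)
    (b := Polynomial.monomial 2 b) (by simpa using hc) fun j => by
      rw [Polynomial.monomial_pow, Polynomial.C_mul_monomial]
      exact monomial_mem_span_C_image hsmul hs (h j)
  refine ⟨e, fun j => (r j : Polynomial A).coeff (2 * (2 ^ e - 2 ^ j)),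
    fun j _ => (mem_reesAlgebra_iff _ _).1 (r j).2 _, ?_⟩
  have hcoeff := congrArg (fun p => Polynomial.coeff p (2 * 2 ^ e)) hr
  simp only [Polynomial.monomial_pow, Polynomial.coeff_monomial_same, Polynomial.finsetSum_coeff,
    hsmul] at hcoeff
  rw [hcoeff]
  refine Finset.sum_congr rfl fun j hj => ?_
  have hle : (2 : ℕ) ^ j ≤ 2 ^ e := Nat.pow_le_pow_right two_pos (Finset.mem_range.1 hj).le
  rw [show 2 * 2 ^ e = 2 * (2 ^ e - 2 ^ j) + 2 * 2 ^ j by omega, Polynomial.coeff_mul_monomial,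
    Polynomial.coeff_map]

end FiniteExtensions

section MembershipInPowers

lemma IsForm.map_mem_pow {k D : Type*} [CommRing k] [CommRing D] {F : BinaryPoly k →+* D}
    {I : Ideal D} (hI : ∀ i, F (X i) ∈ I) {p : BinaryPoly k} {d : ℤ} (h : IsForm p d) {n : ℕ}
    (hn : n ≤ d) : F p ∈ I ^ n := by
  rw [eq_sum_coeff_mul_X_pow p, map_sum]
  refine Ideal.sum_mem _ fun m hm => ?_
  have hdeg := isForm_iff.1 h m (mem_support_iff.1 hm)
  rw [map_mul, map_mul, map_pow, map_pow, mul_assoc]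
  refine Ideal.mul_mem_left _ _ (Ideal.pow_le_pow_right (n := m 0 + m 1) (by omega) ?_)
  rw [pow_add]
  exact Ideal.mul_mem_mul (Ideal.pow_mem_pow (hI 0) _) (Ideal.pow_mem_pow (hI 1) _)

lemma SyzygyPair.exists_form_quotients {k : Type*} [Field k] [CharP k 2] {t κ : k} {j : ℕ}
    (S : SyzygyPair t j κ) :
    ∃ α₁ β₁ α₂ β₂ μ ν : BinaryPoly k, IsForm μ (2 * 2 ^ j + 3) ∧ IsForm ν (2 * 2 ^ j) ∧
      (X 0 ^ 3 * X 1 ^ 3) ^ 2 ^ j * cubeSum * S.r₁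
        = α₁ * X 0 ^ 2 ^ (j + 2) + β₁ * X 1 ^ 2 ^ (j + 2) ∧
      (X 0 ^ 3 * X 1 ^ 3) ^ 2 ^ j * cubeSum * S.r₂
        = α₂ * X 0 ^ 2 ^ (j + 2) + β₂ * X 1 ^ 2 ^ (j + 2) ∧
      α₁ * S.a₂ + α₂ * S.a₁ = X 1 ^ 2 ^ (j + 2) * μ ∧
      α₁ * S.r₂ + α₂ * S.r₁ = X 1 ^ 2 ^ (j + 2) * ν := by
  have h2 : (2 : BinaryPoly k) = 0 := CharTwo.two_eq_zero
  have hQ : (2 : ℤ) ^ (j + 2) = 4 * 2 ^ j := by ring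
  set H : BinaryPoly k := (X 0 ^ 3 * X 1 ^ 3) ^ 2 ^ j * cubeSum
  have hH : IsForm H (6 * 2 ^ j + 3) :=
    (((IsForm.X_pow 0 3).mul (IsForm.X_pow 1 3) rfl).pow (2 ^ j) rfl).mul
      IsBiform.cubeSum.isForm (by push_cast; ring)
  obtain ⟨α₁, β₁, hα₁, -, h₁⟩ := (hH.mul S.biform_r₁.isForm rfl).exists_eq_mul_X_pow_add
    (2 ^ (j + 2)) (2 ^ (j + 2)) (by push_cast [hQ]; linarith)
  obtain ⟨α₂, β₂, hα₂, -, h₂⟩ := (hH.mul S.biform_r₂.isForm rfl).exists_eq_mul_X_pow_add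
    (2 ^ (j + 2)) (2 ^ (j + 2)) (by push_cast [hQ]; linarith)
  have hdet := S.det
  set Q := 2 ^ (j + 2) with hQdef
  have hQZ : (Q : ℤ) = 4 * 2 ^ j := by rw [hQdef]; push_cast; exact hQ
  obtain ⟨ν, hν, -⟩ := exists_of_X_pow_mul_eq (m := Q) (n := Q)
    (a := α₁ * S.r₂ + α₂ * S.r₁) (b := β₁ * S.r₂ + β₂ * S.r₁) (by
      linear_combination -S.r₁ * h₂ - S.r₂ * h₁
        + (H * S.r₁ * S.r₂ - X 1 ^ Q * (β₁ * S.r₂ + β₂ * S.r₁)) * h2)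
  obtain ⟨μ, hμ, -⟩ := exists_of_X_pow_mul_eq (m := Q) (n := Q)
    (a := α₁ * S.a₂ + α₂ * S.a₁) (b := H * C κ + β₁ * S.a₂ + β₂ * S.a₁) (by
      linear_combination -S.a₁ * h₂ - S.a₂ * h₁ + H * hdet
        - X 1 ^ Q * (β₁ * S.a₂ + β₂ * S.a₁) * h2)
  obtain ⟨ν', hν', hνd⟩ := exists_eq_mul_isWeightedHomogeneous _
    ((hα₁.mul S.biform_r₂.isForm (D := 6 * 2 ^ j) (by rw [hQZ]; ring)).add
      (hα₂.mul S.biform_r₁.isForm (by rw [hQZ]; ring))) (IsForm.X_pow 1 Q) ⟨ν, hν⟩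
  obtain ⟨μ', hμ', hμd⟩ := exists_eq_mul_isWeightedHomogeneous _
    ((hα₁.mul S.biform_a₂.isForm (D := 6 * 2 ^ j + 3) (by rw [hQZ]; ring)).add
      (hα₂.mul S.biform_a₁.isForm (by rw [hQZ]; ring))) (IsForm.X_pow 1 Q) ⟨μ, hμ⟩
  exact ⟨α₁, β₁, α₂, β₂, μ', ν', IsForm.cast hμd (by rw [hQZ]; ring),
    IsForm.cast hνd (by rw [hQZ]; ring), h₁, h₂, hμ', hν'⟩

-- The two syzygies turn the forcing equation into two divisibilities by `Y`, up to the denominator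
-- `c`; the determinants of the resulting system then give `w` and `u`.
lemma exists_eq_of_forcing {D : Type*} [CommRing D] [IsDomain D] [CharP D 2]
    {c κ φ h s X Y Z m m' u v w r₁ a₁ b₁ α₁ β₁ r₂ a₂ b₂ α₂ β₂ μ ν : D} (hY : Y ≠ 0)
    (hc : ∀ a b, X * a = Y * b → ∃ e, c * a = Y * e)
    (hroot : s * Z = φ + X * m + Y * m') (hforcing : h = u * X + v * Y + w * Z)
    (hrel₁ : r₁ * φ = a₁ * X + b₁ * Y) (hrel₂ : r₂ * φ = a₂ * X + b₂ * Y)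
    (hh₁ : h * s * r₁ = α₁ * X + β₁ * Y) (hh₂ : h * s * r₂ = α₂ * X + β₂ * Y)
    (hdet : a₁ * r₂ + a₂ * r₁ = κ * Y)
    (hμ : α₁ * a₂ + α₂ * a₁ = Y * μ) (hν : α₁ * r₂ + α₂ * r₁ = Y * ν) :
    ∃ η₁ η₂, c * (κ * w) = c * ν + η₁ * r₂ + η₂ * r₁ ∧
      c * (s * κ * u) = c * (κ * w) * m + c * μ + η₁ * a₂ + η₂ * a₁ := by
  have h2 : (2 : D) = 0 := CharTwo.two_eq_zero
  obtain ⟨η₁, hη₁⟩ := hc (u * s * r₁ + w * (r₁ * m + a₁) + α₁)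
    (v * s * r₁ + w * (r₁ * m' + b₁) + β₁) (by
      linear_combination hh₁ - s * r₁ * hforcing - w * r₁ * hroot - w * hrel₁
        + (α₁ * X - Y * (v * s * r₁ + w * (r₁ * m' + b₁))) * h2)
  obtain ⟨η₂, hη₂⟩ := hc (u * s * r₂ + w * (r₂ * m + a₂) + α₂)
    (v * s * r₂ + w * (r₂ * m' + b₂) + β₂) (by
      linear_combination hh₂ - s * r₂ * hforcing - w * r₂ * hroot - w * hrel₂
        + (α₂ * X - Y * (v * s * r₂ + w * (r₂ * m' + b₂))) * h2)
  refine ⟨η₁, η₂, mul_left_cancel₀ hY ?_, mul_left_cancel₀ hY ?_⟩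
  · linear_combination r₂ * hη₁ + r₁ * hη₂ - c * w * hdet - c * hν
      - (c * Y * ν + c * (u * s * r₁ * r₂ + w * m * r₁ * r₂)) * h2
  · linear_combination a₂ * hη₁ + a₁ * hη₂ - c * (u * s + w * m) * hdet - c * hμ
      - (c * κ * w * m * Y + c * Y * μ + c * w * a₁ * a₂) * h2

section

variable {k D : Type*} [Field k] [CharP k 2] {t : k} [CommRing D] [IsDomain D] [CharP D 2]
  {F : BinaryPoly k →+* D} {I : Ideal D} {z u v w c : D}

lemma IsForcingSolution.exists_syzygy_combination {κ : k} {j : ℕ} (S : SyzygyPair t j κ)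
    (hF : F (X 1) ≠ 0) (h : IsForcingSolution (F (C t)) (F (X 0)) (F (X 1)) z u v w)
    (hc : ∀ a b, F (X 0) ^ 2 ^ (j + 2) * a = F (X 1) ^ 2 ^ (j + 2) * b →
      ∃ e, c * a = F (X 1) ^ 2 ^ (j + 2) * e) :
    ∃ (μ ν : BinaryPoly k) (η₁ η₂ : D), IsForm μ (2 * 2 ^ j + 3) ∧ IsForm ν (2 * 2 ^ j) ∧
      c * (F (C κ) * w ^ 2 ^ j) = c * F ν + η₁ * F S.r₂ + η₂ * F S.r₁ ∧
      c * (F cubeSum * F (C κ) * u ^ 2 ^ j) = c * (F (C κ) * w ^ 2 ^ j) * frobCoeff F z (j + 2)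
        + c * F μ + η₁ * F S.a₂ + η₂ * F S.a₁ := by
  obtain ⟨α₁, β₁, α₂, β₂, μ, ν, hμd, hνd, h₁, h₂, hμ, hν⟩ := S.exists_form_quotients
  have hroot : F cubeSum * z ^ 2 ^ (j + 2) = F (phi t (j + 2))
      + F (X 0) ^ 2 ^ (j + 2) * frobCoeff F z (j + 2)
      + F (X 1) ^ 2 ^ (j + 2) * frobCoeff F z (j + 3) := h.root.cubeSum_mul_pow_two_pow (j + 2)
  have hforcing : (F (X 0) ^ 3 * F (X 1) ^ 3) ^ 2 ^ j = u ^ 2 ^ j * F (X 0) ^ 2 ^ (j + 2)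
      + v ^ 2 ^ j * F (X 1) ^ 2 ^ (j + 2) + w ^ 2 ^ j * z ^ 2 ^ (j + 2) := by
    rw [h.forcing, add_pow_char_pow, add_pow_char_pow, mul_pow, mul_pow, mul_pow,
      show 2 ^ (j + 2) = 4 * 2 ^ j by ring]
    simp only [pow_mul]
  have mapped {p q : BinaryPoly k} (hpq : p = q) : F p = F q := congrArg F hpq
  obtain ⟨η₁, η₂, hw, hu⟩ := exists_eq_of_forcing (pow_ne_zero _ hF) hc hroot hforcing
    (by simpa only [map_add, map_mul, map_pow] using mapped S.rel₁)
    (by simpa only [map_add, map_mul, map_pow] using mapped S.rel₂)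
    (by simpa only [map_add, map_mul, map_pow] using mapped h₁)
    (by simpa only [map_add, map_mul, map_pow] using mapped h₂)
    (by simpa only [map_add, map_mul, map_pow] using mapped S.det)
    (by simpa only [map_add, map_mul, map_pow] using mapped hμ)
    (by simpa only [map_add, map_mul, map_pow] using mapped hν)
  exact ⟨μ, ν, η₁, η₂, hμd, hνd, hw, hu⟩

lemma IsForcingSolution.mul_pow_two_pow_mem (ht : ∀ n, 2 ≤ n → critOrbit t n ≠ 0)
    (hI : ∀ i, F (X i) ∈ I) (hF : F (X 1) ≠ 0)
    (h : IsForcingSolution (F (C t)) (F (X 0)) (F (X 1)) z u v w)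
    (hc : ∀ (Q : ℕ) (a b : D), F (X 0) ^ Q * a = F (X 1) ^ Q * b → ∃ e, c * a = F (X 1) ^ Q * e)
    (j : ℕ) :
    F (X 0) ^ 2 * c * w ^ 2 ^ j ∈ I ^ (2 * 2 ^ j) ∧
      F (X 0) ^ 2 * c * F cubeSum * u ^ 2 ^ j ∈ I ^ (2 * 2 ^ j) := by
  obtain ⟨S⟩ := nonempty_syzygyPair (t := t) j fun n hn _ => ht n hn
  set κ := if j = 0 then 1 else critOrbit t (j + 1)
  have hκ : κ ≠ 0 := by
    unfold κ
    split_ifs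
    · exact one_ne_zero
    · exact ht _ (by omega)
  have hκF : F (C κ⁻¹) * F (C κ) = 1 := by
    rw [← map_mul, ← C_mul, inv_mul_cancel₀ hκ, C_1, map_one]
  obtain ⟨μ, ν, η₁, η₂, hμ, hν, hw, hu⟩ := h.exists_syzygy_combination S hF (hc _)
  have mem_of_form {p : BinaryPoly k} {d : ℤ} (hp : IsForm p d) (hd : 2 * 2 ^ j - 2 ≤ d) :
      F (X 0) ^ 2 * F p ∈ I ^ (2 * 2 ^ j) := by
    rw [← map_pow, ← map_mul]
    exact ((IsForm.X_pow 0 2).mul hp rfl).map_mem_pow hI (by push_cast; linarith)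
  have mem_w : F (X 0) ^ 2 * c * w ^ 2 ^ j ∈ I ^ (2 * 2 ^ j) := by
    have heq : F (X 0) ^ 2 * c * w ^ 2 ^ j = F (C κ⁻¹) * c * (F (X 0) ^ 2 * F ν)
        + F (C κ⁻¹) * η₁ * (F (X 0) ^ 2 * F S.r₂) + F (C κ⁻¹) * η₂ * (F (X 0) ^ 2 * F S.r₁) := by
      linear_combination F (C κ⁻¹) * F (X 0) ^ 2 * hw - F (X 0) ^ 2 * c * w ^ 2 ^ j * hκF
    rw [heq]
    exact add_mem (add_mem (Ideal.mul_mem_left _ _ (mem_of_form hν (by linarith)))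
      (Ideal.mul_mem_left _ _ (mem_of_form S.biform_r₂.isForm (by linarith))))
      (Ideal.mul_mem_left _ _ (mem_of_form S.biform_r₁.isForm le_rfl))
  refine ⟨mem_w, ?_⟩
  have heq : F (X 0) ^ 2 * c * F cubeSum * u ^ 2 ^ j =
      frobCoeff F z (j + 2) * (F (X 0) ^ 2 * c * w ^ 2 ^ j)
        + F (C κ⁻¹) * c * (F (X 0) ^ 2 * F μ) + F (C κ⁻¹) * η₁ * (F (X 0) ^ 2 * F S.a₂)
        + F (C κ⁻¹) * η₂ * (F (X 0) ^ 2 * F S.a₁) := by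
    linear_combination F (C κ⁻¹) * F (X 0) ^ 2 * hu - (F (X 0) ^ 2 * c * F cubeSum * u ^ 2 ^ j
      - frobCoeff F z (j + 2) * (F (X 0) ^ 2 * c * w ^ 2 ^ j)) * hκF
  rw [heq]
  exact add_mem (add_mem (add_mem (Ideal.mul_mem_left _ _ mem_w)
    (Ideal.mul_mem_left _ _ (mem_of_form hμ (by linarith))))
    (Ideal.mul_mem_left _ _ (mem_of_form S.biform_a₂.isForm (by linarith))))
    (Ideal.mul_mem_left _ _ (mem_of_form S.biform_a₁.isForm (by linarith)))

lemma IsForcingSolution.exists_mul_pow_two_pow_mem (ht : ∀ n, 2 ≤ n → critOrbit t n ≠ 0)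
    (hI : ∀ i, F (X i) ∈ I) (hF : Function.Injective F)
    (h : IsForcingSolution (F (C t)) (F (X 0)) (F (X 1)) z u v w) (hc0 : c ≠ 0)
    (hc₁ : ∀ (Q : ℕ) (a b : D), F (X 0) ^ Q * a = F (X 1) ^ Q * b → ∃ e, c * a = F (X 1) ^ Q * e)
    (hc₀ : ∀ (Q : ℕ) (a b : D), F (X 1) ^ Q * a = F (X 0) ^ Q * b → ∃ e, c * a = F (X 0) ^ Q * e) :
    ∃ d : D, d ≠ 0 ∧ ∀ b ∈ ({u, v, w} : Set D), ∀ j : ℕ, d * b ^ 2 ^ j ∈ I ^ (2 * 2 ^ j) := by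
  have hne : ∀ p, p ≠ 0 → F p ≠ 0 := fun p => (map_ne_zero_iff F hF).2
  have h0 := hne _ (X_ne_zero 0)
  have h1 := hne _ (X_ne_zero 1)
  let G : BinaryPoly k →+* D := F.comp (BrennerMonsky.swap : BinaryPoly k →ₐ[k] BinaryPoly k)
  refine ⟨F (X 0) ^ 2 * F (X 1) ^ 2 * c * F cubeSum, by simp [h0, h1, hc0, hne _ cubeSum_ne_zero],
    fun b hb j => ?_⟩
  obtain ⟨mem_w, mem_u⟩ := h.mul_pow_two_pow_mem ht hI h1 hc₁ j
  obtain ⟨-, mem_v⟩ := IsForcingSolution.mul_pow_two_pow_mem (F := G) ht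
    (by simp [G, Fin.forall_fin_two, hI] : ∀ i, G (X i) ∈ I) (by simpa [G] using h0)
    (by simpa [G] using h.swap) (by simpa [G] using hc₀) j
  simp only [G, RingHom.coe_comp, RingHom.coe_coe, Function.comp_apply, swap_X_zero,
    swap_cubeSum] at mem_v
  rcases hb with rfl | rfl | rfl
  · convert Ideal.mul_mem_left _ (F (X 1) ^ 2) mem_u using 1; ring
  · convert Ideal.mul_mem_left _ (F (X 0) ^ 2) mem_v using 1; ring
  · convert Ideal.mul_mem_left _ (F (X 1) ^ 2 * F cubeSum) mem_w using 1; ring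

end

end MembershipInPowers

section GradedIntegrality

variable {k Ω : Type*} [CommRing k] [CommRing Ω] (F : BinaryPoly k →+* Ω)

/-- `b` satisfies an additive equation `b ^ 2 ^ e = ∑ j < e, s j * b ^ 2 ^ j` over `k[x, y]` which
is homogeneous when `b` is given degree `2`. -/
def IsAdditiveRoot (e : ℕ) (b : Ω) : Prop :=
  ∃ s : ℕ → BinaryPoly k, (∀ j < e, IsForm (s j) (2 * (2 ^ e - 2 ^ j))) ∧
    b ^ 2 ^ e = ∑ j ∈ Finset.range e, F (s j) * b ^ 2 ^ j

/-- The homomorphism `k[x, y] → Ω[T]` multiplying the values of `F` on forms of degree `d` by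
`T ^ d`; it records degrees in the ungraded ring `Ω`. -/
noncomputable def gradedMap : BinaryPoly k →+* Polynomial Ω :=
  eval₂Hom (Polynomial.C.comp (F.comp C)) fun i => Polynomial.monomial 1 (F (X i))

/-- `b` satisfies a monic equation over `k[x, y]` which is homogeneous when `b` is given
degree `d`. -/
def IsGradedIntegral (d : ℕ) (b : Ω) : Prop :=
  (gradedMap F).IsIntegralElem (Polynomial.monomial d b)

variable {F}

lemma gradedMap_X (i : Fin 2) : gradedMap F (X i) = Polynomial.monomial 1 (F (X i)) := by
  simp [gradedMap]

lemma gradedMap_C (c : k) : gradedMap F (C c) = Polynomial.C (F (C c)) := by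
  simp [gradedMap]

lemma eval_one_gradedMap (p : BinaryPoly k) : (gradedMap F p).eval 1 = F p := by
  have h : (Polynomial.evalRingHom (1 : Ω)).comp (gradedMap F) = F := by
    refine MvPolynomial.ringHom_ext (fun c => ?_) fun i => ?_
    · simp [gradedMap_C]
    · simp [gradedMap_X]
  exact congrArg (fun f => f p) h

lemma gradedMap_injective (hF : Function.Injective F) : Function.Injective (gradedMap F) := by
  intro p q h
  apply hF
  rw [← eval_one_gradedMap, h, eval_one_gradedMap]

lemma IsForm.gradedMap_eq {p : BinaryPoly k} {d : ℕ} (h : IsForm p d) :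
    gradedMap F p = Polynomial.monomial d (F p) := by
  conv_lhs => rw [eq_sum_coeff_mul_X_pow p]
  conv_rhs => rw [eq_sum_coeff_mul_X_pow p]
  simp only [map_sum]
  refine Finset.sum_congr rfl fun m hm => ?_
  have hdeg : m 0 + m 1 = d := by exact_mod_cast isForm_iff.1 h m (mem_support_iff.1 hm)
  simp only [map_mul, map_pow, gradedMap_C, gradedMap_X, Polynomial.monomial_pow,
    Polynomial.C_mul_monomial, Polynomial.monomial_mul_monomial, one_mul, hdeg]

-- The powers of the fraction `l / x₁ᴹ` have a common denominator.
lemma exists_X_pow_dvd_smul_pow {k D : Type*} [Field k] [CommRing D] [Algebra (BinaryPoly k) D]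
    {l l' : D} (hl : IsIntegral (BinaryPoly k) l) (hl' : IsIntegral (BinaryPoly k) l') {M : ℕ}
    (h : (X 0 ^ M : BinaryPoly k) • l = (X 1 ^ M : BinaryPoly k) • l') :
    ∃ c : BinaryPoly k, c ≠ 0 ∧
      ∀ n : ℕ, algebraMap (BinaryPoly k) D (X 1) ^ (M * n) ∣ c • l ^ n := by
  let N := Algebra.adjoin (BinaryPoly k) {l, l'}
  have : Module.Finite (BinaryPoly k) N := by
    refine Module.Finite.of_fg (N := Subalgebra.toSubmodule N)
      (fg_adjoin_of_finite (Set.toFinite _) ?_)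
    rintro _ (rfl | rfl)
    exacts [hl, hl']
  obtain ⟨c, hc, hcolon⟩ := exists_smul_eq_smul_of_finite (BinaryPoly k) N
  refine ⟨c, hc, fun n => ?_⟩
  let m : N := ⟨l, Algebra.subset_adjoin (Set.mem_insert _ _)⟩
  let m' : N := ⟨l', Algebra.subset_adjoin (Set.mem_insert_of_mem _ rfl)⟩
  have hm : (X 0 ^ M : BinaryPoly k) • m = (X 1 ^ M : BinaryPoly k) • m' := Subtype.ext h
  obtain ⟨e, he⟩ := hcolon (X 0 ^ (M * n)) (X 1 ^ (M * n))
    (fun a b hab => ⟨_, (exists_of_X_pow_mul_eq hab).choose_spec.1⟩) (m ^ n) (m' ^ n)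
    (by rw [pow_mul, pow_mul, ← smul_pow, hm, smul_pow])
  have he' : c • l ^ n = (X 1 ^ (M * n) : BinaryPoly k) • (e : D) := congrArg N.val he
  exact ⟨e, by rw [he', Algebra.smul_def, map_pow]⟩

namespace IsGradedIntegral

variable {a b : Ω} {d d' D : ℕ}

lemma mul (ha : IsGradedIntegral F d a) (hb : IsGradedIntegral F d' b) (hD : d + d' = D) :
    IsGradedIntegral F D (a * b) := by
  subst hD
  simpa only [IsGradedIntegral, Polynomial.monomial_mul_monomial] using
    RingHom.IsIntegralElem.mul (gradedMap F) ha hb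

lemma add (ha : IsGradedIntegral F d a) (hb : IsGradedIntegral F d b) :
    IsGradedIntegral F d (a + b) := by
  simpa only [IsGradedIntegral, map_add] using RingHom.IsIntegralElem.add (gradedMap F) ha hb

lemma pow (ha : IsGradedIntegral F d a) (n : ℕ) (hD : d * n = D) :
    IsGradedIntegral F D (a ^ n) := by
  subst hD
  let := (gradedMap F).toAlgebra
  have h : IsIntegral (BinaryPoly k) (Polynomial.monomial d a ^ n) :=
    IsIntegral.pow (R := BinaryPoly k) ha n
  rwa [Polynomial.monomial_pow] at h

lemma eq_zero_of_pow_mul_eq {k Ω : Type*} [Field k] [CommRing Ω] [IsDomain Ω]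
    {F : BinaryPoly k →+* Ω} (hF : Function.Injective F) {d M : ℕ} (hd : d < M) {l l' : Ω}
    (hl : IsGradedIntegral F d l) (hl' : IsGradedIntegral F d l')
    (h : F (X 0) ^ M * l = F (X 1) ^ M * l') : l = 0 := by
  let := (gradedMap F).toAlgebra
  have hmap (p : BinaryPoly k) : algebraMap (BinaryPoly k) (Polynomial Ω) p = gradedMap F p := rfl
  obtain ⟨c, hc, hdvd⟩ := exists_X_pow_dvd_smul_pow hl hl' (M := M) (by
    simp only [Algebra.smul_def, hmap, map_pow, gradedMap_X, Polynomial.monomial_pow,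
      Polynomial.monomial_mul_monomial, h])
  by_contra hl0
  obtain ⟨n, hn⟩ : ∃ n, n = (gradedMap F c).natDegree + 1 := ⟨_, rfl⟩
  have hc0 : gradedMap F c ≠ 0 := by rwa [Ne, map_eq_zero_iff _ (gradedMap_injective hF)]
  have hpow : Polynomial.monomial d l ^ n ≠ 0 :=
    pow_ne_zero _ ((Polynomial.monomial_eq_zero_iff _ _).not.2 hl0)
  have hX : F (X 1) ≠ 0 := by
    rw [Ne, map_eq_zero_iff _ hF]
    exact X_ne_zero 1
  have hdeg := hdvd n
  rw [Algebra.smul_def, hmap, hmap] at hdeg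
  replace hdeg := Polynomial.natDegree_le_of_dvd hdeg (mul_ne_zero hc0 hpow)
  rw [Polynomial.natDegree_mul hc0 hpow, Polynomial.natDegree_pow, Polynomial.natDegree_pow,
    gradedMap_X, Polynomial.natDegree_monomial_eq _ hl0, Polynomial.natDegree_monomial_eq _ hX]
    at hdeg
  have := Nat.mul_le_mul_left n hd
  linarith

end IsGradedIntegral

lemma IsForm.isGradedIntegral {p : BinaryPoly k} {d : ℕ} (h : IsForm p d) :
    IsGradedIntegral F d (F p) := by
  rw [IsGradedIntegral, ← h.gradedMap_eq]
  exact RingHom.isIntegralElem_map _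

lemma IsAdditiveRoot.isGradedIntegral {e : ℕ} {b : Ω} (h : IsAdditiveRoot F e b) :
    IsGradedIntegral F 2 b := by
  obtain ⟨s, hs, he⟩ := h
  let := (gradedMap F).toAlgebra
  refine isIntegral_of_pow_two_pow_eq_sum (R := BinaryPoly k) (e := e) (r := s) ?_
  rw [Polynomial.monomial_pow, he, map_sum]
  refine Finset.sum_congr rfl fun j hj => ?_
  have hje : 2 ^ j ≤ 2 ^ e := Nat.pow_le_pow_right two_pos (Finset.mem_range.1 hj).le
  have hs' : IsForm (s j) (2 * (2 ^ e - 2 ^ j) : ℕ) :=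
    (hs j (Finset.mem_range.1 hj)).cast (by push_cast [hje]; rfl)
  rw [Algebra.smul_def, RingHom.algebraMap_toAlgebra, hs'.gradedMap_eq, Polynomial.monomial_pow,
    Polynomial.monomial_mul_monomial, ← mul_add, Nat.sub_add_cancel hje]

lemma IsQuarticRoot.isGradedIntegral {k : Type*} [Field k] {F : BinaryPoly k →+* Ω} {t : k} {z : Ω}
    (hz : IsQuarticRoot (F (C t)) (F (X 0)) (F (X 1)) z) : IsGradedIntegral F 1 z := by
  refine ⟨quarticPoly t, quarticPoly_monic t, ?_⟩
  rw [IsQuarticRoot] at hz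
  have h := congrArg (Polynomial.monomial 4) hz
  simp only [map_add, map_zero] at h
  rw [eval₂_quarticPoly, gradedMap_X, gradedMap_X, gradedMap_C, ← h]
  simp [Polynomial.monomial_pow, Polynomial.monomial_mul_monomial, Polynomial.C_mul_monomial]

end GradedIntegrality

section AdditiveRoots

lemma exists_lt_critOrbit_eq_zero {k : Type*} [Field k] [CharP k 2] [Finite k] {t : k} {m : ℕ}
    (hm : ∀ n, 2 ≤ n → n ≤ m + 2 → critOrbit t n ≠ 0) :
    ∃ j, m < j ∧ critOrbit t (j + 2) = 0 ∧ ∀ n, 2 ≤ n → n < j + 2 → critOrbit t n ≠ 0 := by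
  classical
  have hinj : Function.Injective fun c : k => c ^ 2 + t :=
    (add_left_injective t).comp CharTwo.sq_injective
  obtain ⟨p, hp, hperiod⟩ := hinj.mem_periodicPts 0
  have hex : ∃ n, 2 ≤ n ∧ critOrbit t n = 0 := ⟨p * 2, by omega, hperiod.mul_const 2⟩
  obtain ⟨h2, h0⟩ := Nat.find_spec hex
  have hlt : m + 2 < Nat.find hex := lt_of_not_ge fun h => hm _ h2 h h0
  refine ⟨Nat.find hex - 2, by omega, by rwa [Nat.sub_add_cancel h2], fun n hn hn' h => ?_⟩
  exact Nat.find_min hex (by omega) ⟨hn, h⟩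

lemma mem_separableClosure_of_derivative_eq_C {E Ω : Type*} [Field E] [Field Ω] [Algebra E Ω]
    {p : Polynomial E} {a : E} {b : Ω} (ha : a ≠ 0) (hp : p.derivative = Polynomial.C a)
    (hb : p.aeval b = 0) : b ∈ separableClosure E Ω := by
  rw [mem_separableClosure_iff]
  have hsep : p.Separable :=
    ⟨0, Polynomial.C a⁻¹, by rw [hp, zero_mul, zero_add, ← map_mul, inv_mul_cancel₀ ha, map_one]⟩
  exact hsep.of_dvd (minpoly.dvd E b hb)

lemma pow_two_pow_mem_separableClosure {E Ω : Type*} [Field E] [Field Ω] [Algebra E Ω] [CharP E 2]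
    {e : ℕ} {b : Ω} {s : ℕ → E}
    (h : b ^ 2 ^ e = ∑ j ∈ Finset.range e, algebraMap E Ω (s j) * b ^ 2 ^ j) :
    b ^ 2 ^ e ∈ separableClosure E Ω := by
  induction e generalizing b s with
  | zero =>
    rw [h]
    simp
  | succ e ih =>
    by_cases h0 : s 0 = 0
    · have hsq := ih (b := b ^ 2) (s := fun j => s (j + 1)) (by
        simpa only [Finset.sum_range_succ', h0, map_zero, zero_mul, add_zero, ← pow_mul,
          ← pow_succ'] using h)
      rwa [← pow_mul, ← pow_succ'] at hsq
    · refine pow_mem (mem_separableClosure_of_derivative_eq_C (p := Polynomial.X ^ 2 ^ (e + 1) -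
        ∑ j ∈ Finset.range (e + 1), Polynomial.C (s j) * Polynomial.X ^ 2 ^ j)
        (neg_ne_zero.2 h0) ?_ (by simp [h])) _
      have h2 : (2 : E) = 0 := CharTwo.two_eq_zero
      simp [Finset.sum_range_succ', pow_succ, h2, Polynomial.derivative_X_pow]

lemma isSquare_of_sq_eq_algebraMap {E Ω : Type*} [Field E] [Field Ω] [Algebra E Ω] [CharP E 2]
    {a : E} {θ : Ω} (hθ : θ ∈ separableClosure E Ω) (h : θ ^ 2 = algebraMap E Ω a) :
    IsSquare a := by
  have : ExpChar E 2 := .prime Nat.prime_two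
  have hperfect : θ ∈ perfectClosure E Ω :=
    mem_perfectClosure_iff_pow_mem 2 |>.2 ⟨1, a, by rw [pow_one, h]⟩
  have hbot : θ ∈ (⊥ : IntermediateField E Ω) := by
    rw [← separableClosure_inf_perfectClosure]
    exact ⟨hθ, hperfect⟩
  obtain ⟨c, rfl⟩ := IntermediateField.mem_bot.1 hbot
  refine ⟨c, (algebraMap E Ω).injective ?_⟩
  rw [← h, map_mul, sq]

lemma not_isSquare_cubeSum_mul_X {k E : Type*} [Field k] [CharP k 2] [Field E]
    [Algebra (BinaryPoly k) E] [IsFractionRing (BinaryPoly k) E] :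
    ¬ IsSquare (algebraMap (BinaryPoly k) E (cubeSum * X 0)) := by
  rintro ⟨c, hc⟩
  obtain ⟨p, r, hr, rfl⟩ := IsFractionRing.div_surjective (A := BinaryPoly k) c
  have hinj := IsFractionRing.injective (BinaryPoly k) E
  have hr0 : algebraMap (BinaryPoly k) E r ≠ 0 :=
    (map_ne_zero_iff _ hinj).2 (nonZeroDivisors.ne_zero hr)
  have hsq : cubeSum * X 0 * r ^ 2 = p ^ 2 := hinj (by
    rw [map_mul, hc, map_pow, map_pow]
    field_simp)
  have h2 : (2 : BinaryPoly k) = 0 := CharTwo.two_eq_zero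
  have hderiv : X 1 ^ 3 * r ^ 2 = 0 := by
    have h := congrArg (pderiv 0) hsq
    simp only [Derivation.leibniz, Derivation.leibniz_pow, cubeSum, map_add, smul_eq_mul,
      pderiv_X_self, pderiv_X_of_ne one_ne_zero, nsmul_eq_mul, Nat.cast_ofNat, h2] at h
    linear_combination h - 2 * X 0 ^ 3 * r ^ 2 * h2
  rcases mul_eq_zero.1 hderiv with h | h
  · exact pow_ne_zero 3 (X_ne_zero 1) h
  · exact nonZeroDivisors.ne_zero hr (pow_eq_zero_iff two_ne_zero |>.1 h)

lemma IsQuarticRoot.mem_separableClosure {k E Ω : Type*} [Field k] [CharP k 2] [Field E] [Field Ω]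
    [Algebra (BinaryPoly k) E] [FaithfulSMul (BinaryPoly k) E] [Algebra E Ω]
    [Algebra (BinaryPoly k) Ω] [IsScalarTower (BinaryPoly k) E Ω] {t : k} {z : Ω}
    (hz : IsQuarticRoot (algebraMap (BinaryPoly k) Ω (C t)) (algebraMap (BinaryPoly k) Ω (X 0))
      (algebraMap (BinaryPoly k) Ω (X 1)) z) : z ∈ separableClosure E Ω := by
  refine mem_separableClosure_of_derivative_eq_C
    (p := (quarticPoly t).map (algebraMap (BinaryPoly k) E))
    (a := algebraMap (BinaryPoly k) E cubeSum) ?_ ?_ ?_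
  · rw [Ne, FaithfulSMul.algebraMap_eq_zero_iff]
    exact cubeSum_ne_zero
  · have h2 : (2 : BinaryPoly k) = 0 := CharTwo.two_eq_zero
    have h4 : (4 : BinaryPoly k) = 0 := by linear_combination 2 * h2
    have h : (quarticPoly t).derivative = Polynomial.C cubeSum := by
      simp only [quarticPoly, Polynomial.derivative_add, Polynomial.derivative_X_pow,
        Polynomial.derivative_C_mul, Polynomial.derivative_C, Polynomial.derivative_X,
        Nat.cast_ofNat, h2, h4, map_zero]
      ring
    rw [Polynomial.derivative_map, h, Polynomial.map_C]
  · rw [Polynomial.aeval_map_algebraMap, Polynomial.aeval_def, eval₂_quarticPoly]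
    exact hz

lemma IsQuarticRoot.mul_eq_sq {A : Type*} [CommRing A] [CharP A 2] {s x y z : A}
    (hz : IsQuarticRoot (s ^ 2) x y z) :
    (x ^ 3 + y ^ 3) * (y * z ^ 2 + x ^ 2 * z) =
      (x * z ^ 2 + y ^ 2 * z + s * x ^ 2 * y) ^ 2 := by
  have h2 : (2 : A) = 0 := CharTwo.two_eq_zero
  rw [IsQuarticRoot] at hz
  linear_combination x ^ 2 * hz - (x ^ 2 * z ^ 4 + x * y ^ 2 * z ^ 3 + s * x ^ 3 * y * z ^ 2
    + s * x ^ 2 * y ^ 3 * z + s ^ 2 * x ^ 4 * y ^ 2) * h2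

section

variable {k Ω : Type*} [Field k] [CommRing Ω] {t κ : k} {j : ℕ}
  {F : BinaryPoly k →+* Ω} {z u v w : Ω}

/-- The coefficient of `x ^ (4 q)` in `r ^ 2 * cubeSum` times the `q`-th power of the forcing
equation, `q = 2 ^ n / 4`, when `z ^ (4 q)` and `r ^ 2 * phi t n` are expanded in terms of
`x ^ (4 q)` and `y ^ (4 q)`. Here `b` and `w` stand for `q`-th powers of forcing coefficients,
`U` for the coefficient of `r ^ 2 * phi t n` and `α` for that of the monomial `(x y) ^ (3 q)`
times `r ^ 2 * cubeSum`. -/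
noncomputable def forcingDefect (F : BinaryPoly k →+* Ω) (z b w : Ω)
    (r U α : BinaryPoly k) (n : ℕ) : Ω :=
  b * F (cubeSum * r ^ 2) + w * (F (r ^ 2) * frobCoeff F z n + F U) + F α

lemma isGradedIntegral_forcingDefect {b : Ω} {r U α : BinaryPoly k} {d e : ℕ}
    (hz : IsQuarticRoot (F (C t)) (F (X 0)) (F (X 1)) z) (hb : IsGradedIntegral F d b)
    (hw : IsGradedIntegral F d w) (hr : IsForm r e) (hU : IsForm U (2 * e + 3))
    (hα : IsForm α (d + (2 * e + 3))) (n : ℕ) :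
    IsGradedIntegral F (d + (2 * e + 3)) (forcingDefect F z b w r U α n) := by
  have hr2 : IsForm (r ^ 2) (2 * e : ℕ) := hr.pow 2 (by push_cast; ring)
  have hcube : IsForm (cubeSum * r ^ 2) (2 * e + 3 : ℕ) :=
    IsBiform.cubeSum.isForm.mul hr2 (by push_cast; ring)
  have hfrob : IsGradedIntegral F 3 (frobCoeff F z n) :=
    ((IsForm.lin n).cast (D := (1 : ℕ)) (by simp)).isGradedIntegral.mul
        (hz.isGradedIntegral.pow 2 rfl) rfl |>.add <|
      (((IsForm.lin (n + 1)).cast (D := (1 : ℕ)) (by simp)).isGradedIntegral.pow 2 rfl).mul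
        hz.isGradedIntegral rfl
  refine ((hb.mul hcube.isGradedIntegral rfl).add (hw.mul
    ((hr2.isGradedIntegral.mul hfrob rfl).add (IsForm.isGradedIntegral ?_)) rfl)).add
    (IsForm.isGradedIntegral ?_)
  exacts [hU.cast (by push_cast; ring), hα.cast (by push_cast; ring)]

lemma SyzygyPair.monomial_mul_cubeSum_mul_sq [CharP k 2] (S : SyzygyPair t j κ) :
    (X 0 ^ 3 * X 1 ^ 3) ^ (2 * 2 ^ j) * (cubeSum * S.r₁ ^ 2) =
      X 0 ^ (8 * 2 ^ j) * (cubeSum * X 1 ^ (6 * 2 ^ j) * S.u ^ 2 + X 0 * X 1 ^ (8 * 2 ^ j - 2)) +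
      X 1 ^ (8 * 2 ^ j) *
        (cubeSum * X 0 ^ (6 * 2 ^ j) * S.v ^ 2 + X 1 * X 0 ^ (8 * 2 ^ j - 2)) := by
  obtain ⟨q, hq⟩ := Nat.exists_eq_succ_of_ne_zero (Nat.two_pow_pos j).ne'
  have hdecomp := S.decomp
  rw [hq, Nat.succ_sub_one] at hdecomp
  rw [hdecomp, hq, show 8 * q.succ - 2 = 8 * q + 6 by omega, Nat.succ_eq_add_one]
  simp only [CharTwo.add_sq, cubeSum]
  ring

lemma IsForcingSolution.pow_mul_forcingDefect [CharP k 2] [CharP Ω 2]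
    (h : IsForcingSolution (F (C t)) (F (X 0)) (F (X 1)) z u v w) (S : SyzygyPair t j κ)
    {U α α' : BinaryPoly k} (hU : cofactorStep t (j + 2) S.a₁ S.r₁ = cubeSum * U)
    (hα : (X 0 ^ 3 * X 1 ^ 3) ^ (2 * 2 ^ j) * (cubeSum * S.r₁ ^ 2) =
      X 0 ^ (8 * 2 ^ j) * α + X 1 ^ (8 * 2 ^ j) * α') :
    F (X 0) ^ (8 * 2 ^ j) *
        forcingDefect F z (u ^ (2 * 2 ^ j)) (w ^ (2 * 2 ^ j)) S.r₁ U α (j + 3) =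
      F (X 1) ^ (8 * 2 ^ j) *
        forcingDefect F z (v ^ (2 * 2 ^ j)) (w ^ (2 * 2 ^ j)) S.r₁ (swap U) α' (j + 4) := by
  have h2 : (2 : Ω) = 0 := CharTwo.two_eq_zero
  have hq : 2 ^ (j + 3) = 8 * 2 ^ j := by ring
  have hphi : S.r₁ ^ 2 * phi t (j + 3) = U * X 0 ^ (8 * 2 ^ j) + swap U * X 1 ^ (8 * 2 ^ j) := by
    have hrel := sq_mul_cubeSum_mul_phi_succ S.swap_r₁ S.rel₁
    rw [hU, map_mul, swap_cubeSum, hq] at hrel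
    exact mul_left_cancel₀ cubeSum_ne_zero (by linear_combination hrel)
  have hroot := h.root.cubeSum_mul_pow_two_pow (j + 3)
  rw [hq] at hroot
  have hforcing : (F (X 0) ^ 3 * F (X 1) ^ 3) ^ (2 * 2 ^ j) = u ^ (2 * 2 ^ j) *
      F (X 0) ^ (8 * 2 ^ j) + v ^ (2 * 2 ^ j) * F (X 1) ^ (8 * 2 ^ j) +
      w ^ (2 * 2 ^ j) * z ^ (8 * 2 ^ j) := by
    rw [h.forcing, ← pow_succ', add_pow_char_pow, add_pow_char_pow, ← hq]
    simp only [mul_pow, ← pow_mul]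
    ring
  replace hα := congrArg F hα
  replace hphi := congrArg F hphi
  simp only [forcingDefect, map_add, map_mul, map_pow] at hα hphi ⊢
  rw [hforcing] at hα
  linear_combination hα - w ^ (2 * 2 ^ j) * F S.r₁ ^ 2 * hroot - w ^ (2 * 2 ^ j) * hphi +
    (F (X 0) ^ (8 * 2 ^ j) * F α - F (X 1) ^ (8 * 2 ^ j) * (v ^ (2 * 2 ^ j) * F cubeSum *
      F S.r₁ ^ 2 + w ^ (2 * 2 ^ j) * (F S.r₁ ^ 2 * frobCoeff F z (j + 4) + F (swap U)))) * h2

lemma isForm_cubeSum_mul_add {r : BinaryPoly k} {i i' : Fin 2} {q : ℕ} (hq : 1 ≤ q)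
    (hr : IsForm r (q - 2)) :
    IsForm (cubeSum * X i ^ (6 * q) * r ^ 2 + X i' * X i ^ (8 * q - 2)) (8 * q - 1) :=
  .add ((IsBiform.cubeSum.isForm.mul (.X_pow i _) rfl).mul (hr.pow 2 rfl) (by push_cast; ring))
    ((IsForm.X i').mul (.X_pow i _) (by omega))

lemma IsForcingSolution.forcingDefect_eq_zero [CharP k 2] [IsDomain Ω] [CharP Ω 2]
    (hF : Function.Injective F)
    (h : IsForcingSolution (F (C t)) (F (X 0)) (F (X 1)) z u v w) (hu : IsGradedIntegral F 2 u)
    (hv : IsGradedIntegral F 2 v) (hw : IsGradedIntegral F 2 w) (S : SyzygyPair t j κ)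
    {U : BinaryPoly k} (hU : cofactorStep t (j + 2) S.a₁ S.r₁ = cubeSum * U)
    (hU' : IsForm U (4 * 2 ^ j - 1)) :
    forcingDefect F z (u ^ (2 * 2 ^ j)) (w ^ (2 * 2 ^ j)) S.r₁ U
      (cubeSum * X 1 ^ (6 * 2 ^ j) * S.u ^ 2 + X 0 * X 1 ^ (8 * 2 ^ j - 2)) (j + 3) = 0 := by
  obtain ⟨e, he⟩ : ∃ e, 2 * 2 ^ j = e + 2 :=
    ⟨2 * 2 ^ j - 2, (Nat.sub_add_cancel (Nat.le_mul_of_pos_right 2 (Nat.two_pow_pos j))).symm⟩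
  have : (2 * 2 ^ j : ℤ) = e + 2 := by exact_mod_cast he
  have hr : IsForm S.r₁ e := S.biform_r₁.isForm.cast (by linarith)
  have hdegree {b : Ω} {V α : BinaryPoly k} (hb : IsGradedIntegral F 2 b)
      (hV : IsForm V (4 * 2 ^ j - 1)) (hα : IsForm α (8 * (2 ^ j : ℕ) - 1)) (n : ℕ) :
      IsGradedIntegral F (2 * (2 * 2 ^ j) + (2 * e + 3))
        (forcingDefect F z (b ^ (2 * 2 ^ j)) (w ^ (2 * 2 ^ j)) S.r₁ V α n) :=
    isGradedIntegral_forcingDefect h.root (hb.pow _ rfl) (hw.pow _ rfl) hr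
      (hV.cast (by linarith)) (hα.cast (by push_cast; linarith)) n
  exact IsGradedIntegral.eq_zero_of_pow_mul_eq hF (by omega)
    (hdegree hu hU' (isForm_cubeSum_mul_add Nat.one_le_two_pow (S.form_u.cast (by simp))) _)
    (hdegree hv hU'.swap (isForm_cubeSum_mul_add Nat.one_le_two_pow (S.form_v.cast (by simp))) _)
    (h.pow_mul_forcingDefect S hU S.monomial_mul_cubeSum_mul_sq)

-- The coefficients of `u ^ (2 q)` and `w ^ (2 q)` in `cubeSum * forcingDefect` are squares.
lemma exists_sq_eq_of_forcingDefect_eq_zero [CharP Ω 2] {s : k} (M : Subring Ω)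
    (hz : IsQuarticRoot (F (C (s ^ 2))) (F (X 0)) (F (X 1)) z) (hF : ∀ p, F p ∈ M) (hzM : z ∈ M)
    {q n : ℕ} (hq : 1 ≤ q) {a r p U : BinaryPoly k} (hu : u ^ q ∈ M) (hw : w ^ q ∈ M)
    (hU : cofactorStep (s ^ 2) n a r = cubeSum * U)
    (h : forcingDefect F z (u ^ (2 * q)) (w ^ (2 * q)) r U
      (cubeSum * X 1 ^ (6 * q) * p ^ 2 + X 0 * X 1 ^ (8 * q - 2)) (n + 1) = 0) :
    ∃ θ ∈ M, θ ^ 2 = F (cubeSum * X 0) * (F (X 1) ^ (4 * q - 1)) ^ 2 := by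
  have h2 : (2 : Ω) = 0 := CharTwo.two_eq_zero
  refine ⟨u ^ q * F (cubeSum * r) + w ^ q * (F r * (F (lin n) * z ^ 2 + F (lin (n + 1) ^ 2) * z +
      F (C s * lin n ^ 2 * lin (n + 1))) + F (a + C s * X 0 * X 1 * lin n * r)) +
      F (cubeSum * X 1 ^ (3 * q) * p), ?_, ?_⟩
  · have hρ := add_mem (add_mem (mul_mem (hF (lin n)) (pow_mem hzM 2))
      (mul_mem (hF (lin (n + 1) ^ 2)) hzM)) (hF (C s * lin n ^ 2 * lin (n + 1)))
    exact add_mem (add_mem (mul_mem hu (hF _))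
      (mul_mem hw (add_mem (mul_mem (hF _) hρ) (hF _)))) (hF _)
  have hroot : IsQuarticRoot (F (C s) ^ 2) (F (lin n)) (F (lin (n + 1))) z := by
    have h₁ := congrArg F (lin_mul_lin_succ (k := k) n)
    have h₃ := congrArg F (lin_pow_three_add (k := k) n)
    simp only [IsQuarticRoot, cubeSum, map_add, map_mul, map_pow] at hz h₁ h₃ ⊢
    linear_combination hz + (z ^ 2 + F (C s) ^ 2 * (F (lin n) * F (lin (n + 1)) +
      F (X 0) * F (X 1))) * h₁ + z * h₃
  have hsq := hroot.mul_eq_sq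
  have h₃ := congrArg F (lin_pow_three_add (k := k) n)
  replace hU := congrArg F hU
  have hpow : (F (X 1) ^ (4 * q - 1)) ^ 2 = F (X 1) ^ (8 * q - 2) := by
    rw [← pow_mul]
    congr 1
    omega
  rw [hpow]
  simp only [forcingDefect, frobCoeff, cofactorStep, lin_add_two, map_add, map_mul, map_pow,
    mul_pow, CharTwo.add_sq] at h hsq h₃ hU ⊢
  rw [h₃] at hsq
  linear_combination F cubeSum * h + w ^ (2 * q) * hU - w ^ (2 * q) * F r ^ 2 * hsq -
    F cubeSum * F (X 0) * F (X 1) ^ (8 * q - 2) * h2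

end

lemma IsAdditiveRoot.pow_two_pow_mem_separableClosure {k E Ω : Type*} [CommRing k] [Field E]
    [Field Ω] [CharP E 2] [Algebra (BinaryPoly k) E] [Algebra E Ω] [Algebra (BinaryPoly k) Ω]
    [IsScalarTower (BinaryPoly k) E Ω] {e j : ℕ} {b : Ω}
    (h : IsAdditiveRoot (algebraMap (BinaryPoly k) Ω) e b) (hj : e ≤ j) :
    b ^ 2 ^ j ∈ separableClosure E Ω := by
  obtain ⟨s, -, hs⟩ := h
  have he : b ^ 2 ^ e ∈ separableClosure E Ω :=
    BrennerMonsky.pow_two_pow_mem_separableClosure (s := fun i => algebraMap _ E (s i))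
      (by simpa only [← IsScalarTower.algebraMap_apply] using hs)
  rw [← Nat.add_sub_cancel' hj, pow_add, pow_mul]
  exact pow_mem he _

lemma IsForcingSolution.exists_critOrbit_eq_zero_of_isFractionRing {k E Ω : Type*} [Field k]
    [CharP k 2] [Finite k] [Field E] [CharP E 2] [Field Ω] [CharP Ω 2] [Algebra (BinaryPoly k) E]
    [IsFractionRing (BinaryPoly k) E] [Algebra E Ω] [Algebra (BinaryPoly k) Ω]
    [IsScalarTower (BinaryPoly k) E Ω] {t : k} {z u v w : Ω}
    (h : IsForcingSolution (algebraMap (BinaryPoly k) Ω (C t)) (algebraMap (BinaryPoly k) Ω (X 0))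
      (algebraMap (BinaryPoly k) Ω (X 1)) z u v w) {m n l : ℕ}
    (hu : IsAdditiveRoot (algebraMap (BinaryPoly k) Ω) m u)
    (hv : IsAdditiveRoot (algebraMap (BinaryPoly k) Ω) n v)
    (hw : IsAdditiveRoot (algebraMap (BinaryPoly k) Ω) l w) :
    ∃ i, 2 ≤ i ∧ i ≤ max m l + 2 ∧ critOrbit t i = 0 := by
  by_contra! hne
  obtain ⟨j, hj, hj0, hmin⟩ := exists_lt_critOrbit_eq_zero hne
  obtain ⟨S⟩ := nonempty_syzygyPair (t := t) j fun i h₁ h₂ => hmin i h₁ (by omega)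
  obtain ⟨U, hU, hU'⟩ := S.isBiform_cofactorStep₁.exists_eq_cubeSum_mul
    (by simpa [cofactorStep, S.evalOne_a₁, S.evalOne_r₁, critOrbit_succ] using hj0)
  have hF : Function.Injective (algebraMap (BinaryPoly k) Ω) := by
    rw [IsScalarTower.algebraMap_eq _ E]
    exact (algebraMap E Ω).injective.comp (IsFractionRing.injective _ E)
  have hdefect := h.forcingDefect_eq_zero hF hu.isGradedIntegral hv.isGradedIntegral
    hw.isGradedIntegral S hU (hU'.isForm.cast (by ring))
  obtain ⟨s, rfl⟩ : ∃ s, s ^ 2 = t := (bijective_frobenius k 2).surjective t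
  have hFM (p : BinaryPoly k) : algebraMap _ Ω p ∈ separableClosure E Ω := by
    rw [IsScalarTower.algebraMap_apply _ E]
    exact algebraMap_mem _ _
  have : FaithfulSMul (BinaryPoly k) E :=
    (faithfulSMul_iff_algebraMap_injective _ _).2 (IsFractionRing.injective _ E)
  obtain ⟨θ, hθ, hθ2⟩ := exists_sq_eq_of_forcingDefect_eq_zero (separableClosure E Ω).toSubring
    h.root hFM h.root.mem_separableClosure (Nat.one_le_two_pow (n := j))
    (hu.pow_two_pow_mem_separableClosure (by omega))
    (hw.pow_two_pow_mem_separableClosure (by omega)) hU hdefect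
  have hX : algebraMap (BinaryPoly k) Ω (X 1) ≠ 0 := (map_ne_zero_iff _ hF).2 (X_ne_zero 1)
  refine not_isSquare_cubeSum_mul_X (k := k) (E := E) (isSquare_of_sq_eq_algebraMap
    (div_mem hθ (pow_mem (hFM (X 1)) (4 * 2 ^ j - 1))) ?_)
  rw [div_pow, hθ2, mul_div_cancel_right₀ _ (pow_ne_zero _ (pow_ne_zero _ hX))]
  exact IsScalarTower.algebraMap_apply _ E _ _

theorem IsForcingSolution.exists_critOrbit_eq_zero_of_isAdditiveRoot {k Ω : Type*} [Field k]
    [CharP k 2] [Finite k] [Field Ω] [CharP Ω 2] {F : BinaryPoly k →+* Ω}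
    (hF : Function.Injective F) {t : k} {z u v w : Ω}
    (h : IsForcingSolution (F (C t)) (F (X 0)) (F (X 1)) z u v w) {m n l : ℕ}
    (hu : IsAdditiveRoot F m u) (hv : IsAdditiveRoot F n v) (hw : IsAdditiveRoot F l w) :
    ∃ i, 2 ≤ i ∧ i ≤ max m l + 2 ∧ critOrbit t i = 0 := by
  let := F.toAlgebra
  have : FaithfulSMul (BinaryPoly k) Ω := (faithfulSMul_iff_algebraMap_injective _ _).2 hF
  let := FractionRing.liftAlgebra (BinaryPoly k) Ω
  have : CharP (FractionRing (BinaryPoly k)) 2 := IsFractionRing.charP (BinaryPoly k) 2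
  exact exists_critOrbit_eq_zero_of_isFractionRing (E := FractionRing (BinaryPoly k)) h hu hv hw

end AdditiveRoots

section Specialisation

/-- A root of an additive polynomial with coefficients in `P`, whose images under
`ε : P → k[x, y]` are forms of the same degrees as in `IsAdditiveRoot`. The ring `P` is viewed as
a deformation of `k[x, y]` along `ε`, while `φ` embeds it in the ring containing `b`. -/
def IsDeformedAdditiveRoot {k P E : Type*} [CommRing k] [CommRing P] [CommRing E]
    (ε : P →+* BinaryPoly k) (φ : P →+* E) (e : ℕ) (b : E) : Prop :=
  ∃ s : ℕ → P, (∀ j < e, IsForm (ε (s j)) (2 * (2 ^ e - 2 ^ j))) ∧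
    b ^ 2 ^ e = ∑ j ∈ Finset.range e, φ (s j) * b ^ 2 ^ j

lemma exists_injective_comp_eq {P B : Type*} {G : Type u} [CommRing P] [CommRing G] [CommRing B]
    [IsDomain B] [Algebra P G] [Algebra.IsIntegral P G] [FaithfulSMul P G] {ε : P →+* B}
    (hε : Function.Surjective ε) :
    ∃ (Ω : Type u) (_ : Field Ω) (γ : G →+* Ω) (F : B →+* Ω), Function.Injective F ∧
      ∀ p, γ (algebraMap P G p) = F (ε p) := by
  have : (RingHom.ker ε).IsPrime := RingHom.ker_isPrime ε
  obtain ⟨Q, -, hQ, hQε⟩ := Ideal.exists_ideal_over_prime_of_isIntegral (S := G) (RingHom.ker ε) ⊥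
    (by rw [← RingHom.ker_eq_comap_bot, (RingHom.injective_iff_ker_eq_bot _).1
      (FaithfulSMul.algebraMap_injective P G)]; exact bot_le)
  let e := RingHom.quotientKerEquivOfSurjective hε
  let ι : P ⧸ RingHom.ker ε →+* G ⧸ Q := Ideal.quotientMap Q (algebraMap P G) hQε.ge
  have hι : Function.Injective ι := Ideal.quotientMap_injective' hQε.le
  let F : B →+* G ⧸ Q := ι.comp (e.symm : B →+* _)
  have hF : Function.Injective F := hι.comp e.symm.injective
  refine ⟨FractionRing (G ⧸ Q), inferInstance, (algebraMap (G ⧸ Q) _).comp (Ideal.Quotient.mk Q),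
    (algebraMap (G ⧸ Q) _).comp F, (IsFractionRing.injective (G ⧸ Q) _).comp hF, fun p => ?_⟩
  have he : e.symm (ε p) = Ideal.Quotient.mk _ p := e.symm_apply_eq.2 rfl
  simp [F, ι, he]

lemma IsQuarticRoot.isIntegral {P E : Type*} [CommRing P] [CommRing E] [Algebra P E]
    {t x y : P} {z : E}
    (h : IsQuarticRoot (algebraMap P E t) (algebraMap P E x) (algebraMap P E y) z) :
    IsIntegral P z := by
  refine ⟨(quarticPoly t).map (MvPolynomial.eval ![x, y]), (quarticPoly_monic t).map _, ?_⟩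
  rw [Polynomial.eval₂_map, eval₂_quarticPoly]
  simpa [IsQuarticRoot] using h

section

variable {k P E : Type*} [Field k] [CommRing P] [CommRing E] {ε : P →+* BinaryPoly k}
  {φ : P →+* E} {t : k} {T X₀ X₁ : P} {z u v w : E} {m n l : ℕ}

lemma IsForcingSolution.exists_critOrbit_eq_zero_of_isIntegral [CharP k 2] [Finite k]
    [Algebra P E] [Algebra.IsIntegral P E] [FaithfulSMul P E] (hε : Function.Surjective ε)
    (hT : ε T = C t) (hX₀ : ε X₀ = X 0) (hX₁ : ε X₁ = X 1)
    (h : IsForcingSolution (algebraMap P E T) (algebraMap P E X₀) (algebraMap P E X₁) z u v w)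
    (hu : IsDeformedAdditiveRoot ε (algebraMap P E) m u)
    (hv : IsDeformedAdditiveRoot ε (algebraMap P E) n v)
    (hw : IsDeformedAdditiveRoot ε (algebraMap P E) l w) :
    ∃ i, 2 ≤ i ∧ i ≤ max m l + 2 ∧ critOrbit t i = 0 := by
  obtain ⟨Ω, _, γ, F, hF, hγ⟩ := exists_injective_comp_eq (G := E) hε
  have : CharP Ω 2 := charP_of_injective_ringHom hF 2
  have hroot {e : ℕ} {b : E} (hb : IsDeformedAdditiveRoot ε (algebraMap P E) e b) :
      IsAdditiveRoot F e (γ b) := by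
    obtain ⟨s, hs, hsb⟩ := hb
    refine ⟨fun j => ε (s j), hs, ?_⟩
    simp only [← map_pow, hsb, map_sum, map_mul, hγ]
  have hγh := h.map γ
  rw [hγ, hγ, hγ, hT, hX₀, hX₁] at hγh
  exact hγh.exists_critOrbit_eq_zero_of_isAdditiveRoot hF (hroot hu) (hroot hv) (hroot hw)

lemma IsForcingSolution.exists_critOrbit_eq_zero_of_finite [CharP k 2] [Finite k]
    (hε : Function.Surjective ε) (hφ : Function.Injective φ)
    (hT : ε T = C t) (hX₀ : ε X₀ = X 0) (hX₁ : ε X₁ = X 1)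
    (h : IsForcingSolution (φ T) (φ X₀) (φ X₁) z u v w) (hu : IsDeformedAdditiveRoot ε φ m u)
    (hv : IsDeformedAdditiveRoot ε φ n v) (hw : IsDeformedAdditiveRoot ε φ l w) :
    ∃ i, 2 ≤ i ∧ i ≤ max m l + 2 ∧ critOrbit t i = 0 := by
  let := φ.toAlgebra
  let G := integralClosure P E
  have : FaithfulSMul P G :=
    (faithfulSMul_iff_algebraMap_injective P G).2 fun a b h => hφ (congrArg Subtype.val h)
  have hroot {e : ℕ} {b : E} (hb : IsDeformedAdditiveRoot ε φ e b) :
      ∃ hb : b ∈ G, IsDeformedAdditiveRoot ε (algebraMap P G) e ⟨b, hb⟩ := by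
    obtain ⟨s, hs, hsb⟩ := hb
    refine ⟨isIntegral_of_pow_two_pow_eq_sum (r := s) hsb, s, hs, Subtype.ext ?_⟩
    push_cast
    exact hsb
  obtain ⟨huG, hu⟩ := hroot hu
  obtain ⟨hvG, hv⟩ := hroot hv
  obtain ⟨hwG, hw⟩ := hroot hw
  have hzG : z ∈ G := IsQuarticRoot.isIntegral h.root
  have hG : IsForcingSolution (algebraMap P G T) (algebraMap P G X₀) (algebraMap P G X₁)
      ⟨z, hzG⟩ ⟨u, huG⟩ ⟨v, hvG⟩ ⟨w, hwG⟩ := ⟨Subtype.ext h.root, Subtype.ext h.forcing⟩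
  exact hG.exists_critOrbit_eq_zero_of_isIntegral hε hT hX₀ hX₁ hu hv hw

end

lemma exists_isMaximal_finite_quotient_adjoin (F : Type*) {A : Type*} [Field F] [Finite F]
    [CommRing A] [Nontrivial A] [Algebra F A] {B : Set A} (hB : B.Finite) :
    ∃ 𝔫 : Ideal (Algebra.adjoin F B), 𝔫.IsMaximal ∧ Finite (Algebra.adjoin F B ⧸ 𝔫) := by
  obtain ⟨𝔫, h𝔫⟩ := Ideal.exists_maximal (Algebra.adjoin F B)
  have : Algebra.FiniteType F (Algebra.adjoin F B) :=
    (Subalgebra.fg_iff_finiteType _).1 ⟨hB.toFinset, by simp⟩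
  let := Ideal.Quotient.field 𝔫
  have : Module.Finite F (Algebra.adjoin F B ⧸ 𝔫) :=
    finite_of_finite_type_of_isJacobsonRing F (Algebra.adjoin F B ⧸ 𝔫)
  exact ⟨𝔫, h𝔫, Module.finite_of_finite F⟩

variable {D κ κ₀ P E : Type*} [CommRing D] [Field κ] [Field κ₀] [CommRing P] [CommRing E]

/-- The elements of `P` whose image under `ε : P → κ[x, y]` has coefficients in `D`, where
`ι : D → κ` is the inclusion. Reducing these coefficients modulo a maximal ideal of `D` replaces
`κ` by a residue field of `D`. -/
noncomputable def definedOver (ε : P →+* BinaryPoly κ) (ι : D →+* κ) : Subring P :=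
  (MvPolynomial.map ι).range.comap ε

lemma exists_reduction {ε : P →+* BinaryPoly κ} {ι : D →+* κ} {g : D →+* κ₀}
    (hε : Function.Surjective ε) (hι : Function.Injective ι) (hg : Function.Surjective g) :
    ∃ ρ : definedOver ε ι →+* BinaryPoly κ₀, Function.Surjective ρ ∧
      ∀ (p : definedOver ε ι) (f : BinaryPoly D),
        ε p = MvPolynomial.map ι f → ρ p = MvPolynomial.map g f := by
  let r : BinaryPoly D ≃+* (MvPolynomial.map (σ := Fin 2) ι).range :=
    RingEquiv.ofBijective (MvPolynomial.map ι).rangeRestrict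
      ⟨fun a b h => map_injective ι hι (congrArg Subtype.val h), RingHom.rangeRestrict_surjective _⟩
  let c : definedOver ε ι →+* (MvPolynomial.map (σ := Fin 2) ι).range :=
    ε.restrict (definedOver ε ι) _ fun _ hp => hp
  let ρ : definedOver ε ι →+* BinaryPoly κ₀ := (MvPolynomial.map g).comp ((r.symm : _ →+* _).comp c)
  have hρ (p : definedOver ε ι) (f : BinaryPoly D) (h : ε p = MvPolynomial.map ι f) :
      ρ p = MvPolynomial.map g f :=
    congrArg (MvPolynomial.map g) (r.symm_apply_eq.2 (Subtype.ext h : c p = r f))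
  refine ⟨ρ, fun q => ?_, hρ⟩
  obtain ⟨f, rfl⟩ := map_surjective g hg q
  obtain ⟨p, hp⟩ := hε (MvPolynomial.map ι f)
  exact ⟨⟨p, f, hp.symm⟩, hρ _ f hp⟩

lemma IsForm.map_of_map_injective {ι : D →+* κ} (hι : Function.Injective ι) {f : BinaryPoly D}
    {d : ℤ} (hf : IsForm (MvPolynomial.map ι f) d) (g : D →+* κ₀) :
    IsForm (MvPolynomial.map g f) d := by
  rw [isForm_iff] at hf ⊢
  refine fun m hm => hf m fun h0 => hm ?_
  rw [coeff_map, map_eq_zero_iff ι hι] at h0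
  rw [coeff_map, h0, map_zero]

lemma isDeformedAdditiveRoot_definedOver {ε : P →+* BinaryPoly κ} {ι : D →+* κ} {g : D →+* κ₀}
    {φ : P →+* E} {ρ : definedOver ε ι →+* BinaryPoly κ₀} (hι : Function.Injective ι)
    (hρ : ∀ (p : definedOver ε ι) (f : BinaryPoly D),
      ε p = MvPolynomial.map ι f → ρ p = MvPolynomial.map g f) {e : ℕ} {b : E} {s : ℕ → P}
    (hs : ∀ j < e, IsForm (ε (s j)) (2 * (2 ^ e - 2 ^ j)))
    (hsD : ∀ j < e, s j ∈ definedOver ε ι)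
    (hb : b ^ 2 ^ e = ∑ j ∈ Finset.range e, φ (s j) * b ^ 2 ^ j) :
    IsDeformedAdditiveRoot ρ (φ.comp (definedOver ε ι).subtype) e b := by
  classical
  let s' (j : ℕ) : definedOver ε ι := if h : j < e then ⟨s j, hsD j h⟩ else 0
  have hs' (j : ℕ) (hj : j < e) : (s' j : P) = s j := by simp [s', hj]
  refine ⟨s', fun j hj => ?_, ?_⟩
  · obtain ⟨f, hf⟩ := hsD j hj
    rw [hρ (s' j) f (by rw [hs' j hj, hf])]
    exact (hf ▸ hs j hj).map_of_map_injective hι g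
  · rw [hb]
    refine Finset.sum_congr rfl fun j hj => ?_
    simp [hs' j (Finset.mem_range.1 hj)]

lemma IsForcingSolution.exists_critOrbit_eq_zero_of_mem_definedOver [CharP κ₀ 2] [Finite κ₀]
    {ε : P →+* BinaryPoly κ} {φ : P →+* E} {ι : D →+* κ} {g : D →+* κ₀}
    (hε : Function.Surjective ε) (hφ : Function.Injective φ) (hι : Function.Injective ι)
    (hg : Function.Surjective g) {t : D} {T X₀ X₁ : P} (hT : ε T = C (ι t)) (hX₀ : ε X₀ = X 0)
    (hX₁ : ε X₁ = X 1) {z u v w : E} (h : IsForcingSolution (φ T) (φ X₀) (φ X₁) z u v w)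
    {m n l : ℕ} {su sv sw : ℕ → P}
    (hsu : ∀ j < m, IsForm (ε (su j)) (2 * (2 ^ m - 2 ^ j)))
    (hsv : ∀ j < n, IsForm (ε (sv j)) (2 * (2 ^ n - 2 ^ j)))
    (hsw : ∀ j < l, IsForm (ε (sw j)) (2 * (2 ^ l - 2 ^ j)))
    (hsuD : ∀ j < m, su j ∈ definedOver ε ι) (hsvD : ∀ j < n, sv j ∈ definedOver ε ι)
    (hswD : ∀ j < l, sw j ∈ definedOver ε ι)
    (hu : u ^ 2 ^ m = ∑ j ∈ Finset.range m, φ (su j) * u ^ 2 ^ j)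
    (hv : v ^ 2 ^ n = ∑ j ∈ Finset.range n, φ (sv j) * v ^ 2 ^ j)
    (hw : w ^ 2 ^ l = ∑ j ∈ Finset.range l, φ (sw j) * w ^ 2 ^ j) :
    ∃ i, 2 ≤ i ∧ i ≤ max m l + 2 ∧ critOrbit (g t) i = 0 := by
  obtain ⟨ρ, hρs, hρ⟩ := exists_reduction hε hι hg
  replace hT : ε T = MvPolynomial.map ι (C t) := by rw [hT, map_C]
  replace hX₀ : ε X₀ = MvPolynomial.map ι (X 0) := by rw [hX₀, map_X]
  replace hX₁ : ε X₁ = MvPolynomial.map ι (X 1) := by rw [hX₁, map_X]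
  have hφ' : Function.Injective (φ.comp (definedOver ε ι).subtype) :=
    hφ.comp Subtype.val_injective
  exact IsForcingSolution.exists_critOrbit_eq_zero_of_finite
    (T := ⟨T, _, hT.symm⟩) (X₀ := ⟨X₀, _, hX₀.symm⟩) (X₁ := ⟨X₁, _, hX₁.symm⟩) hρs hφ'
    (by rw [hρ _ _ hT, map_C]) (by rw [hρ _ _ hX₀, map_X]) (by rw [hρ _ _ hX₁, map_X]) h
    (isDeformedAdditiveRoot_definedOver hι hρ hsu hsuD hu)
    (isDeformedAdditiveRoot_definedOver hι hρ hsv hsvD hv)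
    (isDeformedAdditiveRoot_definedOver hι hρ hsw hswD hw)

lemma map_critOrbit {A B : Type*} [CommRing A] [CommRing B] (f : A →+* B) (t : A) (n : ℕ) :
    f (critOrbit t n) = critOrbit (f t) n := by
  induction n with
  | zero => simp [critOrbit_zero]
  | succ n ih => simp [critOrbit_succ, ih]

theorem IsForcingSolution.exists_critOrbit_eq_zero_of_isDeformedAdditiveRoot [CharP κ 2]
    {ε : P →+* BinaryPoly κ} {φ : P →+* E} (hε : Function.Surjective ε)
    (hφ : Function.Injective φ) {t : κ} {T X₀ X₁ : P} (hT : ε T = C t) (hX₀ : ε X₀ = X 0)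
    (hX₁ : ε X₁ = X 1) {z u v w : E} {m n l : ℕ}
    (h : IsForcingSolution (φ T) (φ X₀) (φ X₁) z u v w) (hu : IsDeformedAdditiveRoot ε φ m u)
    (hv : IsDeformedAdditiveRoot ε φ n v) (hw : IsDeformedAdditiveRoot ε φ l w) :
    ∃ i, 2 ≤ i ∧ i ≤ max m l + 2 ∧ critOrbit t i = 0 := by
  classical
  by_contra! ht
  obtain ⟨su, hsu, hub⟩ := hu
  obtain ⟨sv, hsv, hvb⟩ := hv
  obtain ⟨sw, hsw, hwb⟩ := hw
  let := ZMod.algebra κ 2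
  let coeffs (s : ℕ → P) (e : ℕ) : Finset κ := (Finset.range e).biUnion fun j => (ε (s j)).coeffs
  let B : Finset κ := {t} ∪ coeffs su m ∪ coeffs sv n ∪ coeffs sw l ∪
    (Finset.range (max m l + 3)).image fun i => (critOrbit t i)⁻¹
  obtain ⟨𝔫, _, _⟩ := exists_isMaximal_finite_quotient_adjoin (ZMod 2) B.finite_toSet
  let D := Algebra.adjoin (ZMod 2) (B : Set κ)
  have hBD {c : κ} (hc : c ∈ B) : c ∈ D := Algebra.subset_adjoin hc
  let := Ideal.Quotient.field 𝔫
  have : CharP (D ⧸ 𝔫) 2 :=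
    charP_of_injective_algebraMap (algebraMap (ZMod 2) (D ⧸ 𝔫)).injective 2
  let ι : D →+* κ := D.val
  let g : D →+* D ⧸ 𝔫 := Ideal.Quotient.mk 𝔫
  have hι : Function.Injective ι := Subtype.val_injective
  have hmem {s : ℕ → P} {e : ℕ} (hsB : coeffs s e ⊆ B) (j : ℕ) (hj : j < e) :
      s j ∈ definedOver ε ι :=
    mem_range_map_iff_coeffs_subset.2 fun c hc =>
      ⟨⟨c, hBD (hsB (Finset.mem_biUnion.2 ⟨j, Finset.mem_range.2 hj, hc⟩))⟩, rfl⟩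
  let t₀ : D := ⟨t, hBD (by simp [B])⟩
  obtain ⟨i, hi2, hi, h0⟩ := IsForcingSolution.exists_critOrbit_eq_zero_of_mem_definedOver
    (ι := ι) (g := g) (t := t₀) hε hφ hι Ideal.Quotient.mk_surjective hT hX₀ hX₁ h hsu hsv hsw
    (hmem fun c hc => by simp only [B, Finset.mem_union]; tauto)
    (hmem fun c hc => by simp only [B, Finset.mem_union]; tauto)
    (hmem fun c hc => by simp only [B, Finset.mem_union]; tauto) hub hvb hwb
  have hinv : (critOrbit t i)⁻¹ ∈ D := hBD (Finset.mem_union_right _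
    (Finset.mem_image_of_mem _ (Finset.mem_range.2 (Nat.lt_succ_of_le hi))))
  have hunit : critOrbit t₀ i * ⟨_, hinv⟩ = 1 :=
    hι (by rw [map_mul, map_critOrbit, map_one]; exact mul_inv_cancel₀ (ht i hi2 hi))
  have := congrArg g hunit
  rw [map_mul, map_critOrbit, h0, zero_mul, map_one] at this
  exact zero_ne_one this

end Specialisation

section Homogenization

variable {σ R : Type*} [CommRing R]

lemma X_pow_dvd_of_X_pow_mul_eq {i j : σ} (hij : i ≠ j) (q : ℕ) {a b : MvPowerSeries σ R}
    (h : MvPowerSeries.X i ^ q * a = MvPowerSeries.X j ^ q * b) : MvPowerSeries.X j ^ q ∣ a := by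
  refine MvPowerSeries.X_pow_dvd_iff.2 fun m hm => ?_
  have hcoeff : MvPowerSeries.coeff (Finsupp.single i q + m) (MvPowerSeries.X j ^ q * b) = 0 :=
    MvPowerSeries.X_pow_dvd_iff.1 (dvd_mul_right _ b) _ (by simpa [hij] using hm)
  rwa [← h, MvPowerSeries.X_pow_eq, MvPowerSeries.coeff_add_monomial_mul, one_mul] at hcoeff

variable [Finite σ]

lemma hasSubst_homogenization : MvPowerSeries.HasSubst
    (fun i : σ => (PowerSeries.C (X i) * PowerSeries.X : PowerSeries (MvPolynomial σ R))) :=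
  MvPowerSeries.hasSubst_of_constantCoeff_zero fun i =>
    (by simp : PowerSeries.constantCoeff (PowerSeries.C (X i) * PowerSeries.X) = 0)

/-- The homogenization `f(x₁, …, xₙ) ↦ f(x₁ s, …, xₙ s)`, a power series in `s` whose coefficients
are the homogeneous components of `f`. -/
noncomputable def homogenization : MvPowerSeries σ R →ₐ[R] PowerSeries (MvPolynomial σ R) :=
  MvPowerSeries.substAlgHom hasSubst_homogenization

lemma homogenization_X (i : σ) : homogenization (MvPowerSeries.X i : MvPowerSeries σ R) =
    PowerSeries.C (X i) * PowerSeries.X :=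
  MvPowerSeries.substAlgHom_X _ i

lemma homogenization_C (c : R) :
    homogenization (MvPowerSeries.C c : MvPowerSeries σ R) = PowerSeries.C (C c) := by
  rw [← mul_one (MvPowerSeries.C c), ← MvPowerSeries.smul_eq_C_mul, map_smul, map_one,
    ← mul_one (PowerSeries.C (C c)), ← PowerSeries.smul_eq_C_mul]
  exact (algebraMap_smul (MvPolynomial σ R) c 1).symm

lemma coeff_homogenization (n : ℕ) (m : σ →₀ ℕ) (f : MvPowerSeries σ R) :
    coeff m (PowerSeries.coeff n (homogenization f)) =
      if m.degree = n then MvPowerSeries.coeff m f else 0 := by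
  classical
  have hprod (d : σ →₀ ℕ) :
      d.prod (fun i e => (PowerSeries.C (X i : MvPolynomial σ R) * PowerSeries.X) ^ e) =
        PowerSeries.C (monomial d 1) * PowerSeries.X ^ d.degree := by
    rw [monomial_eq, C_1, one_mul, Finsupp.degree_apply, ← Finset.prod_pow_eq_pow_sum]
    simp only [mul_pow, Finsupp.prod, map_prod, map_pow, Finset.prod_mul_distrib]
  have hterm (d : σ →₀ ℕ) : MvPowerSeries.coeff d f • MvPowerSeries.coeff (Finsupp.single () n)
      (d.prod fun i e => (PowerSeries.C (X i : MvPolynomial σ R) * PowerSeries.X) ^ e) =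
        if d.degree = n then monomial d (MvPowerSeries.coeff d f) else 0 := by
    rw [hprod]
    change MvPowerSeries.coeff d f • PowerSeries.coeff n _ = _
    rw [PowerSeries.coeff_C_mul, PowerSeries.coeff_X_pow]
    by_cases h : d.degree = n
    · simp [h, smul_monomial]
    · simp [h, Ne.symm h]
  have hfin := MvPowerSeries.coeff_subst_finite (hasSubst_homogenization (R := R)) f
    (Finsupp.single () n)
  change coeff m (MvPowerSeries.coeff (Finsupp.single () n) (MvPowerSeries.substAlgHom _ f)) = _
  rw [MvPowerSeries.substAlgHom_apply, MvPowerSeries.coeff_subst hasSubst_homogenization]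
  simp only [hterm] at hfin ⊢
  refine ((lcoeff R m).toAddMonoidHom.map_finsum hfin).trans
    ((finsum_eq_single _ m fun d hd => ?_).trans ?_)
  · by_cases h : d.degree = n <;> simp [h, coeff_monomial, hd]
  · by_cases h : m.degree = n <;> simp [h]

lemma homogenization_injective :
    Function.Injective (homogenization : MvPowerSeries σ R → PowerSeries (MvPolynomial σ R)) := by
  intro f g h
  ext m
  simpa [coeff_homogenization] using
    congrArg (fun p => coeff m (PowerSeries.coeff m.degree p)) h

end Homogenization

section InitialForms

variable {κ : Type*} [Field κ]

lemma exists_homogenization_eq_of_mem_pow {d : ℕ} {f : MvPowerSeries (Fin 2) κ}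
    (hf : f ∈ Ideal.span (Set.range MvPowerSeries.X) ^ d) :
    ∃ s, homogenization f = PowerSeries.X ^ d * s ∧ IsForm (PowerSeries.constantCoeff s) d := by
  have hle : Ideal.span (Set.range MvPowerSeries.X) ≤ Ideal.comap
      (homogenization : MvPowerSeries (Fin 2) κ →ₐ[κ] _) (Ideal.span {PowerSeries.X}) := by
    rw [Ideal.span_le]
    rintro _ ⟨i, rfl⟩
    rw [SetLike.mem_coe, Ideal.mem_comap, homogenization_X]
    exact Ideal.mul_mem_left _ _ (Ideal.mem_span_singleton_self _)
  have hmem := Ideal.le_comap_pow _ d (Ideal.pow_right_mono hle d hf)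
  rw [Ideal.mem_comap, Ideal.span_singleton_pow, Ideal.mem_span_singleton] at hmem
  obtain ⟨s, hs⟩ := hmem
  refine ⟨s, hs, isForm_iff.2 fun m hm => ?_⟩
  have hcoeff : PowerSeries.constantCoeff s = PowerSeries.coeff d (homogenization f) := by
    rw [hs, PowerSeries.coeff_X_pow_mul']
    simp
  rw [hcoeff, coeff_homogenization] at hm
  have hdeg : m.degree = d := by_contra fun h => hm (if_neg h)
  rw [Finsupp.degree_eq_sum, Fin.sum_univ_two] at hdeg
  exact_mod_cast hdeg

lemma IsForcingSolution.div {E : Type*} [Field E] {s t x y z u v w : E} (hs : s ≠ 0)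
    (h : IsForcingSolution t (x * s) (y * s) z u v w) :
    IsForcingSolution t x y (z / s) (u / s ^ 2) (v / s ^ 2) (w / s ^ 2) where
  root := by
    have hroot := h.root
    unfold IsQuarticRoot at hroot ⊢
    field_simp
    linear_combination hroot
  forcing := by
    field_simp
    linear_combination h.forcing

lemma isDeformedAdditiveRoot_div {E : Type*} [Field E] {φ : PowerSeries (BinaryPoly κ) →+* E}
    (hφ : φ PowerSeries.X ≠ 0) {e : ℕ} {b : E} {r : ℕ → MvPowerSeries (Fin 2) κ}
    (hr : ∀ j < e, r j ∈ Ideal.span (Set.range MvPowerSeries.X) ^ (2 * (2 ^ e - 2 ^ j)))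
    (hb : b ^ 2 ^ e = ∑ j ∈ Finset.range e, φ (homogenization (r j)) * b ^ 2 ^ j) :
    IsDeformedAdditiveRoot PowerSeries.constantCoeff φ e (b / φ PowerSeries.X ^ 2) := by
  have hpow {j : ℕ} (hj : j < e) : 2 ^ j ≤ 2 ^ e := Nat.pow_le_pow_right two_pos hj.le
  choose! s hs hform using fun j (hj : j < e) => exists_homogenization_eq_of_mem_pow (hr j hj)
  refine ⟨s, fun j hj => ?_, ?_⟩
  · simpa [hpow hj] using hform j hj
  · rw [div_pow, hb, Finset.sum_div]
    refine Finset.sum_congr rfl fun j hj => ?_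
    have hj := Finset.mem_range.1 hj
    have hexp : 2 * 2 ^ e = 2 * (2 ^ e - 2 ^ j) + 2 * 2 ^ j := by have := hpow hj; omega
    rw [hs j hj, map_mul, map_pow, div_pow, ← pow_mul, ← pow_mul, hexp, pow_add]
    field_simp

end InitialForms

section FinitePowerSeries

variable {κ D : Type*} [Field κ] [CharP κ 2] [CommRing D] [IsDomain D]
  [Algebra (MvPowerSeries (Fin 2) κ) D] [Module.Finite (MvPowerSeries (Fin 2) κ) D]
  [FaithfulSMul (MvPowerSeries (Fin 2) κ) D] {t : κ} {z u v w : D}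

lemma IsForcingSolution.exists_pow_two_pow_eq_sum_of_finite (ht : ∀ n, 2 ≤ n → critOrbit t n ≠ 0)
    (h : IsForcingSolution (algebraMap (MvPowerSeries (Fin 2) κ) D (MvPowerSeries.C t))
      (algebraMap (MvPowerSeries (Fin 2) κ) D (MvPowerSeries.X 0))
      (algebraMap (MvPowerSeries (Fin 2) κ) D (MvPowerSeries.X 1)) z u v w) :
    ∀ b ∈ ({u, v, w} : Set D), ∃ (e : ℕ) (r : ℕ → MvPowerSeries (Fin 2) κ),
      (∀ j < e, r j ∈ (Ideal.span (Set.range MvPowerSeries.X) : Ideal (MvPowerSeries (Fin 2) κ)) ^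
        (2 * (2 ^ e - 2 ^ j))) ∧
        b ^ 2 ^ e = ∑ j ∈ Finset.range e, algebraMap _ D (r j) * b ^ 2 ^ j := by
  have hinj := FaithfulSMul.algebraMap_injective (MvPowerSeries (Fin 2) κ) D
  have : IsDomain (MvPowerSeries (Fin 2) κ) := hinj.isDomain (algebraMap _ D)
  let F : BinaryPoly κ →+* D :=
    (algebraMap (MvPowerSeries (Fin 2) κ) D).comp coeToMvPowerSeries.ringHom
  have hF : Function.Injective F := hinj.comp (coe_injective _ _)
  have hFX (i : Fin 2) : F (X i) =
      algebraMap (MvPowerSeries (Fin 2) κ) D (MvPowerSeries.X i) := by simp [F]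
  have hFC : F (C t) = algebraMap (MvPowerSeries (Fin 2) κ) D (MvPowerSeries.C t) := by simp [F]
  have : CharP D 2 := charP_of_injective_ringHom hF 2
  obtain ⟨c, hc, hcolon⟩ := exists_smul_eq_smul_of_finite (MvPowerSeries (Fin 2) κ) D
  have hc' {i j : Fin 2} (hij : i ≠ j) (q : ℕ) (a b : D) (hab : F (X i) ^ q * a = F (X j) ^ q * b) :
      ∃ e, algebraMap _ D c * a = F (X j) ^ q * e := by
    simp only [hFX, ← map_pow, ← Algebra.smul_def] at hab ⊢
    exact hcolon _ _ (fun _ _ => X_pow_dvd_of_X_pow_mul_eq hij q) a b hab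
  let 𝔪 : Ideal (MvPowerSeries (Fin 2) κ) := Ideal.span (Set.range MvPowerSeries.X)
  have hI (i : Fin 2) : F (X i) ∈ 𝔪.map (algebraMap _ D) := by
    rw [hFX]
    exact Ideal.mem_map_of_mem _ (Ideal.subset_span ⟨i, rfl⟩)
  rw [← hFX, ← hFX, ← hFC] at h
  obtain ⟨d, hd, hmem⟩ := h.exists_mul_pow_two_pow_mem ht hI hF
    ((map_ne_zero_iff _ hinj).2 hc) (hc' (by decide)) (hc' (by decide))
  exact fun b hb => exists_pow_two_pow_eq_sum_of_mem_pow 𝔪 hd (hmem b hb)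

theorem not_isForcingSolution_of_finite (ht : ∀ n, 2 ≤ n → critOrbit t n ≠ 0) :
    ¬ IsForcingSolution (algebraMap (MvPowerSeries (Fin 2) κ) D (MvPowerSeries.C t))
      (algebraMap (MvPowerSeries (Fin 2) κ) D (MvPowerSeries.X 0))
      (algebraMap (MvPowerSeries (Fin 2) κ) D (MvPowerSeries.X 1)) z u v w := by
  intro h
  have hroots := h.exists_pow_two_pow_eq_sum_of_finite ht
  let E := AlgebraicClosure (FractionRing (PowerSeries (BinaryPoly κ)))
  let φ : PowerSeries (BinaryPoly κ) →+* E :=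
    (algebraMap (FractionRing (PowerSeries (BinaryPoly κ))) E).comp (algebraMap _ _)
  have hφ : Function.Injective φ :=
    (algebraMap (FractionRing (PowerSeries (BinaryPoly κ))) E).injective.comp
      (IsFractionRing.injective _ _)
  have hφX : φ PowerSeries.X ≠ 0 := (map_ne_zero_iff _ hφ).2 PowerSeries.X_ne_zero
  let : Algebra (MvPowerSeries (Fin 2) κ) E := (φ.comp homogenization.toRingHom).toAlgebra
  have : FaithfulSMul (MvPowerSeries (Fin 2) κ) E :=
    (faithfulSMul_iff_algebraMap_injective _ _).2 (hφ.comp homogenization_injective)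
  have : IsDomain (MvPowerSeries (Fin 2) κ) :=
    (FaithfulSMul.algebraMap_injective _ D).isDomain (algebraMap (MvPowerSeries (Fin 2) κ) D)
  let g : D →ₐ[MvPowerSeries (Fin 2) κ] E := IsAlgClosed.lift
  have hg (f : MvPowerSeries (Fin 2) κ) : g (algebraMap _ D f) = φ (homogenization f) :=
    g.commutes f
  have hroot : ∀ b ∈ ({u, v, w} : Set D), ∃ e,
      IsDeformedAdditiveRoot PowerSeries.constantCoeff φ e (g b / φ PowerSeries.X ^ 2) := by
    intro b hb
    obtain ⟨e, r, hr, hbr⟩ := hroots b hb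
    refine ⟨e, isDeformedAdditiveRoot_div hφX hr ?_⟩
    simp only [← map_pow, hbr, map_sum, map_mul, hg]
  obtain ⟨m, hu⟩ := hroot u (by simp)
  obtain ⟨n, hv⟩ := hroot v (by simp)
  obtain ⟨l, hw⟩ := hroot w (by simp)
  have hgh := h.map (g : D →+* E)
  simp only [RingHom.coe_coe, hg, homogenization_X, homogenization_C, map_mul] at hgh
  obtain ⟨i, hi, -, h0⟩ := (hgh.div hφX).exists_critOrbit_eq_zero_of_isDeformedAdditiveRoot
    (ε := PowerSeries.constantCoeff)
    (fun p => ⟨PowerSeries.C p, PowerSeries.constantCoeff_C p⟩) hφ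
    (PowerSeries.constantCoeff_C _) (PowerSeries.constantCoeff_C _) (PowerSeries.constantCoeff_C _)
    hu hv hw
  exact ht i hi h0

end FinitePowerSeries

section CoefficientFields

variable {p : ℕ} [Fact p.Prime] {A κ : Type*} [CommRing A] [CharP A p] [Field κ]

lemma isField_of_frobenius_range_le {π : A →+* κ} (hπ : Function.Surjective π) {L : Subring A}
    (hL : (frobenius A p).range ≤ L) (hker : ∀ l ∈ L, π l = 0 → l = 0) : IsField L := by
  have hp : p ≠ 0 := (Fact.out : p.Prime).ne_zero
  refine ⟨⟨0, 1, fun h => zero_ne_one (α := κ) ?_⟩, mul_comm, fun {l} hl => ?_⟩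
  · simpa using congrArg (fun l : L => π l) h
  · have hl0 : π l ≠ 0 := fun h => hl (Subtype.ext (hker l l.2 h))
    obtain ⟨b, hb⟩ := hπ (π l)⁻¹
    refine ⟨⟨l ^ (p - 1) * b ^ p, L.mul_mem (L.pow_mem l.2 _) (hL ⟨b, rfl⟩)⟩, Subtype.ext ?_⟩
    have hprod : (l : A) * (l ^ (p - 1) * b ^ p) = (l * b) ^ p := by
      rw [← mul_assoc, mul_pow_sub_one hp, mul_pow]
    refine sub_eq_zero.1 (hker _ (L.sub_mem ?_ L.one_mem) ?_)
    · exact (congrArg (· ∈ L) hprod).mpr (hL ⟨l * b, rfl⟩)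
    · simp [hprod, hb, hl0]

lemma eq_zero_of_mem_adjoin {π : A →+* κ} (hπ : Function.Surjective π) {L : Subring A}
    (hL : (frobenius A p).range ≤ L) (hker : ∀ l ∈ L, π l = 0 → l = 0) {a b : A}
    (ha : ∀ l ∈ L, π l ≠ π a) (hb : b ∈ Algebra.adjoin L {a}) (hπb : π b = 0) : b = 0 := by
  let := (isField_of_frobenius_range_le hπ hL hker).toField
  let := (π.comp L.subtype).toAlgebra
  let c : L := ⟨a ^ p, hL ⟨a, rfl⟩⟩
  have hc : ∀ l : L, l ^ p ≠ c := fun l hl => ha l l.2 <| by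
    have hpow : (l - a : A) ^ p = 0 := by
      rw [sub_pow_char, sub_eq_zero]
      exact congrArg Subtype.val hl
    rw [← sub_eq_zero, ← map_sub]
    exact eq_zero_of_pow_eq_zero (by rw [← map_pow, hpow, map_zero])
  have hmin : minpoly L (π a) = Polynomial.X ^ p - Polynomial.C c := by
    refine (minpoly.eq_of_irreducible_of_monic
      (X_pow_sub_C_irreducible_of_prime Fact.out hc) ?_
      (Polynomial.monic_X_pow_sub_C _ (Fact.out : p.Prime).ne_zero)).symm
    simp [RingHom.algebraMap_toAlgebra, c]
  rw [Algebra.adjoin_singleton_eq_range_aeval] at hb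
  obtain ⟨f, rfl⟩ := hb
  obtain ⟨g, rfl⟩ : minpoly L (π a) ∣ f := minpoly.dvd _ _ <| by
    rw [← hπb]
    exact (Polynomial.hom_eval₂ f _ π a).symm
  rw [hmin]
  simp [c, Algebra.algebraMap_ofSubring]

lemma exists_section_of_mul_ker_eq_zero (p : ℕ) [Fact p.Prime] [CharP A p] {π : A →+* κ}
    (hπ : Function.Surjective π) (hker : ∀ a b, π a = 0 → π b = 0 → a * b = 0) :
    ∃ σ : κ →+* A, ∀ c, π (σ c) = c := by
  have hfrob : ∀ l ∈ (frobenius A p).range, π l = 0 → l = 0 := by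
    rintro _ ⟨a, rfl⟩ h
    rw [frobenius_def, map_pow] at h
    have ha : π a = 0 := eq_zero_of_pow_eq_zero h
    exact pow_eq_zero_of_le (Fact.out : p.Prime).two_le ((pow_two a).trans (hker a a ha ha))
  obtain ⟨L, -, hL⟩ := zorn_le_nonempty₀
    {L : Subring A | (frobenius A p).range ≤ L ∧ ∀ l ∈ L, π l = 0 → l = 0}
    (fun c hc hchain L hLc => by
      refine ⟨sSup c, ⟨(hc hLc).1.trans (le_sSup hLc), fun l hl => ?_⟩, fun L' => le_sSup⟩
      obtain ⟨L', hL', hl'⟩ := (Subring.mem_sSup_of_directedOn ⟨L, hLc⟩ hchain.directedOn).1 hl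
      exact (hc hL').2 l hl') _ ⟨le_rfl, hfrob⟩
  have hsurj : Function.Surjective (π.comp L.subtype) := fun c => by
    obtain ⟨a, rfl⟩ := hπ c
    by_contra! ha
    have hle : L ≤ (Algebra.adjoin L {a}).toSubring := fun l hl =>
      (Algebra.adjoin L {a}).algebraMap_mem ⟨l, hl⟩
    have hmax := hL.eq_of_le ⟨hL.prop.1.trans hle, fun b =>
      eq_zero_of_mem_adjoin hπ hL.prop.1 hL.prop.2 fun l hl => ha ⟨l, hl⟩⟩ hle
    have haL : a ∈ L := by
      rw [hmax]
      exact Algebra.self_mem_adjoin_singleton L a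
    exact ha ⟨a, haL⟩ rfl
  have hinj : Function.Injective (π.comp L.subtype) :=
    (injective_iff_map_eq_zero _).2 fun l h => Subtype.ext (hL.prop.2 l l.2 h)
  let e := RingEquiv.ofBijective _ ⟨hinj, hsurj⟩
  exact ⟨L.subtype.comp e.symm.toRingHom, e.apply_symm_apply⟩

end CoefficientFields

section FormallySmooth

variable {K κ : Type*} [Field K] [Field κ] [Algebra K κ]

lemma exists_ringHom_lift (p : ℕ) [Fact p.Prime] [CharP κ p] {B : Type*} [CommRing B] [CharP B p]
    {I : Ideal B} (hI : I ^ 2 = ⊥) (f : κ →+* B ⧸ I) :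
    ∃ g : κ →+* B, (Ideal.Quotient.mk I).comp g = f := by
  let A : Subring (B × κ) := RingHom.eqLocus ((Ideal.Quotient.mk I).comp (RingHom.fst B κ))
    (f.comp (RingHom.snd B κ))
  have hA (a : A) : Ideal.Quotient.mk I a.1.1 = f a.1.2 := a.2
  have : CharP (B × κ) p := Prod.charP B κ p
  have hmem (a : A) (ha : a.1.2 = 0) : a.1.1 ∈ I :=
    Ideal.Quotient.eq_zero_iff_mem.1 (by rw [hA, ha, map_zero])
  obtain ⟨σ, hσ⟩ := exists_section_of_mul_ker_eq_zero p (π := (RingHom.snd B κ).comp A.subtype)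
    (fun c => by
      obtain ⟨b, hb⟩ := Ideal.Quotient.mk_surjective (f c)
      exact ⟨⟨(b, c), hb⟩, rfl⟩)
    (fun a b (ha : a.1.2 = 0) (hb : b.1.2 = 0) => Subtype.ext (Prod.ext
      (by simpa [← pow_two, hI] using Ideal.mul_mem_mul (hmem a ha) (hmem b hb))
      (by simp [ha])))
  refine ⟨(RingHom.fst B κ).comp (A.subtype.comp σ), RingHom.ext fun c => ?_⟩
  exact (hA (σ c)).trans (congrArg f (hσ c))

theorem formallySmooth_of_perfectRing (p : ℕ) [Fact p.Prime] [CharP K p] [PerfectRing K p] :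
    Algebra.FormallySmooth K κ := by
  refine Algebra.FormallySmooth.of_comp_surjective fun B _ _ I hI f => ?_
  rcases subsingleton_or_nontrivial B with hB | hB
  · have := Module.subsingleton B (B ⧸ I)
    exact ⟨⟨⟨⟨⟨fun _ => 0, Subsingleton.elim _ _⟩, fun _ _ => Subsingleton.elim _ _⟩,
      Subsingleton.elim _ _, fun _ _ => Subsingleton.elim _ _⟩, fun _ => Subsingleton.elim _ _⟩,
      AlgHom.ext fun _ => Subsingleton.elim _ _⟩
  have : CharP B p := charP_of_injective_algebraMap (algebraMap K B).injective p
  have : CharP κ p := charP_of_injective_algebraMap (algebraMap K κ).injective p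
  obtain ⟨g, hg⟩ := exists_ringHom_lift p hI f.toRingHom
  have hgf (c : κ) : Ideal.Quotient.mk I (g c) = f c := RingHom.congr_fun hg c
  refine ⟨{ g with commutes' := fun a => ?_ }, AlgHom.ext hgf⟩
  -- `K` is perfect and elements congruent modulo `I` have the same `p`-th power.
  obtain ⟨b, rfl⟩ := (bijective_frobenius K p).surjective a
  have hmem : g (algebraMap K κ b) - algebraMap K B b ∈ I := by
    rw [← Ideal.Quotient.eq, hgf, f.commutes]
    rfl
  have hpow : (g (algebraMap K κ b) - algebraMap K B b) ^ p = 0 :=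
    pow_eq_zero_of_le (Fact.out : p.Prime).two_le (by simpa [hI] using Ideal.pow_mem_pow hmem 2)
  rw [sub_pow_char, sub_eq_zero] at hpow
  simpa [frobenius_def] using hpow

end FormallySmooth

section CompleteRings

lemma isPrecomplete_pi {A : Type*} [CommRing A] (I : Ideal A) [IsPrecomplete I A] (r : ℕ) :
    IsPrecomplete I (Fin r → A) := by
  refine AdicCompletion.of_surjective_iff.1 fun a => ?_
  choose v hv using fun i => AdicCompletion.of_surjective I A (AdicCompletion.piEquivFin I r a i)
  refine ⟨v, (AdicCompletion.piEquivFin I r).injective (funext fun i => ?_)⟩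
  rw [← hv i, AdicCompletion.piEquivFin_apply]
  rfl

theorem finite_of_finite_quotient {A M : Type*} [CommRing A] [AddCommGroup M] [Module A M]
    (I : Ideal A) [IsPrecomplete I A] [IsHausdorff I M]
    [Module.Finite A (M ⧸ (I • ⊤ : Submodule A M))] : Module.Finite A M := by
  obtain ⟨r, s, hs⟩ := Module.Finite.exists_fin (R := A) (M := M ⧸ (I • ⊤ : Submodule A M))
  choose g hg using fun i => Submodule.mkQ_surjective (I • ⊤ : Submodule A M) (s i)
  have := isPrecomplete_pi I r
  refine Module.Finite.of_surjective (Fintype.linearCombination A g)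
    (surjective_of_mkQ_comp_surjective (I := I) fun q => ?_)
  have hq : q ∈ Submodule.span A (Set.range s) := hs ▸ Submodule.mem_top
  obtain ⟨v, rfl⟩ := (Submodule.mem_span_range_iff_exists_fun A).1 hq
  exact ⟨v, by simp only [LinearMap.comp_apply, Fintype.linearCombination_apply, map_sum,
    map_smul, hg]⟩

variable {ι R C : Type*} [Finite ι] [CommRing R] [CommRing C] {J : Ideal C} [IsAdicComplete J C]

theorem exists_ringHom_mvPowerSeries {F : MvPolynomial ι R →+* C} (hF : ∀ i, F (X i) ∈ J) :
    ∃ ψ : MvPowerSeries ι R →+* C, (∀ p : MvPolynomial ι R, ψ p = F p) ∧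
      ∀ n a, ψ a - F (MvPowerSeries.truncTotal n a) ∈ J ^ n := by
  have hpow {n : ℕ} {p : MvPolynomial ι R} (hp : p ∈ idealOfVars ι R ^ n) : F p ∈ J ^ n := by
    refine Ideal.pow_right_mono (I := (idealOfVars ι R).map F) ?_ n
      (Ideal.map_pow F _ n ▸ Ideal.mem_map_of_mem F hp)
    rw [idealOfVars, Ideal.map_span, Ideal.span_le]
    rintro _ ⟨_, ⟨i, rfl⟩, rfl⟩
    exact hF i
  let f (n : ℕ) : MvPowerSeries ι R →+* C ⧸ J ^ n :=
    (Ideal.Quotient.lift (idealOfVars ι R ^ n) ((Ideal.Quotient.mk (J ^ n)).comp F) fun _ hp =>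
      Ideal.Quotient.eq_zero_iff_mem.2 (hpow hp)).comp
      (MvPowerSeries.truncTotalAlgHom ι R n).toRingHom
  have hf (n : ℕ) (a) : f n a = Ideal.Quotient.mk (J ^ n) (F (MvPowerSeries.truncTotal n a)) := rfl
  have hcompat {k n : ℕ} (hkn : k ≤ n) : (Ideal.Quotient.factorPow J hkn).comp (f n) = f k := by
    ext a
    rw [RingHom.comp_apply, hf, hf]
    refine Ideal.Quotient.eq.2 ?_
    rw [← map_sub]
    exact hpow (MvPowerSeries.truncTotal_sub_truncTotal_mem_pow_idealOfVars hkn le_rfl a)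
  have htrunc (n : ℕ) (a) : IsAdicComplete.liftRingHom J f hcompat a -
      F (MvPowerSeries.truncTotal n a) ∈ J ^ n := by
    rw [← Ideal.Quotient.eq, IsAdicComplete.mk_liftRingHom, hf]
  refine ⟨IsAdicComplete.liftRingHom J f hcompat, fun p => sub_eq_zero.1 ?_, htrunc⟩
  refine IsHausdorff.haus (I := J) inferInstance _ fun n => ?_
  rw [SModEq.zero, smul_eq_mul, Ideal.mul_top,
    ← sub_add_sub_cancel _ (F (MvPowerSeries.truncTotal n p)), ← map_sub]
  refine Ideal.add_mem _ (htrunc n p) (hpow ?_)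
  rw [mem_pow_idealOfVars_iff']
  intro m hm
  rw [coeff_sub, MvPowerSeries.coeff_truncTotal _ hm, coeff_coe, sub_self]

end CompleteRings

section OrderTruncation

variable {ι R : Type*} [Finite ι] [CommRing R] {a : MvPowerSeries ι R} {n : ℕ}

lemma isHomogeneous_truncTotal_of_order_eq (ha : a.order = n) :
    (MvPowerSeries.truncTotal (n + 1) a).IsHomogeneous n := by
  intro d hd
  change Finsupp.weight (fun _ => 1) d = n
  rw [← Finsupp.degree_eq_weight_one]
  have hdn : d.degree < n + 1 := not_le.1 fun h => hd (MvPowerSeries.coeff_truncTotal_eq_zero _ h)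
  rw [MvPowerSeries.coeff_truncTotal _ hdn] at hd
  have hle := MvPowerSeries.order_le hd
  rw [ha, Nat.cast_le] at hle
  exact le_antisymm (Nat.lt_succ_iff.1 hdn) hle

lemma truncTotal_ne_zero_of_order_eq (ha : a.order = n) :
    MvPowerSeries.truncTotal (n + 1) a ≠ 0 := by
  obtain ⟨⟨d, hd, hdn⟩, -⟩ := MvPowerSeries.order_eq_nat.1 ha
  refine fun h => hd ?_
  rw [← MvPowerSeries.coeff_truncTotal a (n := n + 1) (by omega), h, coeff_zero]

end OrderTruncation

section HeightCriterion

lemma map_eval₂_pair {R S T : Type*} [CommSemiring R] [CommSemiring S] [CommSemiring T]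
    (s : R →+* S) (f : S →+* T) (a b : S) (h : BinaryPoly R) :
    f (eval₂ s ![a, b] h) = eval₂ (f.comp s) ![f a, f b] h := by
  rw [eval₂_comp_left]
  congr 1
  ext i
  fin_cases i <;> rfl

lemma eval₂_mul_cons_of_isHomogeneous {κ R : Type*} [CommRing κ] [CommRing R] (s : κ →+* R)
    (l c : R) {h : BinaryPoly κ} {n : ℕ} (hh : h.IsHomogeneous n) :
    eval₂ s ![l * c, c] h = eval₂ s ![l, 1] h * c ^ n := by
  rw [eval₂_eq', eval₂_eq', Finset.sum_mul]
  refine Finset.sum_congr rfl fun d hd => ?_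
  have hdn : d 0 + d 1 = n := by
    rw [← Fin.sum_univ_two, ← Finsupp.degree_eq_sum, Finsupp.degree_eq_weight_one]
    exact hh (mem_support_iff.1 hd)
  simp only [Fin.prod_univ_two, Matrix.cons_val_zero, Matrix.cons_val_one, one_pow, mul_one]
  rw [← hdn]
  ring

lemma pow_eq_zero_of_eval₂_mul_cons_eq_zero {κ R : Type*} [Field κ] [CommRing R] (τ : κ →+* R)
    {l : κ} {h : BinaryPoly κ} {n : ℕ} (hh : h.IsHomogeneous n) (hl : eval ![l, 1] h ≠ 0) {c : R}
    (hc : eval₂ τ ![τ l * c, c] h = 0) : c ^ n = 0 := by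
  have heval : τ (eval ![l, 1] h) = eval₂ τ ![τ l, 1] h := by
    rw [← eval₂_id, map_eval₂_pair, RingHom.comp_id, map_one]
  rwa [eval₂_mul_cons_of_isHomogeneous _ _ _ hh, ← heval,
    ((IsUnit.mk0 _ hl).map τ).mul_right_eq_zero] at hc

lemma exists_eval_cons_one_ne_zero (K : Type*) {κ : Type*} [Field K] [Infinite K] [Field κ]
    [Algebra K κ] {h : BinaryPoly κ} {n : ℕ} (hh : h.IsHomogeneous n) (h0 : h ≠ 0) :
    ∃ l : K, eval ![algebraMap K κ l, 1] h ≠ 0 := by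
  by_contra! hvanish
  have hX : X 1 * h = 0 := by
    refine MvPolynomial.funext_set (fun _ => Set.range (algebraMap K κ))
      (fun _ => Set.infinite_range_of_injective (algebraMap K κ).injective) fun v hv => ?_
    obtain ⟨a, ha⟩ := hv 0 (Set.mem_univ _)
    obtain ⟨b, hb⟩ := hv 1 (Set.mem_univ _)
    rw [map_mul, eval_X, map_zero]
    by_cases hv1 : v 1 = 0
    · rw [hv1, zero_mul]
    · have hv : v = ![algebraMap K κ (a / b) * v 1, v 1] := by
        ext i
        fin_cases i
        · simp [ha, hb, hv1]
        · simp
      rw [hv, ← eval₂_id, eval₂_mul_cons_of_isHomogeneous _ _ _ hh, eval₂_id, hvanish, zero_mul,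
        mul_zero]
  exact h0 ((mul_eq_zero.1 hX).resolve_left (X_ne_zero 1))

lemma sup_pow_le_sup_pow {B : Type*} [CommRing B] (P Q : Ideal B) (n : ℕ) :
    (P ⊔ Q) ^ n ≤ P ⊔ Q ^ n := by
  rw [← Ideal.comap_map_quotientMk P (Q ^ n), ← Ideal.map_le_iff_le_comap, Ideal.map_pow,
    Ideal.map_pow, Ideal.map_sup, Ideal.map_quotient_self, bot_sup_eq]

theorem height_maximalIdeal_le_one_of_pow_mem {B : Type*} [CommRing B] [IsLocalRing B]
    [IsNoetherianRing B] {x y : B}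
    (hrad : (Ideal.span {x, y}).radical = IsLocalRing.maximalIdeal B) (c : B) {n : ℕ}
    (hy : y ^ n ∈ Ideal.span {x - c * y} ⊔ Ideal.span {x, y} ^ (n + 1)) :
    (IsLocalRing.maximalIdeal B).height ≤ 1 := by
  set I := Ideal.span {x, y}
  have hI : I = Ideal.span {x - c * y} ⊔ Ideal.span {y} := by
    rw [← Ideal.span_insert, Ideal.span_pair_sub_mul_right]
  have hIm : I ≤ IsLocalRing.maximalIdeal B := Ideal.le_radical.trans hrad.le
  have hpow : I ^ n ≤ Ideal.span {x - c * y} ⊔ I • I ^ n := by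
    calc I ^ n = (Ideal.span {x - c * y} ⊔ Ideal.span {y}) ^ n := by rw [← hI]
      _ ≤ Ideal.span {x - c * y} ⊔ Ideal.span {y ^ n} := by
          rw [← Ideal.span_singleton_pow]
          exact sup_pow_le_sup_pow _ _ n
      _ ≤ _ := by
          rw [smul_eq_mul, ← pow_succ']
          exact sup_le le_sup_left ((Ideal.span_singleton_le_iff_mem _).2 hy)
  have hpow' : I ^ n ≤ Ideal.span {x - c * y} :=
    Submodule.le_of_le_smul_of_le_jacobson_bot (IsNoetherian.noetherian _)
      (hIm.trans (IsLocalRing.maximalIdeal_le_jacobson _)) hpow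
  refine Ideal.height_le_one_of_isPrincipal_of_mem_minimalPrimes (Ideal.span {x - c * y}) _
    ⟨⟨inferInstance, (hI ▸ le_sup_left).trans hIm⟩, ?_⟩
  rintro p ⟨hp, hpx⟩ -
  rw [← hrad]
  exact hp.radical_le_iff.2 (hp.le_of_pow_le (hpow'.trans hpx))

theorem height_maximalIdeal_le_one_of_eval₂_eq_zero {K κ B : Type*} [Field K] [Infinite K]
    [Field κ] [Algebra K κ] [CommRing B] [IsLocalRing B] [IsNoetherianRing B] [Algebra K B]
    {x y : B} (hrad : (Ideal.span {x, y}).radical = IsLocalRing.maximalIdeal B) {n : ℕ}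
    (s : κ →ₐ[K] B ⧸ Ideal.span {x, y} ^ (n + 1)) {h : BinaryPoly κ} (hh : h.IsHomogeneous n)
    (h0 : h ≠ 0)
    (heval : eval₂ s.toRingHom ![Ideal.Quotient.mk _ x, Ideal.Quotient.mk _ y] h = 0) :
    (IsLocalRing.maximalIdeal B).height ≤ 1 := by
  obtain ⟨l, hl⟩ := exists_eval_cons_one_ne_zero K hh h0
  let c := algebraMap K B l
  refine height_maximalIdeal_le_one_of_pow_mem hrad c (n := n) ?_
  set 𝔮 := Ideal.span {x - c * y} ⊔ Ideal.span {x, y} ^ (n + 1)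
  let q : B ⧸ Ideal.span {x, y} ^ (n + 1) →+* B ⧸ 𝔮 := Ideal.Quotient.factor le_sup_right
  let τ : κ →+* B ⧸ 𝔮 := q.comp s.toRingHom
  have hx : Ideal.Quotient.mk 𝔮 x = τ (algebraMap K κ l) * Ideal.Quotient.mk 𝔮 y := by
    have hτ : τ (algebraMap K κ l) = Ideal.Quotient.mk 𝔮 c := congrArg q (s.commutes l)
    rw [hτ, ← map_mul]
    exact Ideal.Quotient.eq.2 (Ideal.mem_sup_left (Ideal.mem_span_singleton_self _))
  rw [← Ideal.Quotient.eq_zero_iff_mem, map_pow]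
  refine pow_eq_zero_of_eval₂_mul_cons_eq_zero τ hh hl ?_
  rw [← hx]
  have hq := congrArg q heval
  rw [map_eval₂_pair, map_zero, Ideal.Quotient.factor_mk, Ideal.Quotient.factor_mk] at hq
  exact hq

end HeightCriterion

section PowerSeriesSubring

theorem finite_of_isHausdorff_of_ker_le {A C T : Type*} [CommRing A] [CommRing C] [CommRing T]
    (ψ : A →+* C) (I : Ideal A) [IsPrecomplete I A] [IsHausdorff (I.map ψ) C] {π : C →+* T}
    (hπ : Function.Surjective π) (hker : RingHom.ker π ≤ I.map ψ) (hfin : (π.comp ψ).Finite) :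
    ψ.Finite := by
  algebraize [ψ, π, π.comp ψ]
  have : IsHausdorff I C := (IsHausdorff.map_algebraMap_iff (S := C)).1 ‹_›
  let φ : C →ₗ[A] T := (IsScalarTower.toAlgHom A C T).toLinearMap
  have hφ : LinearMap.ker φ ≤ I • ⊤ := fun c hc => by
    rw [Ideal.smul_top_eq_map]
    exact hker hc
  let e : T ≃ₗ[A] C ⧸ LinearMap.ker φ := (φ.quotKerEquivOfSurjective hπ).symm
  have : Module.Finite A (C ⧸ (I • ⊤ : Submodule A C)) :=
    Module.Finite.of_surjective ((Submodule.factor hφ) ∘ₗ e.toLinearMap)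
      ((Submodule.factor_surjective hφ).comp e.surjective)
  exact finite_of_finite_quotient I

lemma finite_of_surjective_comp_of_ker_le_nilradical {A S T : Type*} [CommRing A] [CommRing S]
    [IsNoetherianRing S] [CommRing T] {f : A →+* S} {g : S →+* T}
    (hgf : Function.Surjective (g.comp f)) (hker : RingHom.ker g ≤ nilradical S) : f.Finite := by
  algebraize [f, g, g.comp f]
  have : Module.Finite A T := Module.Finite.of_surjective (Algebra.linearMap A T) hgf
  exact Module.finite_of_surjective_of_ker_le_nilradical (IsScalarTower.toAlgHom A S T)
    (hgf.of_comp (g := f)) hker (IsNoetherian.noetherian _)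

theorem not_isForcingSolution_of_injective_of_finite {κ C : Type*} [Field κ] [CharP κ 2]
    [CommRing C] {ψ : MvPowerSeries (Fin 2) κ →+* C} (hinj : Function.Injective ψ)
    (hfin : ψ.Finite) {t : κ} (ht : ∀ n, 2 ≤ n → critOrbit t n ≠ 0) {z u v w : C} :
    ¬ IsForcingSolution (ψ (MvPowerSeries.C t)) (ψ (MvPowerSeries.X 0)) (ψ (MvPowerSeries.X 1))
      z u v w := by
  intro h
  algebraize [ψ]
  obtain ⟨𝔭, -, _, h𝔭⟩ := Ideal.exists_ideal_over_prime_of_isIntegral (S := C)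
    (⊥ : Ideal (MvPowerSeries (Fin 2) κ)) ⊥ ((RingHom.ker_eq_bot_iff_eq_zero ψ).2
      fun a ha => (map_eq_zero_iff ψ hinj).1 ha).le
  have : FaithfulSMul (MvPowerSeries (Fin 2) κ) (C ⧸ 𝔭) := by
    rw [faithfulSMul_iff_algebraMap_injective, injective_iff_map_eq_zero]
    intro a ha
    have hmem : algebraMap _ C a ∈ 𝔭 := Ideal.Quotient.eq_zero_iff_mem.1 ha
    rwa [← Ideal.mem_comap, h𝔭] at hmem
  exact not_isForcingSolution_of_finite ht (h.map (Ideal.Quotient.mk 𝔭))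

end PowerSeriesSubring

section AdicCompletion

variable {K B : Type*} [CommRing K] [CommRing B] [Algebra K B]

lemma exists_lift_adicCompletion {A : Type*} [CommRing A] [Algebra K A]
    [Algebra.FormallySmooth K A] {I J : Ideal B} (hIJ : I ≤ J)
    (hnil : IsNilpotent (RingHom.ker (Ideal.Quotient.factor hIJ))) (f : A →ₐ[K] B ⧸ J) :
    ∃ σ : A →ₐ[K] AdicCompletion I B, ∀ a,
      Ideal.Quotient.factor hIJ (AdicCompletion.evalOneₐ I (σ a)) = f a := by
  let g : B ⧸ I →ₐ[K] B ⧸ J := Ideal.Quotient.factorₐ K hIJ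
  have hg : Function.Surjective g := Ideal.Quotient.factor_surjective hIJ
  obtain ⟨σ, hσ⟩ := Algebra.FormallySmooth.exists_adicCompletionEvalOneₐ_comp_eq
    (Algebra.FormallySmooth.liftOfSurjective f g hg hnil)
  refine ⟨σ, fun a => ?_⟩
  rw [← Algebra.FormallySmooth.liftOfSurjective_apply f g hg hnil a, ← hσ]
  rfl

lemma evalₐ_eq_zero_of_mem_map_pow {I : Ideal B} {n : ℕ} {c : AdicCompletion I B}
    (hc : c ∈ I.map (algebraMap B (AdicCompletion I B)) ^ n) : AdicCompletion.evalₐ I n c = 0 := by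
  have hle : (I ^ n).map (algebraMap B (AdicCompletion I B)) ≤
      RingHom.ker (AdicCompletion.evalₐ I n) := by
    refine Ideal.map_le_iff_le_comap.2 fun b hb => ?_
    rw [Ideal.mem_comap, RingHom.mem_ker, AlgHom.commutes]
    exact Ideal.Quotient.eq_zero_iff_mem.2 hb
  rw [← Ideal.map_pow] at hc
  exact hle hc

lemma isNilpotent_ker_factor [IsNoetherianRing B] {I J : Ideal B} (hIJ : I ≤ J)
    (hrad : J ≤ I.radical) : IsNilpotent (RingHom.ker (Ideal.Quotient.factor hIJ)) := by
  refine (Ideal.FG.isNilpotent_iff_le_nilradical (IsNoetherian.noetherian _)).2 ?_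
  rw [Ideal.Quotient.factor_ker, Ideal.map_le_iff_le_comap]
  rwa [nilradical, Ideal.comap_radical, Ideal.zero_eq_bot, ← RingHom.ker_eq_comap_bot,
    Ideal.mk_ker]

theorem finite_of_map_span_X_eq [IsNoetherianRing B] {ι κ : Type*} [Finite ι] [Field κ]
    {I J : Ideal B} (hIJ : I ≤ J) (hnil : IsNilpotent (RingHom.ker (Ideal.Quotient.factor hIJ)))
    {ψ : MvPowerSeries ι κ →+* AdicCompletion I B}
    (hψ : (Ideal.span (Set.range MvPowerSeries.X)).map ψ = I.map (algebraMap B _))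
    (hsurj : Function.Surjective fun a =>
      Ideal.Quotient.factor hIJ (AdicCompletion.evalOneₐ I (ψ a))) : ψ.Finite := by
  have : IsAdicComplete ((Ideal.span (Set.range MvPowerSeries.X)).map ψ) (AdicCompletion I B) :=
    hψ ▸ AdicCompletion.isAdicComplete_self I (IsNoetherian.noetherian I)
  refine finite_of_isHausdorff_of_ker_le ψ (Ideal.span (Set.range MvPowerSeries.X))
    (π := (AdicCompletion.evalOneₐ I).toRingHom) (AdicCompletion.evalOneₐ_surjective I) ?_ ?_
  · rw [hψ, AdicCompletion.ker_evalOneₐ_eq_map I (IsNoetherian.noetherian I)]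
  · exact finite_of_surjective_comp_of_ker_le_nilradical (g := Ideal.Quotient.factor hIJ) hsurj
      ((Ideal.FG.isNilpotent_iff_le_nilradical (IsNoetherian.noetherian _)).1 hnil)

theorem exists_mvPowerSeries_extension {κ B : Type*} [CommRing κ] [CommRing B]
    [IsNoetherianRing B] (x y : B) (σ : κ →+* AdicCompletion (Ideal.span {x, y}) B) :
    ∃ ψ : MvPowerSeries (Fin 2) κ →+* AdicCompletion (Ideal.span {x, y}) B,
      (∀ c, ψ (MvPowerSeries.C c) = σ c) ∧ ψ (MvPowerSeries.X 0) = algebraMap B _ x ∧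
      ψ (MvPowerSeries.X 1) = algebraMap B _ y ∧
      ∀ n a, ψ a - eval₂ σ ![algebraMap B _ x, algebraMap B _ y] (MvPowerSeries.truncTotal n a) ∈
        (Ideal.span {x, y}).map (algebraMap B _) ^ n := by
  let I := Ideal.span {x, y}
  have : IsAdicComplete (I.map (algebraMap B (AdicCompletion I B))) (AdicCompletion I B) :=
    AdicCompletion.isAdicComplete_self I (IsNoetherian.noetherian I)
  let F : BinaryPoly κ →+* AdicCompletion I B := eval₂Hom σ ![algebraMap B _ x, algebraMap B _ y]
  have hx : F (X 0) = algebraMap B _ x := eval₂_X ..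
  have hy : F (X 1) = algebraMap B _ y := eval₂_X ..
  have hmem (i : Fin 2) : F (X i) ∈ I.map (algebraMap B (AdicCompletion I B)) := by
    fin_cases i
    · exact hx ▸ Ideal.mem_map_of_mem _ (Ideal.subset_span (Set.mem_insert _ _))
    · exact hy ▸ Ideal.mem_map_of_mem _ (Ideal.subset_span (Set.mem_insert_of_mem _ rfl))
  obtain ⟨ψ, hψF, hψ⟩ := exists_ringHom_mvPowerSeries hmem
  refine ⟨ψ, fun c => ?_, ?_, ?_, hψ⟩
  · rw [← coe_C, hψF]
    exact eval₂_C ..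
  · rw [← coe_X, hψF, hx]
  · rw [← coe_X, hψF, hy]

end AdicCompletion

section LocalTheorem

variable {K B : Type*} [Field K] [CommRing B] [IsLocalRing B] [IsNoetherianRing B] [Algebra K B]
  {x y : B}

theorem injective_of_sub_truncTotal_mem {κ : Type*} [Field κ] [Algebra K κ] [Infinite K]
    (hrad : (Ideal.span {x, y}).radical = IsLocalRing.maximalIdeal B)
    (hht : ¬ (IsLocalRing.maximalIdeal B).height ≤ 1)
    (σ : κ →ₐ[K] AdicCompletion (Ideal.span {x, y}) B)
    (ψ : MvPowerSeries (Fin 2) κ →+* AdicCompletion (Ideal.span {x, y}) B)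
    (hψ : ∀ n a, ψ a - eval₂ σ.toRingHom ![algebraMap B _ x, algebraMap B _ y]
      (MvPowerSeries.truncTotal n a) ∈ (Ideal.span {x, y}).map (algebraMap B _) ^ n) :
    Function.Injective ψ := by
  refine (injective_iff_map_eq_zero ψ).2 fun a ha => by_contra fun ha0 => hht ?_
  obtain ⟨n, hn⟩ := ENat.ne_top_iff_exists.1 (MvPowerSeries.order_eq_top_iff.not.2 ha0)
  let ε := AdicCompletion.evalₐ (Ideal.span {x, y}) (n + 1)
  refine height_maximalIdeal_le_one_of_eval₂_eq_zero hrad ((ε.restrictScalars K).comp σ)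
    (isHomogeneous_truncTotal_of_order_eq hn.symm) (truncTotal_ne_zero_of_order_eq hn.symm) ?_
  have hε := evalₐ_eq_zero_of_mem_map_pow (hψ (n + 1) a)
  rw [ha, zero_sub, map_neg, neg_eq_zero] at hε
  have hpair := map_eval₂_pair σ.toRingHom ε.toRingHom (algebraMap B _ x) (algebraMap B _ y)
    (MvPowerSeries.truncTotal (n + 1) a)
  rw [AlgHom.toRingHom_eq_coe, RingHom.coe_coe, AlgHom.commutes, AlgHom.commutes] at hpair
  exact hpair.symm.trans hε

theorem height_maximalIdeal_le_one_of_isForcingSolution [Infinite K] [CharP K 2] [PerfectRing K 2]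
    (hrad : (Ideal.span {x, y}).radical = IsLocalRing.maximalIdeal B) {t : K}
    (ht : ∀ n, 2 ≤ n → critOrbit t n ≠ 0) {z u v w : B}
    (h : IsForcingSolution (algebraMap K B t) x y z u v w) :
    (IsLocalRing.maximalIdeal B).height ≤ 1 := by
  by_contra hht
  let κ := IsLocalRing.ResidueField B
  have hI := Ideal.le_radical.trans hrad.le
  have hnil := isNilpotent_ker_factor hI hrad.ge
  have : CharP κ 2 := charP_of_injective_algebraMap (algebraMap K κ).injective 2
  have : Algebra.FormallySmooth K κ := formallySmooth_of_perfectRing 2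
  obtain ⟨σ, hσ⟩ := exists_lift_adicCompletion hI hnil (AlgHom.id K κ)
  obtain ⟨ψ, hψC, hψX, hψY, hψ⟩ := exists_mvPowerSeries_extension x y σ.toRingHom
  have hspan : (Ideal.span (Set.range MvPowerSeries.X)).map ψ =
      (Ideal.span {x, y}).map (algebraMap B _) := by
    rw [Ideal.map_span, Ideal.map_span, Set.image_pair, ← hψX, ← hψY, ← Set.image_pair]
    congr 2
    ext a
    simp [eq_comm]
  have hfin : ψ.Finite := finite_of_map_span_X_eq hI hnil hspan fun c =>
    ⟨MvPowerSeries.C c, (congrArg _ (congrArg _ (hψC c))).trans (hσ c)⟩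
  refine not_isForcingSolution_of_injective_of_finite
    (injective_of_sub_truncTotal_mem hrad hht σ ψ hψ) hfin (t := algebraMap K κ t)
    (z := algebraMap B _ z) (u := algebraMap B _ u) (v := algebraMap B _ v)
    (w := algebraMap B _ w) (fun n hn => ?_) ?_
  · rw [← map_critOrbit]
    exact (map_ne_zero _).2 (ht n hn)
  · rw [hψC, hψX, hψY, AlgHom.toRingHom_eq_coe, RingHom.coe_coe, σ.commutes]
    exact h.map (algebraMap B _)

end LocalTheorem

section TranscendentalParameter

lemma derivative_critOrbit_X {k : Type*} [CommRing k] [CharP k 2] (n : ℕ) :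
    Polynomial.derivative (critOrbit (Polynomial.X : Polynomial k) (n + 1)) = 1 := by
  simp [critOrbit_succ, Polynomial.derivative_pow, CharTwo.two_eq_zero]

lemma critOrbit_ne_zero_of_transcendental {k A : Type*} [CommRing k] [Nontrivial k] [CharP k 2]
    [CommRing A] [Algebra k A] {t : A} (ht : Transcendental k t) {n : ℕ} (hn : n ≠ 0) :
    critOrbit t n ≠ 0 := by
  obtain ⟨n, rfl⟩ := Nat.exists_eq_succ_of_ne_zero hn
  have haeval := map_critOrbit (Polynomial.aeval (R := k) t).toRingHom Polynomial.X (n + 1)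
  intro h
  rw [AlgHom.toRingHom_eq_coe, RingHom.coe_coe, Polynomial.aeval_X, h] at haeval
  have hderiv := derivative_critOrbit_X (k := k) n
  rw [transcendental_iff.1 ht _ haeval, Polynomial.derivative_zero] at hderiv
  exact zero_ne_one hderiv

end TranscendentalParameter

section GlobalTheorem

lemma idealHeight_le_of_mem_minimalPrimes {S : Type*} [CommRing S] {J P : Ideal S}
    (hP : P ∈ J.minimalPrimes) : idealHeight S J ≤ P.height :=
  (iInf₂_le (⟨P, hP.1.1⟩ : PrimeSpectrum S) hP.1.2).trans_eq
    (PrimeSpectrum.height_eq_orderHeight _).symm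

theorem idealHeight_span_pair_le_one_of_isForcingSolution {K S : Type*} [Field K] [Infinite K]
    [CharP K 2] [PerfectRing K 2] {t : K} (ht : ∀ n, 2 ≤ n → critOrbit t n ≠ 0) [CommRing S]
    [IsNoetherianRing S] [Algebra K S] {x y z u v w : S}
    (h : IsForcingSolution (algebraMap K S t) x y z u v w) (hxy : Ideal.span {x, y} ≠ ⊤) :
    idealHeight S (Ideal.span {x, y}) ≤ 1 := by
  obtain ⟨P, hP⟩ := Ideal.nonempty_minimalPrimes hxy
  have : P.IsPrime := hP.1.1
  let B := Localization.AtPrime P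
  have : IsNoetherianRing B := IsLocalization.isNoetherianRing P.primeCompl B inferInstance
  have hrad := IsLocalization.AtPrime.radical_map_of_mem_minimalPrimes B P _ hP
  rw [Localization.AtPrime.map_eq_maximalIdeal, Ideal.map_span, Set.image_pair] at hrad
  have hsol := h.map (algebraMap S B)
  rw [← IsScalarTower.algebraMap_apply] at hsol
  calc
    idealHeight S (Ideal.span {x, y}) ≤ P.height := idealHeight_le_of_mem_minimalPrimes hP
    _ = (IsLocalRing.maximalIdeal B).height := by
      rw [← IsLocalization.height_under P.primeCompl (IsLocalRing.maximalIdeal B),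
        Localization.AtPrime.under_maximalIdeal]
    _ ≤ 1 := height_maximalIdeal_le_one_of_isForcingSolution hrad ht hsol

end GlobalTheorem

end BrennerMonsky

open BrennerMonsky in
theorem brennerMonsky_QSequence_superheight_one_general {K : Type u} [Field K] [PerfectField K]
    [Algebra (ZMod 2) K] {t : K} (ht : Transcendental (ZMod 2) t) :
    let xR : ForcingRing t := Ideal.Quotient.mk (forcingIdeal t) (X 0)
    let yR : ForcingRing t := Ideal.Quotient.mk (forcingIdeal t) (X 1)
    IsQSequence ![xR, yR] ∧
    ∀ (S : Type*) [CommRing S] [IsNoetherianRing S] [Algebra (ForcingRing t) S],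
      Ideal.span {algebraMap (ForcingRing t) S xR, algebraMap (ForcingRing t) S yR} ≠ ⊤ →
      idealHeight S
        (Ideal.span {algebraMap (ForcingRing t) S xR, algebraMap (ForcingRing t) S yR}) ≤ 1 := by
  have : CharP K 2 := charP_of_injective_algebraMap (algebraMap (ZMod 2) K).injective 2
  have : PerfectRing K 2 := PerfectField.toPerfectRing 2
  have : Infinite K := not_finite_iff_infinite.1 fun _ => ht (.of_finite (ZMod 2) t)
  have hcrit (n : ℕ) (hn : 2 ≤ n) : critOrbit t n ≠ 0 :=
    critOrbit_ne_zero_of_transcendental ht (by lia)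
  refine ⟨isQSequence_forcingRing hcrit, fun S _ _ _ hS => ?_⟩
  let : Algebra K S := Algebra.compHom S (algebraMap K (ForcingRing t))
  exact idealHeight_span_pair_le_one_of_isForcingSolution hcrit
    ((isForcingSolution_mk t).map (algebraMap (ForcingRing t) S)) hS

/-- **Brenner–Monsky example.** Let `K` be an algebraic closure of
`𝔽₂(t)` and `R = K[x,y,z,u,v,w]/(z⁴+xyz²+x³z+y³z+tx²y², x³y³−ux⁴−vy⁴−wz⁴)`.
Then `x, y` is a Q-sequence in `R`, but the superheight of `(x,y)R` is `1`: in every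
Noetherian `R`-algebra `S` in which `(x,y)S` is proper, the height of `(x,y)S` is
at most `1`. -/
theorem brennerMonsky_QSequence_superheight_one
    (K : Type u) [Field K] [Algebra (RatFunc (ZMod 2)) K]
    [IsAlgClosure (RatFunc (ZMod 2)) K] :
    let t : MvPolynomial (Fin 6) K := C (algebraMap (RatFunc (ZMod 2)) K RatFunc.X)
    let x : MvPolynomial (Fin 6) K := X 0
    let y : MvPolynomial (Fin 6) K := X 1
    let z : MvPolynomial (Fin 6) K := X 2
    let u : MvPolynomial (Fin 6) K := X 3
    let v : MvPolynomial (Fin 6) K := X 4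
    let w : MvPolynomial (Fin 6) K := X 5
    let J : Ideal (MvPolynomial (Fin 6) K) := Ideal.span
      {z ^ 4 + x * y * z ^ 2 + x ^ 3 * z + y ^ 3 * z + t * x ^ 2 * y ^ 2,
        x ^ 3 * y ^ 3 - u * x ^ 4 - v * y ^ 4 - w * z ^ 4}
    let R := MvPolynomial (Fin 6) K ⧸ J
    let xR : R := Ideal.Quotient.mk J x
    let yR : R := Ideal.Quotient.mk J y
    IsQSequence ![xR, yR] ∧
    ∀ (S : Type u) [CommRing S] [IsNoetherianRing S] [Algebra R S],
      Ideal.span {algebraMap R S xR, algebraMap R S yR} ≠ ⊤ →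
      idealHeight S (Ideal.span {algebraMap R S xR, algebraMap R S yR}) ≤ 1 := by
  let : Algebra (ZMod 2) K := Algebra.compHom K (algebraMap (ZMod 2) (RatFunc (ZMod 2)))
  have : IsScalarTower (ZMod 2) (RatFunc (ZMod 2)) K := .of_algebraMap_eq fun _ => rfl
  have : IsAlgClosed K := IsAlgClosure.isAlgClosed (RatFunc (ZMod 2))
  exact brennerMonsky_QSequence_superheight_one_general <|
    (transcendental_algebraMap_iff (algebraMap (RatFunc (ZMod 2)) K).injective).2
      RatFunc.transcendental_X
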